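/- arXiv:2205.06625 — 5 statements merged into one kernel-verified Lean document; each statement's English description precedes it below -/
import Mathlib

section
/- For each n ≥ 1 consider the probability measure on rooted labeled trees on n vertices with all out-degrees at most 2, in which a tree T is chosen with probability proportional to Ω(T) = 2^{b(T)}, where b(T) is the number of vertices of T with out-degree 2. Let g_n = (∑ Ω(T₁)·Ω(T₂), summed over ordered pairs (T₁, T₂) of isomorphic such trees) / (∑_T Ω(T))² be the probability that two independent samples are isomorphic. Then there exist constants C > 0 and δ ∈ (0,1) such that g_n / (n^{3/2} · δ^n) → C as n → ∞ (numerically C ≈ 1.279101 and δ ≈ 0.412681). -/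
open scoped Classical BigOperators

/-- A rooted labeled tree on `n` vertices: a simple graph on `Fin n` that is a
tree, together with a distinguished root vertex. -/
structure RTree (n : ℕ) where
  graph : SimpleGraph (Fin n)
  isTree : graph.IsTree
  root : Fin n

namespace RTree

/-- Two rooted labeled trees are isomorphic if there is a graph isomorphism
mapping root to root. -/
def Isom {n : ℕ} (T₁ T₂ : RTree n) : Prop :=
  ∃ φ : T₁.graph ≃g T₂.graph, φ T₁.root = T₂.root

/-- The out-degree (number of children) of a vertex: its degree if it is the
root and its degree minus one otherwise. -/
noncomputable def outdeg {n : ℕ} (T : RTree n) (v : Fin n) : ℕ :=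
  if v = T.root then (T.graph.neighborSet v).ncard
  else (T.graph.neighborSet v).ncard - 1

/-- The number of root-fixing graph automorphisms. -/
noncomputable def autCard {n : ℕ} (T : RTree n) : ℕ :=
  Nat.card {φ : T.graph ≃g T.graph // φ T.root = T.root}

instance finite {n : ℕ} : Finite (RTree n) := by
  have h : Function.Injective (fun T : RTree n => (T.graph, T.root)) := by
    rintro ⟨g₁, h₁, r₁⟩ ⟨g₂, h₂, r₂⟩ h
    simp_all
  exact Finite.of_injective _ h

noncomputable instance fintype {n : ℕ} : Fintype (RTree n) := Fintype.ofFinite _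

end RTree

/-- Rooted labeled trees on `n` vertices with all out-degrees at most `2`
(unary-binary trees). -/
def UBTree (n : ℕ) : Type :=
  {T : RTree n // ∀ v, T.outdeg v ≤ 2}

instance (n : ℕ) : Finite (UBTree n) := by
  unfold UBTree; infer_instance

noncomputable instance (n : ℕ) : Fintype (UBTree n) := Fintype.ofFinite _

/-- The weight `2^{b(T)}` of a unary-binary tree, where `b(T)` is the number
of vertices of out-degree `2`; this equals `∏ v, outdeg(v)!`, so the induced
measure corresponds to uniformly random plane unary-binary trees. -/
noncomputable def ubWeight {n : ℕ} (T : UBTree n) : ℝ :=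
  2 ^ (Finset.univ.filter fun v => T.1.outdeg v = 2).card

/-- The probability that two independent samples from the measure proportional
to `ubWeight` (i.e. two uniformly random plane unary-binary trees of size `n`)
are isomorphic. -/
noncomputable def probIsomUB (n : ℕ) : ℝ :=
  (∑ p : UBTree n × UBTree n,
      if p.1.1.Isom p.2.1 then ubWeight p.1 * ubWeight p.2 else 0) /
    (∑ T : UBTree n, ubWeight T) ^ 2

/-!
A rooted labelled tree of weight `Ω` is carried by `Ω` plane trees with labelled vertices, and every
plane tree of size `n` has `n!` labellings. Hence `g_n = F_n / M_n²`, where `M_n` counts the plane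
unary-binary trees of size `n` and `F_n` counts their isomorphic pairs, that is, sums the sizes of
the isomorphism classes over all plane trees.

The generating functions satisfy `M = z (1 + M + M²)` and `F = z (1 + F + 2 F² - G(z²))`, where `G`
sums the cubes of the class sizes: the class of a binary tree with subtrees in classes of sizes `k`
and `l` has size `2 k l`, unless the subtrees are isomorphic, when it has size `k²`. Class sizes
satisfy `2 k² ≤ 2^n`, so `G(z²)` is holomorphic beyond the radius of convergence `ρ` of `F`. The
discriminant of the quadratic equation for `F` therefore is too, and in the closed disc of radius
`ρ` its only zero is a simple one at `ρ`, so `F_n ~ c n^(-3/2) ρ^(-n)`. The same argument gives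
`M_n ~ c' n^(-3/2) 3^n`, whence `g_n ~ C n^(3/2) (1 / (9 ρ))^n`.
-/

/-- Plane unary-binary trees whose vertices carry labels in `V`. Trees without labels are
represented by `PlaneTree Unit`. -/
inductive PlaneTree (V : Type*) : Type _
  | leaf (v : V) : PlaneTree V
  | unary (v : V) (a : PlaneTree V) : PlaneTree V
  | binary (v : V) (a b : PlaneTree V) : PlaneTree V

namespace PlaneTree

open Finset

variable {V W : Type*}

/-- The label of the root. -/
def root : PlaneTree V → V
  | leaf v => v
  | unary v _ => v
  | binary v _ _ => v

/-- The subtrees hanging from the root, from left to right. -/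
def children : PlaneTree V → List (PlaneTree V)
  | leaf _ => []
  | unary _ a => [a]
  | binary _ a b => [a, b]

/-- The labels of all vertices, in preorder. -/
def labels : PlaneTree V → List V
  | leaf v => [v]
  | unary v a => v :: a.labels
  | binary v a b => v :: (a.labels ++ b.labels)

/-- The number of vertices. -/
def size (t : PlaneTree V) : ℕ := t.labels.length

/-- The number of vertices with two children. -/
def numBinary : PlaneTree V → ℕ
  | leaf _ => 0
  | unary _ a => a.numBinary
  | binary _ a b => a.numBinary + b.numBinary + 1

/-- Relabelling of the vertices along a function. -/
def map (f : V → W) : PlaneTree V → PlaneTree W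
  | leaf v => leaf (f v)
  | unary v a => unary (f v) (a.map f)
  | binary v a b => binary (f v) (a.map f) (b.map f)

/-- The underlying plane tree without labels. -/
def shape (t : PlaneTree V) : PlaneTree Unit := t.map fun _ => ()

@[simp] theorem size_leaf (v : V) : (leaf v).size = 1 := rfl

@[simp] theorem size_unary (v : V) (a : PlaneTree V) : (unary v a).size = a.size + 1 := rfl

@[simp] theorem size_binary (v : V) (a b : PlaneTree V) :
    (binary v a b).size = a.size + b.size + 1 := by
  simp [size, labels]

theorem size_pos (t : PlaneTree V) : 0 < t.size := by cases t <;> simp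

theorem unary_injective (v : V) : Function.Injective (unary v) := fun _ _ h => by simpa using h

theorem binary_injective2 (v : V) : Function.Injective2 (binary v) := fun _ _ _ _ h => by
  simpa using h

@[simp] theorem root_map (f : V → W) (t : PlaneTree V) : (t.map f).root = f t.root := by
  cases t <;> rfl

@[simp] theorem children_map (f : V → W) (t : PlaneTree V) :
    (t.map f).children = t.children.map (map f) := by
  cases t <;> rfl

@[simp] theorem labels_map (f : V → W) (t : PlaneTree V) : (t.map f).labels = t.labels.map f := by
  induction t <;> simp_all [map, labels]

@[simp] theorem size_map (f : V → W) (t : PlaneTree V) : (t.map f).size = t.size := by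
  simp [size]

@[simp] theorem size_shape (t : PlaneTree V) : t.shape.size = t.size := size_map _ t

@[simp] theorem shape_map (f : V → W) (t : PlaneTree V) : (t.map f).shape = t.shape := by
  unfold shape
  induction t <;> simp_all [map]

theorem ext_shape_labels {s t : PlaneTree V} (hshape : s.shape = t.shape)
    (hlabels : s.labels = t.labels) : s = t := by
  induction s generalizing t with
  | leaf v => cases t <;> simp_all [shape, map, labels]
  | unary v a ih =>
    cases t <;> simp only [shape, map, reduceCtorEq, unary.injEq, true_and] at hshape
    simp only [labels, List.cons.injEq] at hlabels
    rw [hlabels.1, ih hshape hlabels.2]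
  | binary v a b iha ihb =>
    cases t <;> simp only [shape, map, reduceCtorEq, binary.injEq, true_and] at hshape
    rename_i w c d
    simp only [labels, List.cons.injEq] at hlabels
    have hsize : a.labels.length = c.labels.length := by
      simpa [size, shape, map] using congrArg size hshape.1
    obtain ⟨hac, hbd⟩ := List.append_inj hlabels.2 hsize
    rw [hlabels.1, iha hshape.1 hac, ihb hshape.2 hbd]

theorem exists_shape_eq_labels_eq (t : PlaneTree W) (l : List V) (hl : l.length = t.size) :
    ∃ s : PlaneTree V, s.shape = t.shape ∧ s.labels = l := by
  induction t generalizing l with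
  | leaf =>
    obtain ⟨v, rfl⟩ := List.length_eq_one_iff.1 hl
    exact ⟨leaf v, rfl, rfl⟩
  | unary _ a ih =>
    obtain ⟨v, l, rfl⟩ := List.exists_cons_of_length_eq_add_one hl
    obtain ⟨s, hs, rfl⟩ := ih l (by simpa using hl)
    exact ⟨unary v s, congrArg (unary ()) hs, rfl⟩
  | binary _ a b iha ihb =>
    rw [size_binary] at hl
    obtain ⟨v, l, rfl⟩ := List.exists_cons_of_length_eq_add_one hl
    rw [List.length_cons, Nat.add_right_cancel_iff] at hl
    obtain ⟨s, hs, hsl⟩ := iha (l.take a.size) (by simp [hl])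
    obtain ⟨t, ht, htl⟩ := ihb (l.drop a.size) (by simp [hl])
    exact ⟨binary v s t, congrArg₂ (binary ()) hs ht, by simp [labels, hsl, htl]⟩

theorem finite_setOf_size_le [Finite V] (n : ℕ) : {t : PlaneTree V | t.size ≤ n}.Finite := by
  induction n with
  | zero => exact Set.finite_empty.subset fun t ht => (t.size_pos.not_ge ht).elim
  | succ n ih =>
    refine (((Set.finite_range leaf).union (Set.Finite.image2 unary Set.finite_univ ih)).union
      (Set.finite_univ.image2 (fun v p => binary v p.1 p.2) (ih.prod ih))).subset ?_
    rintro (v | ⟨v, a⟩ | ⟨v, a, b⟩) ht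
    · exact Or.inl (Or.inl ⟨v, rfl⟩)
    · exact Or.inl (Or.inr ⟨v, trivial, a, by simpa using ht, rfl⟩)
    · have ha : a.size ≤ n ∧ b.size ≤ n := by
        simp only [Set.mem_ofPred_eq, size_binary] at ht
        omega
      exact Or.inr ⟨v, trivial, (a, b), ha, rfl⟩

/-- The trees obtained by exchanging the two subtrees at some of the binary vertices. Its members
are the trees isomorphic to the given one as labelled rooted trees. -/
noncomputable def rearrangements : PlaneTree V → Finset (PlaneTree V)
  | leaf v => {leaf v}
  | unary v a => a.rearrangements.image (unary v)
  | binary v a b => image₂ (binary v) a.rearrangements b.rearrangements ∪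
      image₂ (binary v) b.rearrangements a.rearrangements

theorem self_mem_rearrangements (t : PlaneTree V) : t ∈ t.rearrangements := by
  induction t <;> simp_all [rearrangements]

theorem rearrangements_eq_of_mem {s t : PlaneTree V} (h : s ∈ t.rearrangements) :
    s.rearrangements = t.rearrangements := by
  induction t generalizing s with
  | leaf v =>
    rw [rearrangements, mem_singleton] at h
    rw [h]
  | unary v a ih =>
    obtain ⟨x, hx, rfl⟩ := mem_image.1 h
    simp only [rearrangements, ih hx]
  | binary v a b iha ihb =>
    rcases mem_union.1 h with h | h <;> obtain ⟨x, hx, y, hy, rfl⟩ := mem_image₂.1 h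
    · simp only [rearrangements, iha hx, ihb hy]
    · simp only [rearrangements, ihb hx, iha hy, union_comm]

theorem mem_rearrangements_iff {s t : PlaneTree V} :
    s ∈ t.rearrangements ↔ s.rearrangements = t.rearrangements :=
  ⟨rearrangements_eq_of_mem, fun h => h ▸ s.self_mem_rearrangements⟩

theorem labels_perm_of_mem_rearrangements {s t : PlaneTree V} (h : s ∈ t.rearrangements) :
    s.labels.Perm t.labels := by
  induction t generalizing s with
  | leaf v => rw [mem_singleton.1 h]
  | unary v a ih =>
    obtain ⟨x, hx, rfl⟩ := mem_image.1 h
    exact (ih hx).cons v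
  | binary v a b iha ihb =>
    rcases mem_union.1 h with h | h <;> obtain ⟨x, hx, y, hy, rfl⟩ := mem_image₂.1 h
    · exact ((iha hx).append (ihb hy)).cons v
    · exact (((ihb hx).append (iha hy)).trans List.perm_append_comm).cons v

theorem size_eq_of_mem_rearrangements {s t : PlaneTree V} (h : s ∈ t.rearrangements) :
    s.size = t.size :=
  (labels_perm_of_mem_rearrangements h).length_eq

theorem root_eq_of_mem_rearrangements {s t : PlaneTree V} (h : s ∈ t.rearrangements) :
    s.root = t.root := by
  cases t with
  | leaf v => rw [mem_singleton.1 h]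
  | unary v a =>
    obtain ⟨x, -, rfl⟩ := mem_image.1 h
    rfl
  | binary v a b =>
    rcases mem_union.1 h with h | h <;> obtain ⟨x, -, y, -, rfl⟩ := mem_image₂.1 h <;> rfl

theorem image_map_rearrangements (f : V → W) (t : PlaneTree V) :
    t.rearrangements.image (map f) = (t.map f).rearrangements := by
  induction t with
  | leaf v => simp [rearrangements, map]
  | unary v a ih =>
    simp only [rearrangements, map, ← ih, image_image]
    rfl
  | binary v a b iha ihb =>
    simp only [rearrangements, map, ← iha, ← ihb, image_union, image_image₂, image₂_image_left,
      image₂_image_right]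

/-- The number of trees isomorphic to the given one as labelled rooted trees. -/
noncomputable def classSize (t : PlaneTree V) : ℕ := #t.rearrangements

@[simp] theorem classSize_leaf (v : V) : (leaf v).classSize = 1 := rfl

@[simp] theorem classSize_unary (v : V) (a : PlaneTree V) :
    (unary v a).classSize = a.classSize :=
  card_image_of_injective _ (unary_injective v)

theorem classSize_eq_of_rearrangements_eq {s t : PlaneTree V}
    (h : s.rearrangements = t.rearrangements) : s.classSize = t.classSize :=
  congrArg card h

theorem classSize_binary (v : V) (a b : PlaneTree V) : (binary v a b).classSize =
    if a.rearrangements = b.rearrangements then a.classSize * b.classSize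
    else 2 * (a.classSize * b.classSize) := by
  simp only [classSize, rearrangements]
  split_ifs with hab
  · rw [hab, union_self, card_image₂ (binary_injective2 v)]
  · rw [card_union_of_disjoint, card_image₂ (binary_injective2 v),
      card_image₂ (binary_injective2 v)]
    · ring
    · rw [disjoint_left]
      intro t ht ht'
      obtain ⟨x, hx, y, -, rfl⟩ := mem_image₂.1 ht
      obtain ⟨z, hz, w, -, hzw⟩ := mem_image₂.1 ht'
      obtain ⟨rfl, -⟩ := binary_injective2 v hzw
      exact hab ((rearrangements_eq_of_mem hx).symm.trans (rearrangements_eq_of_mem hz))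

theorem two_mul_classSize_sq_le (t : PlaneTree V) : 2 * t.classSize ^ 2 ≤ 2 ^ t.size := by
  induction t with
  | leaf v => simp
  | unary v a ih =>
    rw [classSize_unary, size_unary, pow_succ 2]
    omega
  | binary v a b iha ihb =>
    have h : (binary v a b).classSize ≤ 2 * (a.classSize * b.classSize) := by
      rw [classSize_binary]
      split_ifs <;> omega
    calc 2 * (binary v a b).classSize ^ 2
        ≤ 2 * (2 * (a.classSize * b.classSize)) ^ 2 := by gcongr
      _ = 2 * ((2 * a.classSize ^ 2) * (2 * b.classSize ^ 2)) := by ring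
      _ ≤ 2 * (2 ^ a.size * 2 ^ b.size) := by gcongr
      _ = 2 ^ (binary v a b).size := by rw [size_binary]; ring

/-! ### Isomorphism classes of plane trees of given size -/

/-- The unlabelled plane trees with `n` vertices. -/
noncomputable def treesOfSize (n : ℕ) : Finset (PlaneTree Unit) :=
  {t ∈ (finite_setOf_size_le n).toFinset | t.size = n}

@[simp] theorem mem_treesOfSize {n : ℕ} {t : PlaneTree Unit} : t ∈ treesOfSize n ↔ t.size = n := by
  simp +contextual [treesOfSize]

theorem treesOfSize_zero : treesOfSize 0 = ∅ := by
  ext t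
  simp [t.size_pos.ne']

theorem treesOfSize_one : treesOfSize 1 = {leaf ()} := by
  ext t
  rcases t with v | ⟨v, a⟩ | ⟨v, a, b⟩
  · simp
  · simp [a.size_pos.ne']
  · simp [a.size_pos.ne']

theorem treesOfSize_add_two (n : ℕ) : treesOfSize (n + 2) =
    (treesOfSize (n + 1)).image (unary ()) ∪ (antidiagonal (n + 1)).biUnion fun p =>
      image₂ (binary ()) (treesOfSize p.1) (treesOfSize p.2) := by
  ext t
  cases t <;> simp

theorem sum_treesOfSize_add_two {R : Type*} [AddCommMonoid R] (n : ℕ) (f : PlaneTree Unit → R) :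
    ∑ t ∈ treesOfSize (n + 2), f t = ∑ a ∈ treesOfSize (n + 1), f (unary () a) +
      ∑ p ∈ antidiagonal (n + 1), ∑ a ∈ treesOfSize p.1, ∑ b ∈ treesOfSize p.2,
        f (binary () a b) := by
  rw [treesOfSize_add_two, sum_union, sum_image (unary_injective ()).injOn, sum_biUnion]
  · congr 1
    refine sum_congr rfl fun p _ => ?_
    rw [image₂, sum_image (binary_injective2 ()).uncurry.injOn, sum_product]
    rfl
  · intro p _ q _ hpq
    refine disjoint_left.2 fun t ht ht' => hpq ?_
    obtain ⟨a, ha, b, hb, rfl⟩ := mem_image₂.1 ht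
    obtain ⟨c, hc, d, hd, h⟩ := mem_image₂.1 ht'
    obtain ⟨rfl, rfl⟩ := binary_injective2 () h
    simp only [mem_treesOfSize] at ha hb hc hd
    exact Prod.ext (ha.symm.trans hc) (hb.symm.trans hd)
  · refine disjoint_left.2 fun t ht ht' => ?_
    obtain ⟨a, -, rfl⟩ := mem_image.1 ht
    simp at ht'

/-- The `k`-th moment of the isomorphism class size over the plane trees with `n` vertices. Thus
`classMoment 0 n` is the number of plane trees, and `classMoment 1 n` is the number of ordered pairs
of isomorphic plane trees. -/
noncomputable def classMoment (k n : ℕ) : ℝ := ∑ t ∈ treesOfSize n, (t.classSize : ℝ) ^ k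

theorem classMoment_nonneg (k n : ℕ) : 0 ≤ classMoment k n := by
  unfold classMoment
  positivity

@[simp] theorem classMoment_zero_right (k : ℕ) : classMoment k 0 = 0 := by
  simp [classMoment, treesOfSize_zero]

@[simp] theorem classMoment_one_right (k : ℕ) : classMoment k 1 = 1 := by
  simp [classMoment, treesOfSize_one]

theorem sum_classSize_pow_of_rearrangements_eq (k : ℕ) (t : PlaneTree Unit) :
    (∑ s ∈ treesOfSize t.size,
      if t.rearrangements = s.rearrangements then (s.classSize : ℝ) ^ k else 0) =
      (t.classSize : ℝ) ^ (k + 1) := by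
  have hfilter : {s ∈ treesOfSize t.size | t.rearrangements = s.rearrangements} =
      t.rearrangements := by
    ext s
    rw [mem_filter, mem_treesOfSize, mem_rearrangements_iff, eq_comm (b := s.rearrangements),
      and_iff_right_iff_imp]
    exact fun h => size_eq_of_mem_rearrangements (mem_rearrangements_iff.2 h)
  rw [← sum_filter, hfilter, sum_congr rfl fun s hs => by
    rw [classSize_eq_of_rearrangements_eq (rearrangements_eq_of_mem hs)]]
  rw [sum_const, nsmul_eq_mul, pow_succ', classSize]

theorem classMoment_add_one_eq_sum_sum (k n : ℕ) : classMoment (k + 1) n =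
    ∑ s ∈ treesOfSize n, ∑ t ∈ treesOfSize n,
      if s.rearrangements = t.rearrangements then (t.classSize : ℝ) ^ k else 0 := by
  refine sum_congr rfl fun s hs => ?_
  rw [← mem_treesOfSize.1 hs, sum_classSize_pow_of_rearrangements_eq]

theorem sum_sum_classSize_mul_of_rearrangements_eq (i j : ℕ) :
    (∑ a ∈ treesOfSize i, ∑ b ∈ treesOfSize j,
      if a.rearrangements = b.rearrangements then (a.classSize * b.classSize : ℝ) else 0) =
      if i = j then classMoment 3 i else 0 := by
  split_ifs with hij
  · subst hij
    refine sum_congr rfl fun a ha => ?_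
    have h := sum_classSize_pow_of_rearrangements_eq 1 a
    rw [mem_treesOfSize.1 ha] at h
    simp only [← mul_ite_zero, ← mul_sum, pow_one] at h ⊢
    rw [h]
    ring
  · refine sum_eq_zero fun a ha => sum_eq_zero fun b hb => if_neg fun hab => hij ?_
    rw [← mem_treesOfSize.1 ha, ← mem_treesOfSize.1 hb]
    exact size_eq_of_mem_rearrangements (mem_rearrangements_iff.2 hab)

theorem sum_sum_classSize_binary (i j : ℕ) :
    ∑ a ∈ treesOfSize i, ∑ b ∈ treesOfSize j, ((binary () a b).classSize : ℝ) =
      2 * (classMoment 1 i * classMoment 1 j) - if i = j then classMoment 3 i else 0 := by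
  have hbinary (a b : PlaneTree Unit) : ((binary () a b).classSize : ℝ) =
      2 * (a.classSize * b.classSize : ℝ) -
        if a.rearrangements = b.rearrangements then (a.classSize * b.classSize : ℝ) else 0 := by
    rw [classSize_binary]
    split_ifs <;> push_cast <;> ring
  simp only [hbinary, sum_sub_distrib, sum_sum_classSize_mul_of_rearrangements_eq, ← mul_sum,
    classMoment, pow_one, sum_mul_sum]

theorem classMoment_zero_add_two (n : ℕ) : classMoment 0 (n + 2) = classMoment 0 (n + 1) +
    ∑ p ∈ antidiagonal (n + 1), classMoment 0 p.1 * classMoment 0 p.2 := by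
  simp only [classMoment, sum_treesOfSize_add_two, sum_mul_sum, pow_zero, one_mul]

theorem classMoment_one_add_two (n : ℕ) : classMoment 1 (n + 2) = classMoment 1 (n + 1) +
    ∑ p ∈ antidiagonal (n + 1), (2 * (classMoment 1 p.1 * classMoment 1 p.2) -
      if p.1 = p.2 then classMoment 3 p.1 else 0) := by
  simp only [← sum_sum_classSize_binary]
  simp only [classMoment, sum_treesOfSize_add_two, classSize_unary, pow_one]

theorem classMoment_add_two_le (k n : ℕ) :
    classMoment (k + 2) n ≤ 2 ^ n / 2 * classMoment k n := by
  rw [classMoment, classMoment, mul_sum]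
  gcongr with t ht
  have h : 2 * (t.classSize : ℝ) ^ 2 ≤ 2 ^ n := by
    rw [← mem_treesOfSize.1 ht]
    exact_mod_cast t.two_mul_classSize_sq_le
  rw [pow_add, mul_comm]
  gcongr
  linarith

theorem classMoment_one_le (n : ℕ) : classMoment 1 n ≤ (3 / 2) ^ n * classMoment 0 n := by
  rw [classMoment, classMoment, mul_sum]
  refine sum_le_sum fun t ht => ?_
  rw [pow_one, pow_zero, mul_one]
  have h : 2 * (t.classSize : ℝ) ^ 2 ≤ 2 ^ n := by
    rw [← mem_treesOfSize.1 ht]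
    exact_mod_cast t.two_mul_classSize_sq_le
  refine le_of_sq_le_sq ?_ (by positivity)
  calc (t.classSize : ℝ) ^ 2 ≤ 2 ^ n := by nlinarith [sq_nonneg (t.classSize : ℝ)]
    _ ≤ ((3 / 2) ^ 2) ^ n := by gcongr; norm_num
    _ = ((3 / 2) ^ n) ^ 2 := pow_right_comm _ _ _

theorem classMoment_three_le_sq (n : ℕ) : classMoment 3 n ≤ classMoment 1 n ^ 2 := by
  have h := sum_sum_classSize_mul_of_rearrangements_eq n n
  rw [if_pos rfl] at h
  rw [← h, sq, classMoment, sum_mul_sum]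
  gcongr
  split_ifs
  · simp
  · positivity

end PlaneTree

/-! ### Plane representations of rooted trees -/

namespace PlaneTree

variable {V W : Type*}

theorem induction_on_children {P : PlaneTree V → Prop} (t : PlaneTree V)
    (h : ∀ t : PlaneTree V, (∀ a ∈ t.children, P a) → P t) : P t := by
  induction t with
  | leaf v => exact h _ (by simp [children])
  | unary v a ih => exact h _ (by simpa [children] using ih)
  | binary v a b iha ihb => exact h _ (by simpa [children] using ⟨iha, ihb⟩)

/-- The edges joining each vertex to its children. -/
def edges : PlaneTree V → List (Sym2 V)
  | leaf _ => []
  | unary v a => s(v, a.root) :: a.edges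
  | binary v a b => s(v, a.root) :: s(v, b.root) :: (a.edges ++ b.edges)

theorem labels_eq_cons (t : PlaneTree V) : t.labels = t.root :: t.children.flatMap labels := by
  cases t <;> simp [labels, root, children]

theorem mem_labels {t : PlaneTree V} {v : V} :
    v ∈ t.labels ↔ v = t.root ∨ ∃ a ∈ t.children, v ∈ a.labels := by
  simp [t.labels_eq_cons]

theorem root_mem_labels (t : PlaneTree V) : t.root ∈ t.labels := mem_labels.2 (Or.inl rfl)

theorem mem_edges {t : PlaneTree V} {e : Sym2 V} :
    e ∈ t.edges ↔ ∃ a ∈ t.children, e = s(t.root, a.root) ∨ e ∈ a.edges := by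
  cases t <;> simp [edges, children, root]
  tauto

theorem length_edges_add_one (t : PlaneTree V) : t.edges.length + 1 = t.size := by
  induction t with
  | leaf => simp [edges]
  | unary v a ih => simp [edges, ih]
  | binary v a b iha ihb =>
    simp only [edges, List.length_cons, List.length_append, size_binary]
    omega

theorem mem_labels_of_mem_edges {t : PlaneTree V} {e : Sym2 V} (he : e ∈ t.edges) {u : V}
    (hu : u ∈ e) : u ∈ t.labels := by
  induction t using induction_on_children with
  | h t ih =>
    obtain ⟨a, ha, rfl | he⟩ := mem_edges.1 he
    · rcases Sym2.mem_iff.1 hu with rfl | rfl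
      · exact t.root_mem_labels
      · exact mem_labels.2 (Or.inr ⟨a, ha, a.root_mem_labels⟩)
    · exact mem_labels.2 (Or.inr ⟨a, ha, ih a ha he⟩)

section Nodup

variable {t a b : PlaneTree V}

theorem root_notMem_labels_of_mem_children (hn : t.labels.Nodup) (ha : a ∈ t.children) :
    t.root ∉ a.labels := by
  rw [t.labels_eq_cons, List.nodup_cons] at hn
  exact fun h => hn.1 (List.mem_flatMap.2 ⟨a, ha, h⟩)

theorem nodup_labels_of_mem_children (hn : t.labels.Nodup) (ha : a ∈ t.children) :
    a.labels.Nodup := by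
  rw [t.labels_eq_cons, List.nodup_cons, List.nodup_flatMap] at hn
  exact hn.2.1 a ha

theorem pairwise_disjoint_labels_children (hn : t.labels.Nodup) :
    t.children.Pairwise (Function.onFun List.Disjoint labels) := by
  rw [t.labels_eq_cons, List.nodup_cons, List.nodup_flatMap] at hn
  exact hn.2.2

theorem eq_of_mem_children_of_mem_labels (hn : t.labels.Nodup) (ha : a ∈ t.children)
    (hb : b ∈ t.children) {v : V} (hva : v ∈ a.labels) (hvb : v ∈ b.labels) : a = b := by
  by_contra hab
  have : Std.Symm (Function.onFun List.Disjoint (labels (V := V))) := ⟨fun _ _ h => h.symm⟩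
  exact (pairwise_disjoint_labels_children hn).forall ha hb hab hva hvb

theorem nodup_map_root_children (hn : t.labels.Nodup) : (t.children.map root).Nodup := by
  refine List.pairwise_map.2 ((pairwise_disjoint_labels_children hn).imp fun {a b} h hab => ?_)
  exact h a.root_mem_labels (hab ▸ b.root_mem_labels)

theorem root_mk_mem_edges_iff (hn : t.labels.Nodup) {w : V} :
    s(t.root, w) ∈ t.edges ↔ w ∈ t.children.map root := by
  rw [mem_edges, List.mem_map]
  refine exists_congr fun a => and_congr_right fun ha => ?_
  rw [Sym2.congr_right, eq_comm, or_iff_left]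
  exact fun hw => root_notMem_labels_of_mem_children hn ha
    (mem_labels_of_mem_edges hw (Sym2.mem_mk_left _ _))

theorem mem_edges_iff_of_mem_labels_child (hn : t.labels.Nodup) (ha : a ∈ t.children) {u w : V}
    (hu : u ∈ a.labels) : s(u, w) ∈ t.edges ↔ s(u, w) ∈ a.edges ∨ u = a.root ∧ w = t.root := by
  have hroot : u ≠ t.root := fun h => root_notMem_labels_of_mem_children hn ha (h ▸ hu)
  constructor
  · intro h
    obtain ⟨b, hb, h⟩ := mem_edges.1 h
    rw [Sym2.eq_iff, or_iff_right (a := u = t.root ∧ w = b.root) fun h => hroot h.1] at h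
    have hub : u ∈ b.labels := by
      rcases h with ⟨rfl, -⟩ | h
      · exact b.root_mem_labels
      · exact mem_labels_of_mem_edges h (Sym2.mem_mk_left _ _)
    obtain rfl := eq_of_mem_children_of_mem_labels hn ha hb hu hub
    exact h.symm
  · rintro (h | ⟨rfl, rfl⟩)
    · exact mem_edges.2 ⟨a, ha, Or.inr h⟩
    · exact mem_edges.2 ⟨a, ha, Or.inl Sym2.eq_swap⟩

theorem diag_notMem_edges (hn : t.labels.Nodup) (v : V) : s(v, v) ∉ t.edges := by
  induction t using induction_on_children with
  | h t ih =>
    intro hv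
    obtain ⟨a, ha, h | h⟩ := mem_edges.1 hv
    · have hroot : t.root = a.root := by
        rcases Sym2.eq_iff.1 h with ⟨h, h'⟩ | ⟨h, h'⟩ <;> rw [← h, ← h']
      exact root_notMem_labels_of_mem_children hn ha (hroot ▸ a.root_mem_labels)
    · exact ih a ha (nodup_labels_of_mem_children hn ha) h

end Nodup

/-- The graph whose edges join each vertex to its children. -/
def toGraph (t : PlaneTree V) : SimpleGraph V := SimpleGraph.fromEdgeSet {e | e ∈ t.edges}

theorem toGraph_adj {t : PlaneTree V} (hn : t.labels.Nodup) {u w : V} :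
    t.toGraph.Adj u w ↔ s(u, w) ∈ t.edges := by
  rw [toGraph, SimpleGraph.fromEdgeSet_adj]
  refine and_iff_left_of_imp ?_
  rintro h rfl
  exact diag_notMem_edges hn u h

theorem reachable_root {G : SimpleGraph V} {t : PlaneTree V}
    (h : ∀ u w, s(u, w) ∈ t.edges → G.Adj u w) {u : V} (hu : u ∈ t.labels) :
    G.Reachable t.root u := by
  induction t using induction_on_children with
  | h t ih =>
    rcases mem_labels.1 hu with rfl | ⟨a, ha, hu⟩
    · exact SimpleGraph.Reachable.refl _
    · have hta : G.Adj t.root a.root := h _ _ (mem_edges.2 ⟨a, ha, Or.inl rfl⟩)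
      exact hta.reachable.trans
        (ih a ha (fun x y hxy => h x y (mem_edges.2 ⟨a, ha, Or.inr hxy⟩)) hu)

theorem size_eq_card [Fintype V] {t : PlaneTree V} (hn : t.labels.Nodup)
    (hc : ∀ v, v ∈ t.labels) : t.size = Fintype.card V := by
  rw [size, ← List.toFinset_card_of_nodup hn, ← Finset.card_univ]
  congr 1
  ext v
  simp [hc v]

theorem isTree_toGraph [Finite V] {t : PlaneTree V} (hn : t.labels.Nodup)
    (hc : ∀ v, v ∈ t.labels) : t.toGraph.IsTree := by
  have := Fintype.ofFinite V
  have hreach (u : V) : t.toGraph.Reachable t.root u :=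
    reachable_root (fun _ _ => (toGraph_adj hn).2) (hc u)
  have hconn : t.toGraph.Connected :=
    { preconnected := fun u w => (hreach u).symm.trans (hreach w), nonempty := ⟨t.root⟩ }
  have hedges : Nat.card t.toGraph.edgeSet ≤ t.edges.length := by
    have hsub : t.toGraph.edgeSet ⊆ (t.edges.toFinset : Set (Sym2 V)) := by
      intro e he
      induction e with | _ u w
      simpa using (toGraph_adj hn).1 he
    calc Nat.card t.toGraph.edgeSet = t.toGraph.edgeSet.ncard := rfl
      _ ≤ (t.edges.toFinset : Set (Sym2 V)).ncard :=
        Set.ncard_le_ncard hsub (Finset.finite_toSet _)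
      _ = t.edges.toFinset.card := Set.ncard_coe_finset _
      _ ≤ t.edges.length := List.toFinset_card_le _
  refine SimpleGraph.isTree_iff_connected_and_card.2
    ⟨hconn, le_antisymm ?_ hconn.card_vert_le_card_edgeSet_add_one⟩
  rw [Nat.card_eq_fintype_card (α := V), ← size_eq_card hn hc, ← t.length_edges_add_one]
  omega

/-- The neighbours of `v` other than the possible parent `p`. -/
def childSet (G : SimpleGraph V) (p : Option V) (v : V) : Set V := {w | G.Adj v w ∧ some w ≠ p}

/-- `Represents G p t` says that `t` is a plane drawing of the part of the graph `G` hanging from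
the vertex `t.root` when `p` is the parent of that vertex, or `none` at the root of `G`. -/
inductive Represents (G : SimpleGraph V) : Option V → PlaneTree V → Prop
  | intro (p : Option V) (t : PlaneTree V)
      (childSet_eq : childSet G p t.root = {w | w ∈ t.children.map root})
      (nodup : (t.children.map root).Nodup)
      (children : ∀ a ∈ t.children, Represents G (some t.root) a) : Represents G p t

namespace Represents

variable {G : SimpleGraph V} {p : Option V} {s t : PlaneTree V} {v : V}

theorem childSet_eq (h : Represents G p t) :
    childSet G p t.root = {w | w ∈ t.children.map root} := by
  cases h
  assumption

theorem nodup_roots (h : Represents G p t) : (t.children.map root).Nodup := by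
  cases h
  assumption

theorem of_mem_children (h : Represents G p t) {a : PlaneTree V} (ha : a ∈ t.children) :
    Represents G (some t.root) a := by
  cases h with
  | intro _ _ _ _ hchildren => exact hchildren a ha

theorem root_mem_childSet (h : Represents G p t) {a : PlaneTree V} (ha : a ∈ t.children) :
    a.root ∈ childSet G p t.root := by
  rw [h.childSet_eq]
  exact List.mem_map_of_mem ha

theorem ncard_childSet (h : Represents G p t) :
    (childSet G p t.root).ncard = t.children.length := by
  have hcoe : {w | w ∈ t.children.map root} = ((t.children.map root).toFinset : Set V) := by
    ext w
    simp
  rw [h.childSet_eq, hcoe, Set.ncard_coe_finset, List.toFinset_card_of_nodup h.nodup_roots,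
    List.length_map]

theorem leaf_iff : Represents G p (leaf v) ↔ childSet G p v = ∅ := by
  refine ⟨fun h => by simpa [children, root] using h.childSet_eq, fun h => ?_⟩
  exact intro p _ (by simpa [children, root] using h) (by simp [children]) (by simp [children])

theorem unary_iff {a : PlaneTree V} : Represents G p (unary v a) ↔
    childSet G p v = {a.root} ∧ Represents G (some v) a := by
  refine ⟨fun h => ⟨?_, h.of_mem_children (by simp [children])⟩, fun ⟨h, ha⟩ => ?_⟩
  · simpa [children, Set.ext_iff, root] using h.childSet_eq
  · refine intro p _ ?_ (by simp [children]) (by simpa [children, root] using ha)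
    simpa [children, Set.ext_iff, root] using h

theorem binary_iff {a b : PlaneTree V} : Represents G p (binary v a b) ↔
    childSet G p v = {a.root, b.root} ∧ a.root ≠ b.root ∧
      Represents G (some v) a ∧ Represents G (some v) b := by
  refine ⟨fun h => ⟨?_, ?_, h.of_mem_children (by simp [children]),
    h.of_mem_children (by simp [children])⟩, fun ⟨h, hab, ha, hb⟩ => ?_⟩
  · simpa [children, Set.ext_iff, root] using h.childSet_eq
  · simpa [children] using h.nodup_roots
  · refine intro p _ ?_ (by simpa [children] using hab) (by simpa [children, root] using ⟨ha, hb⟩)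
    simpa [children, Set.ext_iff, root] using h

theorem mem_edgeSet (h : Represents G p t) {e : Sym2 V} (he : e ∈ t.edges) : e ∈ G.edgeSet := by
  induction h with
  | intro p t hset _ _ ih =>
    obtain ⟨a, ha, rfl | he⟩ := mem_edges.1 he
    · have hroot : a.root ∈ childSet G p t.root := hset ▸ List.mem_map_of_mem ha
      exact hroot.1
    · exact ih a ha he

theorem mem_edges_of_adj (h : Represents G p t) {u w : V} (hu : u ∈ t.labels) (huw : G.Adj u w) :
    s(u, w) ∈ t.edges ∨ u = t.root ∧ some w = p := by
  induction h with
  | intro p t hset _ _ ih =>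
    rcases mem_labels.1 hu with rfl | ⟨a, ha, hu⟩
    · refine or_iff_not_imp_right.2 fun hp => ?_
      have hw : w ∈ childSet G p t.root := ⟨huw, fun h => hp ⟨rfl, h⟩⟩
      rw [hset] at hw
      obtain ⟨a, ha, rfl⟩ := List.mem_map.1 hw
      exact mem_edges.2 ⟨a, ha, Or.inl rfl⟩
    · refine Or.inl (mem_edges.2 ⟨a, ha, ?_⟩)
      rcases ih a ha hu with h | ⟨rfl, h⟩
      · exact Or.inr h
      · rw [Option.some_inj.1 h, Sym2.eq_swap]
        exact Or.inl rfl

theorem adj_iff_mem_edges (h : Represents G none t) (hc : ∀ v, v ∈ t.labels) {u w : V} :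
    G.Adj u w ↔ s(u, w) ∈ t.edges :=
  ⟨fun huw => (h.mem_edges_of_adj (hc u) huw).resolve_right (by simp), h.mem_edgeSet⟩

theorem of_adj_iff (hn : t.labels.Nodup) (hp : ∀ q ∈ p, q ∉ t.labels)
    (h : ∀ u ∈ t.labels, ∀ w, G.Adj u w ↔ s(u, w) ∈ t.edges ∨ u = t.root ∧ some w = p) :
    Represents G p t := by
  induction t using induction_on_children generalizing p with
  | h t ih =>
    refine intro p t ?_ (nodup_map_root_children hn) fun a ha => ?_
    · ext w
      have hparent : w ∈ t.children.map root → some w ≠ p := by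
        rintro hw rfl
        obtain ⟨a, ha, rfl⟩ := List.mem_map.1 hw
        exact hp _ rfl (mem_labels.2 (Or.inr ⟨a, ha, a.root_mem_labels⟩))
      change G.Adj t.root w ∧ some w ≠ p ↔ w ∈ t.children.map root
      rw [h _ t.root_mem_labels, root_mk_mem_edges_iff hn]
      tauto
    · have hroot := root_notMem_labels_of_mem_children hn ha
      refine ih a ha (nodup_labels_of_mem_children hn ha) (by simpa using hroot) fun u hu w => ?_
      have hu' : u ≠ t.root := fun h => hroot (h ▸ hu)
      rw [h u (mem_labels.2 (Or.inr ⟨a, ha, hu⟩)), mem_edges_iff_of_mem_labels_child hn ha hu,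
        Option.some_inj, or_iff_left fun h => hu' h.1]

theorem toGraph (hn : t.labels.Nodup) : Represents t.toGraph none t :=
  of_adj_iff hn (by simp) fun u _ w => by simp [toGraph_adj hn]

theorem toGraph_eq (h : Represents G none t) (hn : t.labels.Nodup) (hc : ∀ v, v ∈ t.labels) :
    t.toGraph = G := by
  ext u w
  rw [toGraph_adj hn, h.adj_iff_mem_edges hc]

theorem of_mem_rearrangements (h : Represents G p t) (hs : s ∈ t.rearrangements) :
    Represents G p s := by
  induction t generalizing p s with
  | leaf v => rwa [Finset.mem_singleton.1 hs]
  | unary v a ih =>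
    obtain ⟨x, hx, rfl⟩ := Finset.mem_image.1 hs
    rw [unary_iff] at h ⊢
    exact ⟨by rw [h.1, root_eq_of_mem_rearrangements hx], ih h.2 hx⟩
  | binary v a b iha ihb =>
    rw [binary_iff] at h
    obtain ⟨hset, hab, ha, hb⟩ := h
    rcases Finset.mem_union.1 hs with hs | hs <;> obtain ⟨x, hx, y, hy, rfl⟩ :=
      Finset.mem_image₂.1 hs <;> rw [binary_iff, root_eq_of_mem_rearrangements hx,
      root_eq_of_mem_rearrangements hy]
    · exact ⟨hset, hab, iha ha hx, ihb hb hy⟩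
    · exact ⟨by rw [hset, Set.pair_comm], hab.symm, ihb hb hx, iha ha hy⟩

theorem length_children_eq (hs : Represents G p s) (ht : Represents G p t)
    (hroot : s.root = t.root) : s.children.length = t.children.length := by
  rw [← hs.ncard_childSet, ← ht.ncard_childSet, hroot]

theorem mem_rearrangements (hs : Represents G p s) (ht : Represents G p t)
    (hroot : s.root = t.root) : s ∈ t.rearrangements := by
  induction t generalizing p s with
  | leaf v =>
    have hlength := hs.length_children_eq ht hroot
    cases s <;> simp [children] at hlength
    rw [rearrangements, Finset.mem_singleton]
    exact congrArg leaf hroot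
  | unary v a ih =>
    have hlength := hs.length_children_eq ht hroot
    cases s <;> simp [children] at hlength
    rename_i u b
    obtain rfl : u = v := hroot
    rw [unary_iff] at hs ht
    have hba : b.root = a.root := by simpa [ht.1] using hs.1.symm
    exact Finset.mem_image_of_mem _ (ih hs.2 ht.2 hba)
  | binary v a b iha ihb =>
    have hlength := hs.length_children_eq ht hroot
    cases s <;> simp [children] at hlength
    rename_i u c d
    obtain rfl : u = v := hroot
    obtain ⟨hset, -, ha, hb⟩ := binary_iff.1 ht
    obtain ⟨hset', -, hc, hd⟩ := binary_iff.1 hs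
    rcases Set.pair_eq_pair_iff.1 (hset'.symm.trans hset) with ⟨hca, hdb⟩ | ⟨hcb, hda⟩
    · exact Finset.mem_union_left _ (Finset.mem_image₂_of_mem (iha hc ha hca) (ihb hd hb hdb))
    · exact Finset.mem_union_right _ (Finset.mem_image₂_of_mem (ihb hc hb hcb) (iha hd ha hda))

theorem mem_rearrangements_iff (ht : Represents G p t) :
    s ∈ t.rearrangements ↔ Represents G p s ∧ s.root = t.root :=
  ⟨fun h => ⟨ht.of_mem_rearrangements h, root_eq_of_mem_rearrangements h⟩,
    fun h => h.1.mem_rearrangements ht h.2⟩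

theorem classSize_eq (h : Represents G p t) : t.classSize = 2 ^ t.numBinary := by
  induction t generalizing p with
  | leaf v => rfl
  | unary v a ih => rw [classSize_unary, ih (unary_iff.1 h).2, numBinary]
  | binary v a b iha ihb =>
    obtain ⟨-, hab, ha, hb⟩ := binary_iff.1 h
    have hne : a.rearrangements ≠ b.rearrangements := fun h =>
      hab (root_eq_of_mem_rearrangements (PlaneTree.mem_rearrangements_iff.2 h))
    rw [classSize_binary, if_neg hne, iha ha, ihb hb, numBinary]
    ring

theorem map {H : SimpleGraph W} (h : Represents G p t) (φ : G ≃g H) :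
    Represents H (p.map φ) (t.map φ) := by
  induction h with
  | intro p t hset hnodup _ ih =>
    have himage : childSet H (p.map φ) (φ t.root) = φ '' childSet G p t.root := by
      ext w
      obtain ⟨u, rfl⟩ := φ.surjective w
      rw [φ.injective.mem_set_image]
      cases p <;> simp [childSet, φ.map_adj_iff, φ.injective.eq_iff]
    have hroots : (t.map φ).children.map root = (t.children.map root).map φ := by
      simp [Function.comp_def]
    refine intro _ _ ?_ (hroots ▸ hnodup.map φ.injective) ?_
    · rw [root_map, himage, hset, hroots]
      ext w
      simp
    · rw [children_map, List.forall_mem_map]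
      exact fun a ha => by simpa using ih a ha

theorem mem_labels_of_connected (h : Represents G none t) (hG : G.Connected) (w : V) :
    w ∈ t.labels := by
  have hwalk (u : V) (q : G.Walk u w) : u ∈ t.labels → w ∈ t.labels := by
    induction q with
    | nil => exact id
    | cons hadj _ ih =>
      intro hu
      have hedge := (h.mem_edges_of_adj hu hadj).resolve_right (by simp)
      exact ih (mem_labels_of_mem_edges hedge (Sym2.mem_mk_right _ _))
  exact hwalk _ (hG t.root w).some t.root_mem_labels

end Represents
end PlaneTree

section Tree

variable {V : Type*} {G : SimpleGraph V}

theorem eq_getVert_of_dist_add_dist (hG : G.IsTree) {u v w : V} {q : G.Walk u w} (hq : q.IsPath)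
    (h : G.dist u v + G.dist v w = G.dist u w) : v = q.getVert (G.dist u v) := by
  obtain ⟨q₁, -, hlen₁⟩ := hG.connected.exists_path_of_dist u v
  obtain ⟨q₂, -, hlen₂⟩ := hG.connected.exists_path_of_dist v w
  have hpath : (q₁.append q₂).IsPath := by
    apply SimpleGraph.Walk.isPath_of_length_eq_dist
    rw [SimpleGraph.Walk.length_append, hlen₁, hlen₂, h]
  have := hG.isAcyclic.subsingleton_path u w
  have hunique : q = q₁.append q₂ :=
    congrArg Subtype.val (Subsingleton.elim (⟨q, hq⟩ : G.Path u w) ⟨_, hpath⟩)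
  rw [hunique, ← hlen₁]
  simp [SimpleGraph.Walk.getVert_append]

theorem eq_of_dist_add_dist_eq (hG : G.IsTree) {u v v' w : V} (hvv' : G.dist u v = G.dist u v')
    (h : G.dist u v + G.dist v w = G.dist u w) (h' : G.dist u v' + G.dist v' w = G.dist u w) :
    v = v' := by
  obtain ⟨q, hq, -⟩ := hG.connected.exists_path_of_dist u w
  rw [eq_getVert_of_dist_add_dist hG hq h, eq_getVert_of_dist_add_dist hG hq h', hvv']

/-- `p` is the parent of `v` in the tree `G` rooted at `r`, where `none` is the parent of `r`. -/
def IsParent (G : SimpleGraph V) (r : V) : Option V → V → Prop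
  | none, v => v = r
  | some q, v => G.Adj q v ∧ G.dist r v = G.dist r q + 1

open PlaneTree

theorem IsParent.of_mem_childSet (hG : G.IsTree) {r v w : V} {p : Option V}
    (hp : IsParent G r p v) (hw : w ∈ childSet G p v) : IsParent G r (some v) w := by
  have hadj : G.Adj v w := hw.1
  refine ⟨hadj, (hG.dist_eq_dist_add_one_of_adj r hadj).resolve_left fun hv => ?_⟩
  cases p with
  | none =>
    obtain rfl : v = r := hp
    simp at hv
  | some q =>
    have hadj' : G.Adj q v := hp.1
    have hqw : q = w := eq_of_dist_add_dist_eq hG (u := r) (w := v) (by have := hp.2; omega)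
      (by rw [SimpleGraph.dist_eq_one_iff_adj.2 hadj']; exact hp.2.symm)
      (by rw [SimpleGraph.dist_eq_one_iff_adj.2 hadj.symm]; exact hv.symm)
    exact hw.2 (by rw [hqw])

namespace PlaneTree.Represents

variable {r : V} {p : Option V} {t : PlaneTree V}

theorem dist_root_add_dist (h : Represents G p t) (hG : G.IsTree) (hp : IsParent G r p t.root)
    {w : V} (hw : w ∈ t.labels) : G.dist r t.root + G.dist t.root w = G.dist r w := by
  induction h with
  | intro p t hset hnodup hchildren ih =>
    rcases mem_labels.1 hw with rfl | ⟨a, ha, hw⟩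
    · simp
    · have hmem := (intro p t hset hnodup hchildren).root_mem_childSet ha
      have hpa := hp.of_mem_childSet hG hmem
      have hdist := ih a ha hpa hw
      have hroot := hpa.2
      have htri := hG.connected.dist_triangle (u := t.root) (v := a.root) (w := w)
      have htri' := hG.connected.dist_triangle (u := r) (v := t.root) (w := w)
      have hadj : G.Adj t.root a.root := hmem.1
      rw [SimpleGraph.dist_eq_one_iff_adj.2 hadj] at htri
      omega

theorem nodup_labels (h : Represents G p t) (hG : G.IsTree) (hp : IsParent G r p t.root) :
    t.labels.Nodup := by
  induction h with
  | intro p t hset hnodup hchildren ih =>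
    have hpa {a : PlaneTree V} (ha : a ∈ t.children) : IsParent G r (some t.root) a.root :=
      hp.of_mem_childSet hG ((intro p t hset hnodup hchildren).root_mem_childSet ha)
    rw [t.labels_eq_cons, List.nodup_cons, List.nodup_flatMap, List.mem_flatMap]
    refine ⟨?_, fun a ha => ih a ha (hpa ha), ?_⟩
    · rintro ⟨a, ha, hroot⟩
      have hdist := (hchildren a ha).dist_root_add_dist hG (hpa ha) hroot
      have hroot' := (hpa ha).2
      omega
    · refine (List.pairwise_map.1 hnodup).imp_of_mem fun {a b} ha hb hab w hwa hwb => hab ?_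
      exact eq_of_dist_add_dist_eq hG ((hpa ha).2.trans (hpa hb).2.symm)
        ((hchildren a ha).dist_root_add_dist hG (hpa ha) hwa)
        ((hchildren b hb).dist_root_add_dist hG (hpa hb) hwb)

end PlaneTree.Represents

end Tree

namespace PlaneTree

theorem outdeg_eq_ncard_childSet {n : ℕ} (T : RTree n) {p : Option (Fin n)} {v : Fin n}
    (hp : IsParent T.graph T.root p v) : T.outdeg v = (childSet T.graph p v).ncard := by
  unfold RTree.outdeg
  cases p with
  | none =>
    rw [if_pos (show v = T.root from hp)]
    congr 1
    ext w
    simp [childSet]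
  | some q =>
    have hset : childSet T.graph (some q) v = T.graph.neighborSet v \ {q} := by
      ext w
      simp [childSet]
    have hmem : q ∈ T.graph.neighborSet v := SimpleGraph.Adj.symm hp.1
    rw [if_neg, hset, Set.ncard_sdiff_singleton_of_mem hmem]
    rintro rfl
    simpa using hp.2

theorem exists_represents_of_children {V : Type*} [Finite V] {G : SimpleGraph V} {p : Option V}
    {v : V} (hcard : (childSet G p v).ncard ≤ 2)
    (hchild : ∀ w ∈ childSet G p v, ∃ t : PlaneTree V, t.root = w ∧ Represents G (some v) t) :
    ∃ t : PlaneTree V, t.root = v ∧ Represents G p t := by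
  obtain h | h | h : (childSet G p v).ncard = 0 ∨ (childSet G p v).ncard = 1 ∨
      (childSet G p v).ncard = 2 := by omega
  · exact ⟨leaf v, rfl, Represents.leaf_iff.2 ((Set.ncard_eq_zero (Set.toFinite _)).1 h)⟩
  · obtain ⟨c, hc⟩ := Set.ncard_eq_one.1 h
    obtain ⟨a, rfl, ha⟩ := hchild c (by simp [hc])
    exact ⟨unary v a, rfl, Represents.unary_iff.2 ⟨hc, ha⟩⟩
  · obtain ⟨c, d, hcd, hc⟩ := Set.ncard_eq_two.1 h
    obtain ⟨a, rfl, ha⟩ := hchild c (by simp [hc])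
    obtain ⟨b, rfl, hb⟩ := hchild d (by simp [hc])
    exact ⟨binary v a b, rfl, Represents.binary_iff.2 ⟨hc, hcd, ha, hb⟩⟩

variable {n : ℕ}

theorem exists_represents (T : UBTree n) :
    ∃ t : PlaneTree (Fin n), t.root = T.1.root ∧ Represents T.1.graph none t := by
  obtain ⟨N, hN⟩ := (Set.finite_range fun v => T.1.graph.dist T.1.root v).bddAbove
  suffices h : ∀ (k : ℕ) (p : Option (Fin n)) (v : Fin n), IsParent T.1.graph T.1.root p v →
      N + 1 ≤ T.1.graph.dist T.1.root v + k →
      ∃ t : PlaneTree (Fin n), t.root = v ∧ Represents T.1.graph p t from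
    h (N + 1) none T.1.root rfl (by omega)
  intro k
  induction k with
  | zero =>
    intro p v _ hk
    have hv := hN ⟨v, rfl⟩
    dsimp only at hv
    omega
  | succ k ih =>
    intro p v hp hk
    refine exists_represents_of_children (outdeg_eq_ncard_childSet T.1 hp ▸ T.2 v) fun w hw => ?_
    have hpw := hp.of_mem_childSet T.1.isTree hw
    refine ih _ _ hpw ?_
    rw [hpw.2]
    omega

namespace Represents

theorem outdeg_root {T : RTree n} {p : Option (Fin n)} {t : PlaneTree (Fin n)}
    (h : Represents T.graph p t) (hp : IsParent T.graph T.root p t.root) :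
    T.outdeg t.root = t.children.length := by
  rw [outdeg_eq_ncard_childSet T hp, h.ncard_childSet]

theorem outdeg_le_two {T : RTree n} {p : Option (Fin n)} {t : PlaneTree (Fin n)}
    (h : Represents T.graph p t) (hp : IsParent T.graph T.root p t.root) {v : Fin n}
    (hv : v ∈ t.labels) : T.outdeg v ≤ 2 := by
  induction t using induction_on_children generalizing p with
  | h t ih =>
    rcases mem_labels.1 hv with rfl | ⟨a, ha, hv⟩
    · rw [h.outdeg_root hp]
      cases t <;> simp [children]
    · exact ih a ha (h.of_mem_children ha)
        (hp.of_mem_childSet T.isTree (h.root_mem_childSet ha)) hv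

theorem countP_outdeg_eq_two {T : RTree n} {p : Option (Fin n)} {t : PlaneTree (Fin n)}
    (h : Represents T.graph p t) (hp : IsParent T.graph T.root p t.root) :
    t.labels.countP (fun v => T.outdeg v = 2) = t.numBinary := by
  induction t using induction_on_children generalizing p with
  | h t ih =>
    have hroot := h.outdeg_root hp
    have ih' (a : PlaneTree (Fin n)) (ha : a ∈ t.children) :=
      ih a ha (h.of_mem_children ha) (hp.of_mem_childSet T.isTree (h.root_mem_childSet ha))
    cases t <;> simp_all [labels, children, root, numBinary]

theorem ubWeight_eq {T : UBTree n} {t : PlaneTree (Fin n)} (h : Represents T.1.graph none t)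
    (hroot : t.root = T.1.root) : ubWeight T = t.classSize := by
  have hp : IsParent T.1.graph T.1.root none t.root := hroot
  have hn := h.nodup_labels T.1.isTree hp
  have hc := h.mem_labels_of_connected T.1.isTree.connected
  rw [h.classSize_eq, ← h.countP_outdeg_eq_two hp, List.countP_eq_length_filter,
    ← List.toFinset_card_of_nodup (hn.filter _), Nat.cast_pow, Nat.cast_ofNat, ubWeight]
  congr 2
  ext v
  simp [hc v]

end Represents
end PlaneTree

namespace PlaneTree

variable {V W : Type*}

theorem shape_eq_self (t : PlaneTree Unit) : t.shape = t := by
  unfold shape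
  induction t with
  | leaf v => rfl
  | unary v a ih => rw [map, ih]
  | binary v a b iha ihb => rw [map, iha, ihb]

theorem edges_map (f : V → W) (t : PlaneTree V) : (t.map f).edges = t.edges.map (Sym2.map f) := by
  induction t with
  | leaf v => rfl
  | unary v a ih => simp [map, edges, ih]
  | binary v a b iha ihb => simp [map, edges, iha, ihb]

theorem exists_perm_map_eq {s t : PlaneTree V} (hshape : s.shape = t.shape)
    (hs : s.labels.Nodup ∧ ∀ v, v ∈ s.labels) (ht : t.labels.Nodup ∧ ∀ v, v ∈ t.labels) :
    ∃ σ : Equiv.Perm V, s.map σ = t := by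
  have hlen : s.labels.length = t.labels.length := by
    have hsize := congrArg size hshape
    rwa [size_shape, size_shape] at hsize
  let enumS := hs.1.getEquivOfForallMemList _ hs.2
  let enumT := ht.1.getEquivOfForallMemList _ ht.2
  refine ⟨(enumS.symm.trans (finCongr hlen)).trans enumT, ext_shape_labels (by simpa) ?_⟩
  rw [labels_map]
  refine List.ext_getElem (by simpa) fun i hi hi' => ?_
  have hget : s.labels[i]'(hlen ▸ hi') = enumS ⟨i, hlen ▸ hi'⟩ := rfl
  rw [List.getElem_map, hget, Equiv.trans_apply, Equiv.trans_apply, Equiv.symm_apply_apply]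
  rfl

end PlaneTree

open PlaneTree

/-- The orderings of the vertex set `Fin n`. -/
abbrev VertexOrder (n : ℕ) : Type := {l : List (Fin n) // l.Nodup ∧ ∀ v, v ∈ l}

/-- Plane trees in which every element of `Fin n` labels exactly one vertex. -/
abbrev LabelledTree (n : ℕ) : Type :=
  {t : PlaneTree (Fin n) // t.labels.Nodup ∧ ∀ v, v ∈ t.labels}

namespace VertexOrder

variable {n : ℕ}

theorem length_eq (l : VertexOrder n) : l.1.length = n := by
  have huniv : l.1.toFinset = Finset.univ := by
    ext v
    simp [l.2.2 v]
  rw [← List.toFinset_card_of_nodup l.2.1, huniv, Finset.card_fin]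

instance : Finite (VertexOrder n) :=
  Finite.of_injective (fun l : VertexOrder n => (⟨l.1, l.2.1⟩ : {l : List (Fin n) // l.Nodup}))
    fun _ _ h => Subtype.ext (Subtype.mk.inj h)

noncomputable instance : Fintype (VertexOrder n) := Fintype.ofFinite _

instance : Nonempty (VertexOrder n) :=
  ⟨⟨List.finRange n, List.nodup_finRange n, List.mem_finRange⟩⟩

end VertexOrder

namespace LabelledTree

variable {n : ℕ}

theorem shape_mem_treesOfSize (t : LabelledTree n) : t.1.shape ∈ treesOfSize n := by
  rw [mem_treesOfSize, size_shape]
  exact VertexOrder.length_eq ⟨t.1.labels, t.2⟩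

/-- A labelled plane tree amounts to its shape together with its labels, read off in preorder. -/
noncomputable def equivShapeOrder (n : ℕ) :
    LabelledTree n ≃ {t // t ∈ treesOfSize n} × VertexOrder n :=
  Equiv.ofBijective (fun t => (⟨t.1.shape, t.shape_mem_treesOfSize⟩, ⟨t.1.labels, t.2⟩)) <| by
    refine ⟨fun s t h => ?_, fun ⟨⟨t, ht⟩, l⟩ => ?_⟩
    · simp only [Prod.mk.injEq, Subtype.mk.injEq] at h
      exact Subtype.ext (ext_shape_labels h.1 h.2)
    · obtain ⟨s, hshape, hlabels⟩ :=
        exists_shape_eq_labels_eq t l.1 (l.length_eq.trans (mem_treesOfSize.1 ht).symm)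
      exact ⟨⟨s, hlabels ▸ l.2⟩, Prod.ext (Subtype.ext (hshape.trans t.shape_eq_self))
        (Subtype.ext hlabels)⟩

instance : Finite (LabelledTree n) := Finite.of_equiv _ (equivShapeOrder n).symm

noncomputable instance : Fintype (LabelledTree n) := Fintype.ofFinite _

theorem sum_shape (f : PlaneTree Unit → ℝ) : ∑ t : LabelledTree n, f t.1.shape =
    Fintype.card (VertexOrder n) * ∑ t ∈ treesOfSize n, f t := by
  rw [← Finset.sum_coe_sort (treesOfSize n), Finset.mul_sum,
    Fintype.sum_equiv (equivShapeOrder n) (fun t => f t.1.shape) (fun q => f q.1) fun _ => rfl,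
    Fintype.sum_prod_type]
  simp

/-- The rooted labelled tree obtained by forgetting the order of the children. -/
noncomputable def toUBTree (t : LabelledTree n) : UBTree n :=
  let T : RTree n := ⟨t.1.toGraph, isTree_toGraph t.2.1 t.2.2, t.1.root⟩
  ⟨T, fun v => (Represents.toGraph t.2.1).outdeg_le_two (T := T) rfl (t.2.2 v)⟩

theorem toUBTree_eq_iff {t : LabelledTree n} {T : UBTree n} :
    t.toUBTree = T ↔ Represents T.1.graph none t.1 ∧ t.1.root = T.1.root := by
  constructor
  · rintro rfl
    exact ⟨Represents.toGraph t.2.1, rfl⟩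
  · rintro ⟨hgraph, hroot⟩
    obtain ⟨⟨G, hG, r⟩, hT⟩ := T
    obtain rfl : t.1.toGraph = G := hgraph.toGraph_eq t.2.1 t.2.2
    subst hroot
    rfl

theorem card_toUBTree_eq (T : UBTree n) :
    (Finset.univ.filter fun t : LabelledTree n => t.toUBTree = T).card = ubWeight T := by
  obtain ⟨t, hroot, ht⟩ := exists_represents T
  rw [ht.ubWeight_eq hroot, classSize]
  congr 1
  refine Finset.card_bij (fun s _ => s.1) (fun s hs => ?_) (fun _ _ _ _ => Subtype.ext)
    fun s hs => ?_
  · rw [ht.mem_rearrangements_iff, hroot]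
    exact toUBTree_eq_iff.1 (Finset.mem_filter.1 hs).2
  · rw [ht.mem_rearrangements_iff, hroot] at hs
    refine ⟨⟨s, hs.1.nodup_labels T.1.isTree hs.2,
      hs.1.mem_labels_of_connected T.1.isTree.connected⟩, ?_, rfl⟩
    exact Finset.mem_filter.2 ⟨Finset.mem_univ _, toUBTree_eq_iff.2 hs⟩

theorem isom_toUBTree_of_map_mem_rearrangements {s t : LabelledTree n} {σ : Equiv.Perm (Fin n)}
    (h : s.1.map σ ∈ t.1.rearrangements) : s.toUBTree.1.Isom t.toUBTree.1 := by
  have ht := toUBTree_eq_iff (t := t).1 rfl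
  have hs := toUBTree_eq_iff (t := s).1 rfl
  have hσ := ht.1.mem_rearrangements_iff.1 h
  refine ⟨⟨σ, fun {u w} => ?_⟩, (root_map σ s.1).symm.trans hσ.2⟩
  rw [hσ.1.adj_iff_mem_edges (hσ.1.mem_labels_of_connected t.toUBTree.1.isTree.connected),
    hs.1.adj_iff_mem_edges s.2.2, edges_map, ← Sym2.map_mk,
    List.mem_map_of_injective (Sym2.map.injective σ.injective)]

theorem isom_toUBTree_iff {s t : LabelledTree n} : s.toUBTree.1.Isom t.toUBTree.1 ↔
    s.1.shape.rearrangements = t.1.shape.rearrangements := by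
  have hs := toUBTree_eq_iff (t := s).1 rfl
  have ht := toUBTree_eq_iff (t := t).1 rfl
  rw [← mem_rearrangements_iff, shape, shape, ← image_map_rearrangements, Finset.mem_image]
  constructor
  · rintro ⟨φ, hφ⟩
    exact ⟨s.1.map φ, ht.1.mem_rearrangements_iff.2 ⟨hs.1.map φ, (root_map _ _).trans hφ⟩,
      shape_map _ _⟩
  · rintro ⟨u, hu, hshape⟩
    have hperm := labels_perm_of_mem_rearrangements hu
    obtain ⟨σ, rfl⟩ := exists_perm_map_eq hshape.symm s.2
      ⟨hperm.nodup_iff.2 t.2.1, fun v => hperm.mem_iff.2 (t.2.2 v)⟩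
    exact isom_toUBTree_of_map_mem_rearrangements hu

theorem sum_ubWeight_mul (f : UBTree n → ℝ) :
    ∑ T, ubWeight T * f T = ∑ t : LabelledTree n, f t.toUBTree := by
  rw [← Finset.sum_fiberwise_of_maps_to fun t _ => Finset.mem_univ (toUBTree t)]
  refine Finset.sum_congr rfl fun T _ => ?_
  rw [← card_toUBTree_eq, ← nsmul_eq_mul, ← Finset.sum_const]
  refine Finset.sum_congr rfl fun t ht => ?_
  rw [(Finset.mem_filter.1 ht).2]

end LabelledTree

theorem sum_ubWeight (n : ℕ) :
    ∑ T : UBTree n, ubWeight T = Fintype.card (VertexOrder n) * classMoment 0 n := by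
  have hsum := LabelledTree.sum_ubWeight_mul (n := n) fun _ => 1
  rw [LabelledTree.sum_shape fun _ => 1] at hsum
  simpa [classMoment] using hsum

theorem sum_ubWeight_mul_of_isom (n : ℕ) :
    (∑ p : UBTree n × UBTree n, if p.1.1.Isom p.2.1 then ubWeight p.1 * ubWeight p.2 else 0) =
      Fintype.card (VertexOrder n) ^ 2 * classMoment 1 n := by
  calc _ = ∑ S : UBTree n, ubWeight S *
        ∑ T : UBTree n, ubWeight T * if S.1.Isom T.1 then (1 : ℝ) else 0 := by
        rw [Fintype.sum_prod_type]
        simp only [Finset.mul_sum, mul_ite, mul_one, mul_zero]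
    _ = ∑ s : LabelledTree n, ∑ t : LabelledTree n,
        if s.1.shape.rearrangements = t.1.shape.rearrangements then 1 else 0 := by
        simp only [LabelledTree.sum_ubWeight_mul, LabelledTree.isom_toUBTree_iff]
    _ = Fintype.card (VertexOrder n) * ∑ s ∈ treesOfSize n, Fintype.card (VertexOrder n) *
        ∑ t ∈ treesOfSize n, if s.rearrangements = t.rearrangements then (1 : ℝ) else 0 := by
        rw [← LabelledTree.sum_shape]
        refine Finset.sum_congr rfl fun s _ => ?_
        rw [← LabelledTree.sum_shape]
    _ = _ := by
        simp only [← Finset.mul_sum, classMoment_add_one_eq_sum_sum 0 n, pow_zero]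
        ring

theorem probIsomUB_eq (n : ℕ) : probIsomUB n = classMoment 1 n / classMoment 0 n ^ 2 := by
  have : (0 : ℝ) < Fintype.card (VertexOrder n) := by exact_mod_cast Fintype.card_pos
  rw [probIsomUB, sum_ubWeight_mul_of_isom, sum_ubWeight, mul_pow,
    mul_div_mul_left _ _ (by positivity)]

/-! ### Power series and holomorphic functions on discs -/

section PowerSeries

open PowerSeries Filter Topology Metric

/-- The power series `f` converges at `z` to `v`. -/
def HasSumAt (f : PowerSeries ℂ) (z v : ℂ) : Prop := HasSum (fun n => coeff n f * z ^ n) v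

namespace HasSumAt

variable {f g : PowerSeries ℂ} {z v w : ℂ}

theorem sub (hf : HasSumAt f z v) (hg : HasSumAt g z w) : HasSumAt (f - g) z (v - w) := by
  unfold HasSumAt at *
  simpa [sub_mul] using hf.sub hg

theorem mul (hf : HasSumAt f z v) (hg : HasSumAt g z w) : HasSumAt (f * g) z (v * w) := by
  unfold HasSumAt at *
  have hprod := (summable_norm_sum_mul_antidiagonal_of_summable_norm
    hf.summable.norm hg.summable.norm).of_norm.hasSum
  rw [← tsum_mul_tsum_eq_tsum_sum_antidiagonal_of_summable_norm hf.summable.norm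
    hg.summable.norm, hf.tsum_eq, hg.tsum_eq] at hprod
  refine hprod.congr_fun fun n => ?_
  rw [coeff_mul, Finset.sum_mul]
  refine Finset.sum_congr rfl fun p hp => ?_
  rw [← Finset.HasAntidiagonal.mem_antidiagonal.1 hp, pow_add]
  ring

theorem C (a z : ℂ) : HasSumAt (PowerSeries.C a) z a := by
  simpa [HasSumAt] using hasSum_single (f := fun n => coeff n (PowerSeries.C a) * z ^ n) 0
    fun n hn => by simp [coeff_C, hn]

theorem X (z : ℂ) : HasSumAt PowerSeries.X z z := by
  simpa [HasSumAt] using hasSum_single (f := fun n => coeff n PowerSeries.X * z ^ n) 1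
    fun n hn => by simp [coeff_X, hn]

theorem one (z : ℂ) : HasSumAt 1 z 1 := by simpa using C 1 z

theorem pow (hf : HasSumAt f z v) (n : ℕ) : HasSumAt (f ^ n) z (v ^ n) := by
  induction n with
  | zero => simpa using one z
  | succ n ih => simpa only [pow_succ] using ih.mul hf

theorem expand {p : ℕ} (hp : p ≠ 0) (hf : HasSumAt f (z ^ p) v) :
    HasSumAt (PowerSeries.expand p hp f) z v := by
  have hinj : Function.Injective (p * ·) := mul_right_injective₀ hp
  refine (hinj.hasSum_iff fun n hn => ?_).1 (hf.congr_fun fun n => ?_)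
  · rw [coeff_expand_of_not_dvd _ _ _ fun ⟨m, hm⟩ => hn ⟨m, hm.symm⟩, zero_mul]
  · simp only [Function.comp_apply, coeff_expand_mul, pow_mul]

theorem eq_constantCoeff (h : HasSumAt f 0 v) : v = constantCoeff f := by
  have hzero := hasSum_single (f := fun n => coeff n f * (0 : ℂ) ^ n) 0 fun n hn => by simp [hn]
  simpa using HasSum.unique h hzero

theorem hasFPowerSeriesAt {F : ℂ → ℂ} (hf : ∀ᶠ z in 𝓝 0, HasSumAt f z (F z)) :
    HasFPowerSeriesAt F (FormalMultilinearSeries.ofScalars ℂ fun n => coeff n f) 0 := by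
  rw [hasFPowerSeriesAt_iff]
  filter_upwards [hf] with z hz
  unfold HasSumAt at hz
  simpa [FormalMultilinearSeries.coeff_ofScalars, mul_comm] using hz

theorem eq_of_eventually {F : ℂ → ℂ} (hf : ∀ᶠ z in 𝓝 0, HasSumAt f z (F z))
    (hg : ∀ᶠ z in 𝓝 0, HasSumAt g z (F z)) : f = g := by
  have heq := (hasFPowerSeriesAt hf).eq_formalMultilinearSeries (hasFPowerSeriesAt hg)
  ext n
  simpa [FormalMultilinearSeries.coeff_ofScalars] using
    congrArg (fun p => FormalMultilinearSeries.coeff p n) heq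

end HasSumAt

theorem exists_hasSumAt_of_differentiableOn {F : ℂ → ℂ} {R : ℝ}
    (hF : DifferentiableOn ℂ F (ball 0 R)) :
    ∃ f : PowerSeries ℂ, ∀ z ∈ ball (0 : ℂ) R, HasSumAt f z (F z) := by
  refine ⟨.mk fun n => (n.factorial : ℂ)⁻¹ * iteratedDeriv n F 0, fun z hz => ?_⟩
  refine (Complex.hasSum_taylorSeries_on_ball hF hz).congr_fun fun n => ?_
  simp only [coeff_mk, sub_zero, smul_eq_mul]
  ring

theorem exists_exp_eq_of_ne_zero {f : ℂ → ℂ} {c : ℂ} {R : ℝ}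
    (hf : DifferentiableOn ℂ f (ball c R)) (hne : ∀ z ∈ ball c R, f z ≠ 0) :
    ∃ g : ℂ → ℂ, DifferentiableOn ℂ g (ball c R) ∧ g c = Complex.log (f c) ∧
      ∀ z ∈ ball c R, Complex.exp (g z) = f z := by
  have hlogDeriv : DifferentiableOn ℂ (fun z => deriv f z / f z) (ball c R) :=
    (hf.deriv isOpen_ball).div hf hne
  obtain ⟨g, hg, hgc⟩ := hlogDeriv.isExactOn_ball.with_val_at c (Complex.log (f c))
  refine ⟨g, fun z hz => (hgc z hz).differentiableAt.differentiableWithinAt, hg, fun z hz => ?_⟩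
  have hderiv (z : ℂ) (hz : z ∈ ball c R) :
      HasDerivAt (fun z => f z * Complex.exp (-g z)) 0 z := by
    have hfz := (hf.differentiableAt (isOpen_ball.mem_nhds hz)).hasDerivAt
    refine (hfz.mul (hgc z hz).neg.cexp).congr_deriv ?_
    field_simp [hne z hz]
    simp
  have hc : c ∈ ball c R := mem_ball_self (nonempty_ball.1 ⟨z, hz⟩)
  have hconst := isOpen_ball.is_const_of_deriv_eq_zero (convex_ball c R).isPreconnected
    (fun z hz => (hderiv z hz).differentiableAt.differentiableWithinAt)
    (fun z hz => (hderiv z hz).deriv) hz hc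
  rw [hg, Complex.exp_neg, Complex.exp_neg, Complex.exp_log (hne c hc),
    mul_inv_cancel₀ (hne c hc)] at hconst
  exact (eq_of_mul_inv_eq_one hconst).symm

theorem exists_ball_forall_ne_zero {f : ℂ → ℂ} {R ρ : ℝ} (hρ : 0 ≤ ρ) (hR : ρ < R)
    (hf : ContinuousOn f (ball 0 R)) (hne : ∀ z, ‖z‖ ≤ ρ → f z ≠ 0) :
    ∃ R', ρ < R' ∧ R' ≤ R ∧ ∀ z ∈ ball (0 : ℂ) R', f z ≠ 0 := by
  have hopen : IsOpen (ball (0 : ℂ) R ∩ f ⁻¹' {0}ᶜ) :=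
    hf.isOpen_inter_preimage isOpen_ball isOpen_compl_singleton
  have hsub : closedBall (0 : ℂ) ρ ⊆ ball (0 : ℂ) R ∩ f ⁻¹' {0}ᶜ := fun z hz =>
    ⟨closedBall_subset_ball hR hz, hne z (mem_closedBall_zero_iff.1 hz)⟩
  obtain ⟨ε, hε, hthick⟩ :=
    (isCompact_closedBall (0 : ℂ) ρ).exists_thickening_subset_open hopen hsub
  rw [thickening_closedBall hε hρ] at hthick
  exact ⟨min (ε + ρ) R, lt_min (by linarith) hR, min_le_right _ _, fun z hz =>
    (hthick (ball_subset_ball (min_le_left _ _) hz)).2⟩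

theorem exists_sq_eq_of_ne_zero {E : PowerSeries ℂ} {F : ℂ → ℂ} {R ρ : ℝ} (hρ : 0 < ρ) (hR : ρ < R)
    (hE : ∀ z ∈ ball (0 : ℂ) R, HasSumAt E z (F z)) (hF : DifferentiableOn ℂ F (ball 0 R))
    (hE0 : constantCoeff E = 1) (hne : ∀ z, ‖z‖ ≤ ρ → F z ≠ 0) :
    ∃ (R' : ℝ) (q : PowerSeries ℂ) (Q : ℂ → ℂ), ρ < R' ∧ constantCoeff q = 1 ∧ q ^ 2 = E ∧
      ∀ z ∈ ball (0 : ℂ) R', HasSumAt q z (Q z) ∧ Q z ^ 2 = F z := by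
  obtain ⟨R', hρR', hR'R, hne'⟩ := exists_ball_forall_ne_zero hρ.le hR hF.continuousOn hne
  have hsub : ball (0 : ℂ) R' ⊆ ball 0 R := ball_subset_ball hR'R
  have hzero : (0 : ℂ) ∈ ball (0 : ℂ) R' := mem_ball_self (hρ.trans hρR')
  obtain ⟨g, hg, hg0, hexp⟩ := exists_exp_eq_of_ne_zero (hF.mono hsub) hne'
  obtain ⟨q, hq⟩ := exists_hasSumAt_of_differentiableOn (hg.div_const 2).cexp
  have hsq (z : ℂ) (hz : z ∈ ball (0 : ℂ) R') : Complex.exp (g z / 2) ^ 2 = F z := by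
    rw [← Complex.exp_nat_mul, Nat.cast_ofNat, mul_div_cancel₀ _ two_ne_zero, hexp z hz]
  refine ⟨R', q, _, hρR', ?_, ?_, fun z hz => ⟨hq z hz, hsq z hz⟩⟩
  · rw [← (hq 0 hzero).eq_constantCoeff, hg0, (hE 0 (hsub hzero)).eq_constantCoeff, hE0]
    simp
  · refine HasSumAt.eq_of_eventually (F := F) ?_ ?_ <;>
      filter_upwards [isOpen_ball.mem_nhds hzero] with z hz
    · rw [← hsq z hz]
      exact (hq z hz).pow 2
    · exact hE z (hsub hz)

theorem powerSeries_eq_of_sq_eq {f g : PowerSeries ℂ} (h : f ^ 2 = g ^ 2)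
    (hf : constantCoeff f = 1) (hg : constantCoeff g = 1) : f = g := by
  refine (sq_eq_sq_iff_eq_or_eq_neg.1 h).resolve_right fun hneg => ?_
  have hcoeff := congrArg constantCoeff hneg
  rw [map_neg, hf, hg] at hcoeff
  norm_num at hcoeff

end PowerSeries

/-! ### Sequences with polynomial asymptotics -/

section RegularVariation

open Filter Topology Asymptotics

theorem isEquivalent_natCast_add_rpow (α : ℝ) (j : ℕ) :
    (fun n : ℕ => ((n : ℝ) + j) ^ α) ~[atTop] fun n : ℕ => (n : ℝ) ^ α := by
  refine IsEquivalent.rpow (fun n => n.cast_nonneg) ?_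
  exact IsEquivalent.refl.add_isLittleO
    ((isLittleO_const_id_atTop (j : ℝ)).comp_tendsto tendsto_natCast_atTop_atTop)

theorem tendsto_add_rpow_smul_iff {E : Type*} [NormedAddCommGroup E] [NormedSpace ℝ E] {b : ℕ → E}
    {c : E} (α : ℝ) (j : ℕ) :
    Tendsto (fun n : ℕ => ((n : ℝ) + j) ^ α • b n) atTop (𝓝 c) ↔
      Tendsto (fun n : ℕ => (n : ℝ) ^ α • b n) atTop (𝓝 c) :=
  ((isEquivalent_natCast_add_rpow α j).smul .refl).tendsto_nhds_iff

theorem exists_add_one_rpow_mul_norm_le {E : Type*} [NormedAddCommGroup E] [NormedSpace ℝ E]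
    {b : ℕ → E} {c : E} {α : ℝ} (hb : Tendsto (fun n : ℕ => (n : ℝ) ^ α • b n) atTop (𝓝 c)) :
    ∃ B, ∀ n : ℕ, ((n : ℝ) + 1) ^ α * ‖b n‖ ≤ B := by
  obtain ⟨B, hB⟩ := ((tendsto_add_rpow_smul_iff α 1).2 hb).norm.bddAbove_range
  refine ⟨B, fun n => ?_⟩
  simpa [norm_smul, abs_of_nonneg (Real.rpow_nonneg n.cast_add_one_pos.le α)] using hB ⟨n, rfl⟩

theorem exists_add_one_rpow_le_mul_pow (α : ℝ) {s : ℝ} (hs : 1 < s) :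
    ∃ K, ∀ n : ℕ, ((n : ℝ) + 1) ^ α ≤ K * s ^ n := by
  have hlim := (tendsto_rpow_mul_exp_neg_mul_atTop_nhds_zero α _ (Real.log_pos hs)).comp
    tendsto_natCast_atTop_atTop
  have hlim' : Tendsto (fun n : ℕ => (n : ℝ) ^ α • (s ^ n)⁻¹) atTop (𝓝 0) := by
    refine hlim.congr fun n => ?_
    simp [Real.exp_neg, mul_comm (Real.log s), Real.exp_nat_mul,
      Real.exp_log (zero_lt_one.trans hs)]
  obtain ⟨K, hK⟩ := exists_add_one_rpow_mul_norm_le hlim'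
  refine ⟨K, fun n => ?_⟩
  have hpow : 0 < s ^ n := by positivity
  have := hK n
  rwa [Real.norm_of_nonneg (by positivity), ← div_eq_mul_inv, div_le_iff₀ hpow] at this

theorem natCast_rpow_le_mul {α : ℝ} (hα : 0 ≤ α) {j n : ℕ} (hj : j ≤ n) :
    (n : ℝ) ^ α ≤ (((n - j : ℕ) : ℝ) + 1) ^ α * ((j : ℝ) + 1) ^ α := by
  obtain ⟨m, rfl⟩ := Nat.exists_eq_add_of_le hj
  rw [← Real.mul_rpow (by positivity) (by positivity), Nat.add_sub_cancel_left]
  refine Real.rpow_le_rpow (by positivity) ?_ hα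
  push_cast
  nlinarith [mul_nonneg (Nat.cast_nonneg (α := ℝ) m) (Nat.cast_nonneg (α := ℝ) j)]

theorem norm_rpow_smul_mul_sub_le {A : Type*} [NormedRing A] [NormedAlgebra ℝ A] {b : ℕ → A}
    {α B K s : ℝ} (hα : 0 ≤ α) (hB : ∀ n : ℕ, ((n : ℝ) + 1) ^ α * ‖b n‖ ≤ B)
    (hK : ∀ n : ℕ, ((n : ℝ) + 1) ^ α ≤ K * s ^ n) (x : A) {j n : ℕ} (hj : j ≤ n) :
    ‖(n : ℝ) ^ α • (x * b (n - j))‖ ≤ B * K * (‖x‖ * s ^ j) := by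
  have hBn := hB (n - j)
  have : 0 ≤ K * s ^ j := le_trans (by positivity) (hK j)
  calc ‖(n : ℝ) ^ α • (x * b (n - j))‖
    _ ≤ (n : ℝ) ^ α * (‖x‖ * ‖b (n - j)‖) := by
        rw [norm_smul, Real.norm_of_nonneg (by positivity)]
        gcongr
        exact norm_mul_le _ _
    _ ≤ ((((n - j : ℕ) : ℝ) + 1) ^ α * ((j : ℝ) + 1) ^ α) * (‖x‖ * ‖b (n - j)‖) := by
        gcongr
        exact natCast_rpow_le_mul hα hj
    _ = ((((n - j : ℕ) : ℝ) + 1) ^ α * ‖b (n - j)‖) * (((j : ℝ) + 1) ^ α * ‖x‖) := by ring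
    _ ≤ B * ((K * s ^ j) * ‖x‖) := by
        gcongr
        exacts [le_trans (by positivity) hBn, hK j]
    _ = _ := by ring

theorem tendsto_rpow_smul_sum_antidiagonal_mul {A : Type*} [NormedRing A] [NormedAlgebra ℝ A]
    [CompleteSpace A] {η b : ℕ → A} {c : A} {α s : ℝ} (hα : 0 ≤ α) (hs : 1 < s)
    (hη : Summable fun n => ‖η n‖ * s ^ n)
    (hb : Tendsto (fun n : ℕ => (n : ℝ) ^ α • b n) atTop (𝓝 c)) :
    Tendsto (fun n : ℕ => (n : ℝ) ^ α • ∑ p ∈ Finset.HasAntidiagonal.antidiagonal n, η p.1 * b p.2)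
      atTop (𝓝 ((∑' n, η n) * c)) := by
  obtain ⟨B, hB⟩ := exists_add_one_rpow_mul_norm_le hb
  obtain ⟨K, hK⟩ := exists_add_one_rpow_le_mul_pow α hs
  let term (n j : ℕ) : A := if j ≤ n then (n : ℝ) ^ α • (η j * b (n - j)) else 0
  have hterm_tendsto (j : ℕ) : Tendsto (term · j) atTop (𝓝 (η j * c)) := by
    rw [← tendsto_add_atTop_iff_nat j]
    refine (((tendsto_add_rpow_smul_iff α j).2 hb).const_mul (η j)).congr fun n => ?_
    simp [term]
  have hterm_le (n j : ℕ) : ‖term n j‖ ≤ B * K * (‖η j‖ * s ^ j) := by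
    by_cases hj : j ≤ n
    · rw [show term n j = _ from if_pos hj]
      exact norm_rpow_smul_mul_sub_le hα hB hK (η j) hj
    · rw [show term n j = 0 from if_neg hj, norm_zero]
      have hB0 : 0 ≤ B := le_trans (by positivity) (hB 0)
      have : 0 ≤ K := le_trans (by positivity) ((hK 0).trans_eq (by simp))
      positivity
  have hsum (n : ℕ) : ∑' j, term n j =
      (n : ℝ) ^ α • ∑ p ∈ Finset.HasAntidiagonal.antidiagonal n, η p.1 * b p.2 := by
    rw [Finset.Nat.sum_antidiagonal_eq_sum_range_succ (fun i j => η i * b j), Finset.smul_sum,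
      tsum_eq_sum (s := Finset.range n.succ) fun j hj =>
        if_neg (by simpa [Nat.lt_succ_iff] using hj)]
    exact Finset.sum_congr rfl fun j hj => if_pos (Nat.lt_succ_iff.1 (Finset.mem_range.1 hj))
  have hηsum : Summable η := .of_norm_bounded hη fun n =>
    le_mul_of_one_le_right (norm_nonneg _) (one_le_pow₀ hs.le)
  rw [← hηsum.tsum_mul_right]
  exact (tendsto_tsum_of_dominated_convergence (hη.mul_left (B * K)) hterm_tendsto
    (.of_forall hterm_le)).congr hsum

theorem stirlingSeq_two_mul_div_sq {n : ℕ} (hn : n ≠ 0) :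
    Stirling.stirlingSeq (2 * n) / Stirling.stirlingSeq n ^ 2 =
      (n : ℝ) ^ (1 / 2 : ℝ) * (n.centralBinom / 4 ^ n) := by
  have hchoose : (n.centralBinom : ℝ) = (2 * n).factorial / (n.factorial : ℝ) ^ 2 := by
    rw [Nat.centralBinom_eq_two_mul_choose, Nat.cast_choose ℝ (by omega),
      show 2 * n - n = n by omega, sq]
  have hpow : (((2 * n : ℕ) : ℝ) / Real.exp 1) ^ (2 * n) =
      4 ^ n * (((n : ℝ) / Real.exp 1) ^ n) ^ 2 := by
    rw [← pow_mul, mul_comm n 2, show (4 : ℝ) = 2 ^ 2 by norm_num, ← pow_mul, ← mul_pow]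
    push_cast
    ring
  have hsqrt : √(2 * ((2 * n : ℕ) : ℝ)) = 2 * √n := by
    rw [show 2 * ((2 * n : ℕ) : ℝ) = 2 ^ 2 * n by push_cast; ring,
      Real.sqrt_mul (by norm_num), Real.sqrt_sq (by norm_num)]
  have hn0 : (0 : ℝ) < n := by positivity
  rw [Stirling.stirlingSeq, Stirling.stirlingSeq, hpow, hsqrt, hchoose, ← Real.sqrt_eq_rpow,
    div_pow (n.factorial : ℝ), mul_pow, Real.sq_sqrt (by positivity)]
  field_simp
  rw [Real.sq_sqrt hn0.le]

theorem tendsto_centralBinom : Tendsto (fun n : ℕ => (n : ℝ) ^ (1 / 2 : ℝ) *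
    (n.centralBinom / 4 ^ n)) atTop (𝓝 (1 / √Real.pi)) := by
  have hpi : √Real.pi ≠ 0 := by positivity
  have hlim := (Stirling.tendsto_stirlingSeq_sqrt_pi.comp (tendsto_id.const_mul_atTop' two_pos)).div
    (Stirling.tendsto_stirlingSeq_sqrt_pi.pow 2) (pow_ne_zero 2 hpi)
  rw [show √Real.pi / √Real.pi ^ 2 = 1 / √Real.pi by field_simp] at hlim
  refine hlim.congr' ?_
  filter_upwards [eventually_ne_atTop 0] with n hn
  exact stirlingSeq_two_mul_div_sq hn

theorem tendsto_div_sq_div_mul_pow {u v : ℕ → ℝ} {U V α r s : ℝ}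
    (hu : Tendsto (fun n : ℕ => (n : ℝ) ^ α * (u n * r ^ n)) atTop (𝓝 U))
    (hv : Tendsto (fun n : ℕ => (n : ℝ) ^ α * (v n * s ^ n)) atTop (𝓝 V))
    (hV : V ≠ 0) (hs : s ≠ 0) :
    Tendsto (fun n : ℕ => u n / v n ^ 2 / ((n : ℝ) ^ α * (s ^ 2 / r) ^ n)) atTop
      (𝓝 (U / V ^ 2)) := by
  refine (hu.div (hv.pow 2) (pow_ne_zero 2 hV)).congr' ?_
  filter_upwards [eventually_gt_atTop 0] with n hn
  have hpow : (n : ℝ) ^ α ≠ 0 := (Real.rpow_pos_of_pos (Nat.cast_pos.2 hn) α).ne'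
  have hsn : s ^ n ≠ 0 := pow_ne_zero n hs
  rw [div_pow, ← pow_mul, mul_comm 2 n, pow_mul]
  rcases eq_or_ne (v n) 0 with hvn | hvn
  · simp [hvn]
  rcases eq_or_ne (r ^ n) 0 with hrn | hrn
  · simp [hrn]
  · simp only [Pi.div_apply]
    field_simp

end RegularVariation

section SqrtSeries

open PowerSeries Filter Topology

/-- The power series of `√(1 - 4 X)`, through the generating function of the Catalan numbers. -/
noncomputable def sqrtSeries : PowerSeries ℂ :=
  1 - 2 * X * catalanSeries.map (Nat.castRingHom ℂ)

theorem sqrtSeries_sq : sqrtSeries ^ 2 = 1 - 4 * X := by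
  have hcatalan := congrArg (PowerSeries.map (Nat.castRingHom ℂ)) catalanSeries_sq_mul_X_add_one
  simp only [map_add, map_mul, map_pow, map_X, map_one] at hcatalan
  unfold sqrtSeries
  linear_combination (4 * X) * hcatalan

theorem constantCoeff_sqrtSeries : constantCoeff sqrtSeries = 1 := by simp [sqrtSeries]

theorem coeff_succ_sqrtSeries (n : ℕ) : coeff (n + 1) sqrtSeries = -2 * catalan n := by
  rw [sqrtSeries, ← map_ofNat (PowerSeries.C (R := ℂ)), mul_assoc, map_sub, coeff_C_mul,
    coeff_succ_X_mul]
  simp [coeff_one]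

theorem tendsto_coeff_sqrtSeries : Tendsto (fun n : ℕ => (n : ℝ) ^ (3 / 2 : ℝ) •
    (coeff n sqrtSeries / 4 ^ n)) atTop (𝓝 ((-(1 / (2 * √Real.pi)) : ℝ) : ℂ)) := by
  rw [← tendsto_add_atTop_iff_nat 1]
  have hlim := ((tendsto_add_rpow_smul_iff _ 1).2 tendsto_centralBinom).const_mul (-(1 / 2))
  rw [show -(1 / 2) * (1 / √Real.pi) = -(1 / (2 * √Real.pi)) by ring] at hlim
  refine ((Complex.continuous_ofReal.tendsto _).comp hlim).congr fun n => ?_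
  have hcatalan : (n.centralBinom : ℝ) = (n + 1) * catalan n := by
    exact_mod_cast (succ_mul_catalan_eq_centralBinom n).symm
  have hrpow : ((n + 1 : ℕ) : ℝ) ^ (3 / 2 : ℝ) = (n + 1) ^ (1 / 2 : ℝ) * (n + 1) := by
    rw [Nat.cast_add_one, ← Real.rpow_add_one (by positivity)]
    norm_num
  rw [coeff_succ_sqrtSeries, hrpow]
  simp only [Function.comp, smul_eq_mul, hcatalan, Complex.real_smul]
  push_cast
  ring

end SqrtSeries

section SquareRootSingularity

open PowerSeries Filter Topology Metric

theorem rescale_sqrtSeries_sq (c : ℂ) :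
    rescale (c / 4) sqrtSeries ^ 2 = 1 - PowerSeries.C c * X := by
  rw [← map_pow, sqrtSeries_sq, map_sub, map_mul, map_one, map_ofNat, rescale_X, ← mul_assoc,
    ← map_ofNat (PowerSeries.C (R := ℂ)), ← map_mul, mul_div_cancel₀ c (by norm_num)]

theorem constantCoeff_rescale_sqrtSeries (c : ℂ) :
    constantCoeff (rescale c sqrtSeries) = 1 := by
  rw [← coeff_zero_eq_constantCoeff_apply, coeff_rescale, pow_zero, one_mul,
    coeff_zero_eq_constantCoeff_apply, constantCoeff_sqrtSeries]

theorem exists_eq_mul_of_simple_zero {D : ℂ → ℂ} {ρ : ℂ} {R : ℝ} (hρ : ρ ≠ 0) (hR : ρ ∈ ball 0 R)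
    (hD : DifferentiableOn ℂ D (ball 0 R)) (hzero : D ρ = 0) (hderiv : deriv D ρ ≠ 0) :
    ∃ F : ℂ → ℂ, DifferentiableOn ℂ F (ball 0 R) ∧ F ρ ≠ 0 ∧ ∀ z, D z = (1 - ρ⁻¹ * z) * F z := by
  refine ⟨fun z => -ρ * dslope D ρ z,
    ((Complex.differentiableOn_dslope (isOpen_ball.mem_nhds hR)).2 hD).const_mul _, ?_,
    fun z => ?_⟩
  · simpa [hρ] using hderiv
  · have hslope := sub_smul_dslope D ρ z
    rw [hzero, sub_zero, smul_eq_mul] at hslope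
    rw [← hslope]
    field_simp
    ring

variable {y : PowerSeries ℂ} {D : ℂ → ℂ} {R ρ : ℝ}

theorem exists_eq_mul_rescale_sqrtSeries (hρ : 0 < ρ) (hR : ρ < R) (hy : constantCoeff y = 1)
    (hyD : ∀ z ∈ ball (0 : ℂ) R, HasSumAt (y ^ 2) z (D z)) (hD : DifferentiableOn ℂ D (ball 0 R))
    (hzero : D ρ = 0) (hderiv : deriv D ρ ≠ 0) (hne : ∀ z : ℂ, ‖z‖ ≤ ρ → z ≠ ρ → D z ≠ 0) :
    ∃ (R' : ℝ) (q : PowerSeries ℂ) (Q : ℂ → ℂ), ρ < R' ∧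
      y = q * rescale ((ρ : ℂ)⁻¹ / 4) sqrtSeries ∧
      (∀ z ∈ ball (0 : ℂ) R', HasSumAt q z (Q z)) ∧ Q ρ ≠ 0 := by
  have hρmem (r : ℝ) (hr : ρ < r) : (ρ : ℂ) ∈ ball (0 : ℂ) r := by simpa [abs_of_pos hρ] using hr
  have hmem : (0 : ℂ) ∈ ball (0 : ℂ) R := mem_ball_self (hρ.trans hR)
  obtain ⟨F, hF, hFρ, hDF⟩ := exists_eq_mul_of_simple_zero (by exact_mod_cast hρ.ne')
    (hρmem R hR) hD hzero hderiv
  have hFne (z : ℂ) (hz : ‖z‖ ≤ ρ) : F z ≠ 0 := by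
    rcases eq_or_ne z ρ with rfl | hzρ
    · exact hFρ
    · exact right_ne_zero_of_mul (hDF z ▸ hne z hz hzρ)
  obtain ⟨E, hE⟩ := exists_hasSumAt_of_differentiableOn hF
  have hfactor : y ^ 2 = (1 - PowerSeries.C (ρ : ℂ)⁻¹ * X) * E := by
    refine HasSumAt.eq_of_eventually (F := D) ?_ ?_ <;>
      filter_upwards [isOpen_ball.mem_nhds hmem] with z hz
    · exact hyD z hz
    · rw [hDF]
      exact ((HasSumAt.one z).sub ((HasSumAt.C _ z).mul (HasSumAt.X z))).mul (hE z hz)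
  have hE0 : constantCoeff E = 1 := by
    simpa [hy] using (congrArg constantCoeff hfactor).symm
  obtain ⟨R', q, Q, hρR', hq0, hqE, hq⟩ := exists_sq_eq_of_ne_zero hρ hR hE hF hE0 hFne
  refine ⟨R', q, Q, hρR', powerSeries_eq_of_sq_eq ?_ hy ?_, fun z hz => (hq z hz).1, fun hQ => ?_⟩
  · rw [hfactor, mul_pow, rescale_sqrtSeries_sq, hqE, mul_comm]
  · rw [map_mul, hq0, constantCoeff_rescale_sqrtSeries, one_mul]
  · have hQF := (hq ρ (hρmem R' hρR')).2
    rw [hQ, zero_pow two_ne_zero] at hQF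
    exact hFρ hQF.symm

theorem tendsto_coeff_mul_rescale_sqrtSeries {q : PowerSeries ℂ} {Q : ℂ → ℂ} (hρ : 0 < ρ)
    (hR : ρ < R) (hq : ∀ z ∈ ball (0 : ℂ) R, HasSumAt q z (Q z)) :
    Tendsto (fun n : ℕ => (n : ℝ) ^ (3 / 2 : ℝ) •
      (coeff n (q * rescale ((ρ : ℂ)⁻¹ / 4) sqrtSeries) * (ρ : ℂ) ^ n)) atTop
      (𝓝 (Q ρ * ((-(1 / (2 * √Real.pi)) : ℝ) : ℂ))) := by
  obtain ⟨r, hρr, hrR⟩ := exists_between hR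
  have hr : (r : ℂ) ∈ ball (0 : ℂ) R := by simpa [abs_of_pos (hρ.trans hρr)] using hrR
  have hρmem : (ρ : ℂ) ∈ ball (0 : ℂ) R := by simpa [abs_of_pos hρ] using hR
  have hsummable : Summable fun n => ‖coeff n q * (ρ : ℂ) ^ n‖ * (r / ρ) ^ n := by
    refine (hq _ hr).summable.norm.congr fun n => ?_
    simp only [norm_mul, norm_pow, Complex.norm_real, Real.norm_of_nonneg hρ.le,
      Real.norm_of_nonneg (hρ.trans hρr).le]
    rw [mul_assoc, ← mul_pow, mul_div_cancel₀ r hρ.ne']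
  have hlim := tendsto_rpow_smul_sum_antidiagonal_mul (by norm_num) ((one_lt_div hρ).2 hρr)
    hsummable tendsto_coeff_sqrtSeries
  rw [(hq ρ hρmem).tsum_eq] at hlim
  refine hlim.congr fun n => congrArg _ ?_
  rw [coeff_mul, Finset.sum_mul]
  refine Finset.sum_congr rfl fun p hp => ?_
  have hρC : (ρ : ℂ) ≠ 0 := by exact_mod_cast hρ.ne'
  rw [coeff_rescale, ← Finset.HasAntidiagonal.mem_antidiagonal.1 hp, pow_add, div_pow, inv_pow]
  field_simp

theorem exists_pos_tendsto_of_tendsto_ofReal {u : ℕ → ℝ} (hu : ∀ n, 0 ≤ u n) {w : ℂ} (hw : w ≠ 0)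
    (h : Tendsto (fun n => (u n : ℂ)) atTop (𝓝 w)) : ∃ C : ℝ, 0 < C ∧ Tendsto u atTop (𝓝 C) := by
  have hre : Tendsto u atTop (𝓝 w.re) := (Complex.continuous_re.tendsto w).comp h
  have hw_re : w = w.re := tendsto_nhds_unique h ((Complex.continuous_ofReal.tendsto _).comp hre)
  refine ⟨w.re, (ge_of_tendsto' hre hu).lt_of_ne fun h0 => hw ?_, hre⟩
  rw [hw_re, ← h0, Complex.ofReal_zero]

theorem coeff_succ_one_sub_X_sub_C_mul_X_mul (κ : ℂ) (f : PowerSeries ℂ) {n : ℕ} (hn : n ≠ 0) :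
    coeff (n + 1) (1 - X - PowerSeries.C κ * X * f) = -(κ * coeff n f) := by
  rw [mul_assoc, map_sub, map_sub, coeff_C_mul, coeff_succ_X_mul]
  simp [coeff_one, coeff_X, hn]

theorem exists_pos_tendsto_of_sq_hasSumAt {a : ℕ → ℝ} (ha : ∀ n, 0 ≤ a n) {κ : ℝ} (hκ : 0 < κ)
    (hρ : 0 < ρ) (hR : ρ < R)
    (hyD : ∀ z ∈ ball (0 : ℂ) R,
      HasSumAt ((1 - X - PowerSeries.C (κ : ℂ) * X * .mk fun n => (a n : ℂ)) ^ 2) z (D z))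
    (hD : DifferentiableOn ℂ D (ball 0 R)) (hzero : D ρ = 0) (hderiv : deriv D ρ ≠ 0)
    (hne : ∀ z : ℂ, ‖z‖ ≤ ρ → z ≠ ρ → D z ≠ 0) :
    ∃ C : ℝ, 0 < C ∧ Tendsto (fun n : ℕ => (n : ℝ) ^ (3 / 2 : ℝ) * (a n * ρ ^ n)) atTop (𝓝 C) := by
  set y : PowerSeries ℂ := 1 - X - PowerSeries.C (κ : ℂ) * X * .mk fun n => (a n : ℂ) with hy
  obtain ⟨R', q, Q, hρR', hyq, hq, hQ⟩ := exists_eq_mul_rescale_sqrtSeries hρ hR (by simp [hy])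
    hyD hD hzero hderiv hne
  have hlim := (tendsto_add_atTop_iff_nat 1).2 (tendsto_coeff_mul_rescale_sqrtSeries hρ hρR' hq)
  simp only [← hyq, Nat.cast_add] at hlim
  have hlim' := ((tendsto_add_rpow_smul_iff _ 1).1 hlim).mul_const (-(κ * ρ : ℂ)⁻¹)
  have hκρ : (κ * ρ : ℂ) ≠ 0 := by exact_mod_cast (mul_pos hκ hρ).ne'
  have hpi : (0 : ℝ) < 1 / (2 * √Real.pi) := by positivity
  refine exists_pos_tendsto_of_tendsto_ofReal (fun n => ?_) (mul_ne_zero (mul_ne_zero hQ ?_) ?_)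
    (hlim'.congr' ?_)
  · have := ha n
    positivity
  · exact_mod_cast (neg_lt_zero.2 hpi).ne
  · exact neg_ne_zero.2 (inv_ne_zero hκρ)
  · filter_upwards [eventually_ne_atTop 0] with n hn
    rw [hy, coeff_succ_one_sub_X_sub_C_mul_X_mul _ _ hn, coeff_mk, Complex.real_smul]
    push_cast
    have := left_ne_zero_of_mul hκρ
    have := right_ne_zero_of_mul hκρ
    field_simp
    ring

end SquareRootSingularity

/-! ### Generating functions with nonnegative coefficients -/

section GenFun

open PowerSeries Filter Topology Metric

/-- The sum of the power series with coefficients `a` at a real point (zero where it diverges). -/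
noncomputable def realGenFun (a : ℕ → ℝ) (x : ℝ) : ℝ := ∑' n, a n * x ^ n

/-- The sum of the power series with real coefficients `a` at a complex point (zero where it
diverges). -/
noncomputable def complexGenFun (a : ℕ → ℝ) (z : ℂ) : ℂ := ∑' n, (a n : ℂ) * z ^ n

variable {a : ℕ → ℝ} {x y : ℝ} {z : ℂ}

theorem complexGenFun_ofReal (a : ℕ → ℝ) (x : ℝ) : complexGenFun a x = realGenFun a x := by
  simp [complexGenFun, realGenFun, Complex.ofReal_tsum]

theorem summable_mul_pow_of_le (ha : ∀ n, 0 ≤ a n) (hx : 0 ≤ x) (hxy : x ≤ y)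
    (hy : Summable fun n => a n * y ^ n) : Summable fun n => a n * x ^ n :=
  hy.of_nonneg_of_le (fun n => mul_nonneg (ha n) (pow_nonneg hx n)) fun n =>
    mul_le_mul_of_nonneg_left (pow_le_pow_left₀ hx hxy n) (ha n)

theorem realGenFun_le_realGenFun (ha : ∀ n, 0 ≤ a n) (hx : 0 ≤ x) (hxy : x ≤ y)
    (hy : Summable fun n => a n * y ^ n) : realGenFun a x ≤ realGenFun a y :=
  (summable_mul_pow_of_le ha hx hxy hy).tsum_le_tsum (fun n =>
    mul_le_mul_of_nonneg_left (pow_le_pow_left₀ hx hxy n) (ha n)) hy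

theorem sum_mul_pow_le_realGenFun (ha : ∀ n, 0 ≤ a n) (hx : 0 ≤ x)
    (h : Summable fun n => a n * x ^ n) (s : Finset ℕ) :
    ∑ n ∈ s, a n * x ^ n ≤ realGenFun a x :=
  h.sum_le_tsum s fun n _ => mul_nonneg (ha n) (pow_nonneg hx n)

theorem mul_pow_le_realGenFun (ha : ∀ n, 0 ≤ a n) (hx : 0 ≤ x)
    (h : Summable fun n => a n * x ^ n) (n : ℕ) : a n * x ^ n ≤ realGenFun a x := by
  simpa using sum_mul_pow_le_realGenFun ha hx h {n}

theorem norm_ofReal_mul_pow_le (ha : ∀ n, 0 ≤ a n) (hz : ‖z‖ ≤ x) (n : ℕ) :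
    ‖(a n : ℂ) * z ^ n‖ ≤ a n * x ^ n := by
  rw [norm_mul, norm_pow, Complex.norm_of_nonneg (ha n)]
  exact mul_le_mul_of_nonneg_left (pow_le_pow_left₀ (norm_nonneg z) hz n) (ha n)

theorem norm_complexGenFun_le (ha : ∀ n, 0 ≤ a n) (h : Summable fun n => a n * x ^ n)
    (hz : ‖z‖ ≤ x) : ‖complexGenFun a z‖ ≤ realGenFun a x :=
  tsum_of_norm_bounded h.hasSum (norm_ofReal_mul_pow_le ha hz)

theorem hasSumAt_complexGenFun (ha : ∀ n, 0 ≤ a n) (h : Summable fun n => a n * x ^ n)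
    (hz : ‖z‖ ≤ x) : HasSumAt (.mk fun n => (a n : ℂ)) z (complexGenFun a z) := by
  simpa only [HasSumAt, coeff_mk, complexGenFun] using
    (Summable.of_norm_bounded h (norm_ofReal_mul_pow_le ha hz)).hasSum

theorem differentiableOn_complexGenFun (ha : ∀ n, 0 ≤ a n) (h : Summable fun n => a n * x ^ n) :
    DifferentiableOn ℂ (complexGenFun a) (ball 0 x) :=
  Complex.differentiableOn_tsum_of_summable_norm h (fun n => by fun_prop) isOpen_ball
    fun n _ hz => norm_ofReal_mul_pow_le ha (mem_ball_zero_iff.1 hz).le n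

theorem continuousOn_realGenFun (ha : ∀ n, 0 ≤ a n) (h : Summable fun n => a n * x ^ n) :
    ContinuousOn (realGenFun a) (Set.Icc 0 x) := by
  refine continuousOn_tsum (fun n => by fun_prop) h fun n t ht => ?_
  rw [Real.norm_of_nonneg (mul_nonneg (ha n) (pow_nonneg ht.1 n))]
  exact mul_le_mul_of_nonneg_left (pow_le_pow_left₀ ht.1 ht.2 n) (ha n)

theorem isClosed_setOf_summable_mul_pow (ha : ∀ n, 0 ≤ a n) {B : ℝ}
    (hB : ∀ x, 0 ≤ x → Summable (fun n => a n * x ^ n) → realGenFun a x ≤ B) :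
    IsClosed {x : ℝ | 0 ≤ x ∧ Summable fun n => a n * x ^ n} := by
  have hset : {x : ℝ | 0 ≤ x ∧ Summable fun n => a n * x ^ n} =
      Set.Ici 0 ∩ ⋂ N : ℕ, {x | ∑ n ∈ Finset.range N, a n * x ^ n ≤ B} := by
    ext x
    simp only [Set.mem_ofPred_eq, Set.mem_inter_iff, Set.mem_Ici, Set.mem_iInter]
    refine and_congr_right fun hx => ⟨fun h N => ?_, fun h => ?_⟩
    · exact (sum_mul_pow_le_realGenFun ha hx h _).trans (hB x hx h)
    · exact summable_of_sum_range_le (fun n => mul_nonneg (ha n) (pow_nonneg hx n)) h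
  rw [hset]
  exact isClosed_Ici.inter (isClosed_iInter fun N =>
    isClosed_le (by fun_prop) continuous_const)

end GenFun

section FunctionalEquations

open PowerSeries Filter Topology Metric

theorem sum_antidiagonal_ite_eq {A : Type*} [AddCommMonoid A] (f : ℕ → A) (n : ℕ) :
    ∑ p ∈ Finset.HasAntidiagonal.antidiagonal n, (if p.1 = p.2 then f p.1 else 0) =
      if 2 ∣ n then f (n / 2) else 0 := by
  have hfilter : {p ∈ Finset.HasAntidiagonal.antidiagonal n | p.1 = p.2} =
      if 2 ∣ n then {(n / 2, n / 2)} else ∅ := by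
    ext ⟨i, j⟩
    split_ifs <;> simp [Finset.HasAntidiagonal.mem_antidiagonal] <;> omega
  rw [← Finset.sum_filter, hfilter]
  split_ifs <;> simp

/-- The generating series of the `k`-th moments of the isomorphism class sizes. -/
noncomputable abbrev momentSeries (k : ℕ) : PowerSeries ℂ := .mk fun n => (classMoment k n : ℂ)

theorem momentSeries_zero_eq :
    momentSeries 0 = X * (1 + momentSeries 0 + momentSeries 0 ^ 2) := by
  ext n
  rcases n with _ | _ | n
  · simp
  · simp [coeff_succ_X_mul]
  · rw [coeff_succ_X_mul]
    simp [sq, coeff_mul, classMoment_zero_add_two, coeff_one]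

theorem momentSeries_one_eq : momentSeries 1 =
    X * (1 + momentSeries 1 + 2 * momentSeries 1 ^ 2 - expand 2 two_ne_zero (momentSeries 3)) := by
  rw [← map_ofNat PowerSeries.C 2]
  ext n
  rcases n with _ | _ | n
  · simp
  · simp [coeff_succ_X_mul]
  · rw [coeff_succ_X_mul, map_sub, map_add, map_add, coeff_C_mul, sq, coeff_mul, coeff_expand]
    simp only [coeff_mk, classMoment_one_add_two, Finset.sum_sub_distrib, sum_antidiagonal_ite_eq,
      ← Finset.mul_sum]
    split_ifs <;> · push_cast; simp [coeff_one, add_sub_assoc]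

theorem one_sub_X_sub_two_mul_X_mul_momentSeries_zero_sq :
    (1 - X - PowerSeries.C ((2 : ℝ) : ℂ) * X * momentSeries 0) ^ 2 =
      (1 - X) ^ 2 - PowerSeries.C 4 * X ^ 2 := by
  simp only [Complex.ofReal_ofNat, map_ofNat]
  linear_combination -4 * X * momentSeries_zero_eq

theorem one_sub_X_sub_four_mul_X_mul_momentSeries_one_sq :
    (1 - X - PowerSeries.C ((4 : ℝ) : ℂ) * X * momentSeries 1) ^ 2 =
      (1 - X) ^ 2 - PowerSeries.C 8 * X ^ 2 * (1 - expand 2 two_ne_zero (momentSeries 3)) := by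
  simp only [Complex.ofReal_ofNat, map_ofNat]
  linear_combination -8 * X * momentSeries_one_eq

theorem exists_pos_tendsto_classMoment_zero : ∃ C : ℝ, 0 < C ∧
    Tendsto (fun n : ℕ => (n : ℝ) ^ (3 / 2 : ℝ) * (classMoment 0 n * (1 / 3) ^ n)) atTop
      (𝓝 C) := by
  have hderiv (z : ℂ) : HasDerivAt (fun z : ℂ => (1 - z) ^ 2 - 4 * z ^ 2) (-2 - 6 * z) z := by
    have h := (((hasDerivAt_id z).const_sub 1).pow 2).sub (((hasDerivAt_id z).pow 2).const_mul 4)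
    exact h.congr_deriv (by simp; ring)
  refine exists_pos_tendsto_of_sq_hasSumAt (D := fun z => (1 - z) ^ 2 - 4 * z ^ 2) (R := 1)
    (classMoment_nonneg 0) two_pos (by norm_num) (by norm_num) (fun z _ => ?_)
    (fun z _ => (hderiv z).differentiableAt.differentiableWithinAt) (by norm_num) ?_
    fun z hz hne hzero => ?_
  · rw [one_sub_X_sub_two_mul_X_mul_momentSeries_zero_sq]
    exact (((HasSumAt.one z).sub (.X z)).pow 2).sub ((HasSumAt.C 4 z).mul ((HasSumAt.X z).pow 2))
  · rw [(hderiv _).deriv]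
    norm_num
  · have hfactor : (1 - 3 * z) * (1 + z) = 0 := by linear_combination hzero
    rcases mul_eq_zero.1 hfactor with h | h
    · exact hne (by push_cast; linear_combination (-1 / 3) * h)
    · rw [show z = -1 by linear_combination h] at hz
      norm_num at hz

theorem summable_classMoment_one_mul_one_fifth_pow :
    Summable fun n => classMoment 1 n * (1 / 5 : ℝ) ^ n := by
  obtain ⟨C, -, hC⟩ := exists_pos_tendsto_classMoment_zero
  obtain ⟨B, hB⟩ := exists_add_one_rpow_mul_norm_le hC
  have hnonneg (n : ℕ) : 0 ≤ classMoment 0 n * (1 / 3) ^ n :=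
    mul_nonneg (classMoment_nonneg 0 n) (by positivity)
  have hbound (n : ℕ) : classMoment 0 n * (1 / 3) ^ n ≤ B := by
    refine le_trans ?_ (hB n)
    rw [Real.norm_of_nonneg (hnonneg n)]
    exact le_mul_of_one_le_left (hnonneg n) (Real.one_le_rpow (by simp) (by norm_num))
  refine ((summable_geometric_of_lt_one (r := 9 / 10) (by norm_num)
    (by norm_num)).mul_left B).of_nonneg_of_le
    (fun n => mul_nonneg (classMoment_nonneg 1 n) (by positivity)) fun n => ?_
  calc classMoment 1 n * (1 / 5 : ℝ) ^ n
      ≤ (3 / 2) ^ n * classMoment 0 n * (1 / 5) ^ n := by gcongr; exact classMoment_one_le n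
    _ = classMoment 0 n * (1 / 3) ^ n * (9 / 10) ^ n := by
      rw [show (9 / 10 : ℝ) = 3 * (3 / 2 * (1 / 5)) by norm_num]
      simp only [mul_pow, one_div, inv_pow]
      field_simp
    _ ≤ B * (9 / 10) ^ n := by gcongr; exact hbound n

end FunctionalEquations

/-! ### The dominant singularity of the isomorphic pairs -/

section Singularity

open PowerSeries Filter Topology Metric

variable {x x₀ ρ : ℝ} {z : ℂ}

theorem classMoment_three_mul_sq_pow_le (hx : 0 ≤ x)
    (h : Summable fun n => classMoment 1 n * x ^ n) (n : ℕ) :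
    classMoment 3 n * (x ^ 2) ^ n ≤
      realGenFun (classMoment 1) x * (classMoment 1 n * x ^ n) := by
  have hterm := mul_pow_le_realGenFun (classMoment_nonneg 1) hx h n
  have hnonneg : 0 ≤ classMoment 1 n * x ^ n :=
    mul_nonneg (classMoment_nonneg 1 n) (pow_nonneg hx n)
  calc classMoment 3 n * (x ^ 2) ^ n ≤ classMoment 1 n ^ 2 * (x ^ 2) ^ n := by
        gcongr
        exact classMoment_three_le_sq n
    _ = classMoment 1 n * x ^ n * (classMoment 1 n * x ^ n) := by ring
    _ ≤ realGenFun (classMoment 1) x * (classMoment 1 n * x ^ n) := by gcongr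

theorem summable_classMoment_three_mul_sq_pow (hx : 0 ≤ x)
    (h : Summable fun n => classMoment 1 n * x ^ n) :
    Summable fun n => classMoment 3 n * (x ^ 2) ^ n :=
  (h.mul_left _).of_nonneg_of_le
    (fun n => mul_nonneg (classMoment_nonneg 3 n) (by positivity))
    (classMoment_three_mul_sq_pow_le hx h)

theorem realGenFun_classMoment_three_sq_le (hx : 0 ≤ x)
    (h : Summable fun n => classMoment 1 n * x ^ n) :
    realGenFun (classMoment 3) (x ^ 2) ≤ realGenFun (classMoment 1) x ^ 2 := by
  have hle := (summable_classMoment_three_mul_sq_pow hx h).tsum_le_tsum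
    (classMoment_three_mul_sq_pow_le hx h) (h.mul_left _)
  rwa [tsum_mul_left, ← realGenFun, ← realGenFun, ← sq] at hle

/-- The discriminant of the quadratic equation `F = z (1 + F + 2 F² - G(z²))` satisfied by the
generating function `F` of the first moments, where `G` is the one of the third moments. -/
noncomputable def momentDiscr (z : ℂ) : ℂ :=
  (1 - z) ^ 2 - 8 * z ^ 2 * (1 - complexGenFun (classMoment 3) (z ^ 2))

theorem hasSumAt_momentDiscr (h : Summable fun n => classMoment 3 n * (‖z‖ ^ 2) ^ n) :
    HasSumAt ((1 - X - PowerSeries.C ((4 : ℝ) : ℂ) * X * momentSeries 1) ^ 2) z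
      (momentDiscr z) := by
  rw [one_sub_X_sub_four_mul_X_mul_momentSeries_one_sq]
  have hthree := hasSumAt_complexGenFun (classMoment_nonneg 3) h (norm_pow z 2).le
  exact (((HasSumAt.one z).sub (.X z)).pow 2).sub
    (((HasSumAt.C 8 z).mul ((HasSumAt.X z).pow 2)).mul ((HasSumAt.one z).sub (hthree.expand _)))

theorem momentDiscr_eq_sq (h : Summable fun n => classMoment 1 n * ‖z‖ ^ n) :
    momentDiscr z = (1 - z - 4 * z * complexGenFun (classMoment 1) z) ^ 2 := by
  have hF := hasSumAt_complexGenFun (classMoment_nonneg 1) h le_rfl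
  have hsq := (((HasSumAt.one z).sub (.X z)).sub
    (((HasSumAt.C ((4 : ℝ) : ℂ) z).mul (.X z)).mul hF)).pow 2
  simpa using HasSum.unique
    (hasSumAt_momentDiscr (summable_classMoment_three_mul_sq_pow (norm_nonneg z) h)) hsq

theorem momentDiscr_ofReal (x : ℝ) : momentDiscr x =
    ((1 - x) ^ 2 - 8 * x ^ 2 * (1 - realGenFun (classMoment 3) (x ^ 2)) : ℝ) := by
  rw [momentDiscr, ← Complex.ofReal_pow, complexGenFun_ofReal]
  push_cast
  rfl

/-- The derivative of `F ↦ x (1 + F + 2 F² - G(x²))` at the generating function `F` of the first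
moments; that equation determines `F` analytically as long as `branchFun x ≠ 1`. -/
noncomputable def branchFun (x : ℝ) : ℝ := x + 4 * x * realGenFun (classMoment 1) x

theorem momentDiscr_eq_one_sub_branchFun_sq (hx : 0 ≤ x)
    (h : Summable fun n => classMoment 1 n * x ^ n) :
    momentDiscr x = ((1 - branchFun x) ^ 2 : ℝ) := by
  rw [momentDiscr_eq_sq (by rwa [Complex.norm_of_nonneg hx]), complexGenFun_ofReal, branchFun]
  push_cast
  ring

theorem one_sub_branchFun_sq (hx : 0 ≤ x) (h : Summable fun n => classMoment 1 n * x ^ n) :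
    (1 - branchFun x) ^ 2 =
      (1 - x) ^ 2 - 8 * x ^ 2 * (1 - realGenFun (classMoment 3) (x ^ 2)) := by
  have hdiscr := momentDiscr_eq_one_sub_branchFun_sq hx h
  rw [momentDiscr_ofReal] at hdiscr
  exact (Complex.ofReal_injective hdiscr).symm

theorem mul_one_add_realGenFun_add_sq_le (hx : 0 < x)
    (h : Summable fun n => classMoment 1 n * x ^ n) :
    x * (1 + realGenFun (classMoment 1) x + realGenFun (classMoment 1) x ^ 2) ≤
      realGenFun (classMoment 1) x := by
  have hsq := one_sub_branchFun_sq hx.le h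
  have hthree := realGenFun_classMoment_three_sq_le hx.le h
  rw [branchFun] at hsq
  refine le_of_mul_le_mul_left ?_ hx
  nlinarith [mul_le_mul_of_nonneg_left hthree (sq_nonneg x)]

theorem realGenFun_classMoment_one_pos (hx : 0 < x)
    (h : Summable fun n => classMoment 1 n * x ^ n) : 0 < realGenFun (classMoment 1) x := by
  have hterm := mul_pow_le_realGenFun (classMoment_nonneg 1) hx.le h 1
  rw [classMoment_one_right, one_mul, pow_one] at hterm
  exact hx.trans_le hterm

theorem le_one_third_of_summable (hx : 0 < x)
    (h : Summable fun n => classMoment 1 n * x ^ n) : x ≤ 1 / 3 := by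
  have hF := realGenFun_classMoment_one_pos hx h
  have hle := mul_one_add_realGenFun_add_sq_le hx h
  have hsq := mul_nonneg hx.le (sq_nonneg (realGenFun (classMoment 1) x - 1))
  have hthree : 3 * x * realGenFun (classMoment 1) x ≤ 1 * realGenFun (classMoment 1) x := by
    linarith
  linarith [le_of_mul_le_mul_right hthree hF]

theorem mul_realGenFun_classMoment_one_le_one (hx : 0 < x)
    (h : Summable fun n => classMoment 1 n * x ^ n) :
    x * realGenFun (classMoment 1) x ≤ 1 := by
  have hF := realGenFun_classMoment_one_pos hx h
  have hle := mul_one_add_realGenFun_add_sq_le hx h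
  refine le_of_mul_le_mul_right ?_ hF
  linarith [mul_pos hx hF]

theorem exists_isGreatest_summable_classMoment_one :
    ∃ ρ, IsGreatest {x : ℝ | 0 ≤ x ∧ Summable fun n => classMoment 1 n * x ^ n} ρ := by
  have hfifth := summable_classMoment_one_mul_one_fifth_pow
  have hmem : (1 / 5 : ℝ) ∈ {x : ℝ | 0 ≤ x ∧ Summable fun n => classMoment 1 n * x ^ n} :=
    ⟨by norm_num, hfifth⟩
  have hbound (x : ℝ) (hx : 0 ≤ x) (h : Summable fun n => classMoment 1 n * x ^ n) :
      realGenFun (classMoment 1) x ≤ 5 := by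
    rcases le_or_gt x (1 / 5) with hle | hlt
    · have hmono := realGenFun_le_realGenFun (classMoment_nonneg 1) hx hle hfifth
      linarith [mul_realGenFun_classMoment_one_le_one (by norm_num) hfifth]
    · nlinarith [mul_realGenFun_classMoment_one_le_one (by linarith) h]
  have hbdd : BddAbove {x : ℝ | 0 ≤ x ∧ Summable fun n => classMoment 1 n * x ^ n} := by
    refine ⟨1 / 3, fun x ⟨hx, h⟩ => ?_⟩
    rcases hx.eq_or_lt with rfl | hpos
    · norm_num
    · exact le_one_third_of_summable hpos h
  have hclosed := isClosed_setOf_summable_mul_pow (classMoment_nonneg 1) hbound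
  exact ⟨_, hclosed.isGreatest_csSup ⟨_, hmem⟩ hbdd⟩

theorem summable_classMoment_three_mul_half_pow (hρ : 0 ≤ ρ)
    (h : Summable fun n => classMoment 1 n * ρ ^ n) :
    Summable fun n => classMoment 3 n * (ρ / 2) ^ n := by
  refine (h.mul_left (1 / 2)).of_nonneg_of_le
    (fun n => mul_nonneg (classMoment_nonneg 3 n) (by positivity)) fun n => ?_
  calc classMoment 3 n * (ρ / 2) ^ n ≤ 2 ^ n / 2 * classMoment 1 n * (ρ / 2) ^ n := by
        gcongr
        exact classMoment_add_two_le 1 n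
    _ = 1 / 2 * (classMoment 1 n * ρ ^ n) := by
        rw [div_pow]
        field_simp

theorem differentiableOn_momentDiscr (hρ : 0 ≤ ρ)
    (h : Summable fun n => classMoment 1 n * ρ ^ n) :
    DifferentiableOn ℂ momentDiscr (ball 0 √(ρ / 2)) := by
  have hsq : Set.MapsTo (fun z : ℂ => z ^ 2) (ball 0 √(ρ / 2)) (ball 0 (ρ / 2)) := fun z hz => by
    rw [mem_ball_zero_iff] at hz ⊢
    rw [norm_pow]
    exact (Real.lt_sqrt (norm_nonneg z)).1 hz
  have hthree := (differentiableOn_complexGenFun (classMoment_nonneg 3)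
    (summable_classMoment_three_mul_half_pow hρ h)).comp (by fun_prop) hsq
  unfold momentDiscr
  exact (by fun_prop : DifferentiableOn ℂ (fun z : ℂ => (1 - z) ^ 2) _).sub
    ((by fun_prop : DifferentiableOn ℂ (fun z : ℂ => 8 * z ^ 2) _).mul (hthree.const_sub 1))

theorem hasSumAt_momentDiscr_of_mem_ball (hρ : 0 ≤ ρ)
    (h : Summable fun n => classMoment 1 n * ρ ^ n) (hz : z ∈ ball 0 √(ρ / 2)) :
    HasSumAt ((1 - X - PowerSeries.C ((4 : ℝ) : ℂ) * X * momentSeries 1) ^ 2) z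
      (momentDiscr z) :=
  hasSumAt_momentDiscr <| summable_mul_pow_of_le (classMoment_nonneg 3) (by positivity)
    ((Real.lt_sqrt (norm_nonneg z)).1 (mem_ball_zero_iff.1 hz)).le
    (summable_classMoment_three_mul_half_pow hρ h)

theorem lt_sqrt_half_of_summable (hρ : 0 < ρ) (h : Summable fun n => classMoment 1 n * ρ ^ n) :
    ρ < √(ρ / 2) := by
  rw [Real.lt_sqrt hρ.le]
  nlinarith [le_one_third_of_summable hρ h]

theorem hasDerivAt_le_of_eventually_le_nhdsLT {f g : ℝ → ℝ} {f' g' : ℝ} (hf : HasDerivAt f f' x)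
    (hg : HasDerivAt g g' x) (hx : f x = g x) (hle : ∀ᶠ y in 𝓝[<] x, g y ≤ f y) : f' ≤ g' := by
  have hslope := (hasDerivAt_iff_tendsto_slope.1 (hf.sub hg)).mono_left
    (nhdsWithin_mono x fun y (hy : y ∈ Set.Iio x) => ne_of_lt hy)
  refine sub_nonpos.1 (le_of_tendsto hslope ?_)
  filter_upwards [hle, self_mem_nhdsWithin] with y hy hyx
  rw [slope_def_field, Pi.sub_apply, Pi.sub_apply, hx, sub_self, sub_zero]
  exact div_nonpos_of_nonneg_of_nonpos (sub_nonneg.2 hy) (sub_nonpos.2 (le_of_lt hyx))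

theorem natCast_le_three_halves_pow (n : ℕ) : (n : ℝ) ≤ (3 / 2) ^ n := by
  rcases n with _ | _ | n
  · simp
  · norm_num
  · have hbernoulli := one_add_mul_sub_le_pow (a := (3 / 2 : ℝ)) (by norm_num) n
    rw [add_assoc, pow_add]
    push_cast
    linarith

theorem pow_sub_pow_le_mul_pow (hx : 0 ≤ x) (hx₀ : 0 < x₀) (n : ℕ) :
    x₀ ^ n - x ^ n ≤ n * ((x₀ - x) / x₀) * x₀ ^ n := by
  have hbernoulli := one_add_mul_sub_le_pow (a := x / x₀) (by
    have : 0 ≤ x / x₀ := by positivity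
    linarith) n
  have hx₀n : 0 < x₀ ^ n := by positivity
  rw [div_pow, le_div_iff₀ hx₀n] at hbernoulli
  rw [sub_div, div_self hx₀.ne']
  linarith

theorem classMoment_three_mul_sq_pow_sub_le (hx : 0 ≤ x) (hxx₀ : x ≤ x₀) (hx₀ : 0 < x₀)
    (hx₀' : x₀ ≤ 1 / 3) (n : ℕ) :
    classMoment 3 n * (x₀ ^ 2) ^ n - classMoment 3 n * (x ^ 2) ^ n ≤
      (x₀ - x) / x₀ * (classMoment 1 n * x₀ ^ n) := by
  have : 0 ≤ (x₀ - x) / x₀ := div_nonneg (sub_nonneg.2 hxx₀) hx₀.le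
  have hone := classMoment_nonneg 1 n
  have hthree := classMoment_nonneg 3 n
  have hpow : (n : ℝ) * (2 * x₀) ^ n ≤ 1 := by
    calc (n : ℝ) * (2 * x₀) ^ n ≤ (3 / 2) ^ n * (2 / 3) ^ n := by
          gcongr
          · exact natCast_le_three_halves_pow n
          · linarith
      _ = 1 := by rw [← mul_pow]; norm_num
  calc classMoment 3 n * (x₀ ^ 2) ^ n - classMoment 3 n * (x ^ 2) ^ n
      = classMoment 3 n * (x₀ ^ (2 * n) - x ^ (2 * n)) := by rw [pow_mul, pow_mul]; ring
    _ ≤ classMoment 3 n * ((2 * n : ℕ) * ((x₀ - x) / x₀) * x₀ ^ (2 * n)) := by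
      gcongr
      exact pow_sub_pow_le_mul_pow hx hx₀ (2 * n)
    _ ≤ 2 ^ n / 2 * classMoment 1 n * ((2 * n : ℕ) * ((x₀ - x) / x₀) * x₀ ^ (2 * n)) := by
      gcongr
      exact classMoment_add_two_le 1 n
    _ = (x₀ - x) / x₀ * (classMoment 1 n * x₀ ^ n) * (n * (2 * x₀) ^ n) := by
      rw [mul_pow, mul_comm 2 n, pow_mul]
      push_cast
      ring
    _ ≤ (x₀ - x) / x₀ * (classMoment 1 n * x₀ ^ n) :=
      mul_le_of_le_one_right (by positivity) hpow

theorem realGenFun_classMoment_three_sub_le (hx : 0 ≤ x) (hxx₀ : x ≤ x₀) (hx₀ : 0 < x₀)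
    (h : Summable fun n => classMoment 1 n * x₀ ^ n) :
    realGenFun (classMoment 3) (x₀ ^ 2) - realGenFun (classMoment 3) (x ^ 2) ≤
      (x₀ - x) / x₀ * realGenFun (classMoment 1) x₀ := by
  have hsum₀ := summable_classMoment_three_mul_sq_pow hx₀.le h
  have hsum := summable_classMoment_three_mul_sq_pow hx
    (summable_mul_pow_of_le (classMoment_nonneg 1) hx hxx₀ h)
  simp only [realGenFun]
  rw [← hsum₀.tsum_sub hsum, ← tsum_mul_left]
  exact (hsum₀.sub hsum).tsum_le_tsum
    (classMoment_three_mul_sq_pow_sub_le hx hxx₀ hx₀ (le_one_third_of_summable hx₀ h))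
    (h.mul_left _)

theorem hasDerivAt_re_momentDiscr (hρ : 0 < ρ) (h : Summable fun n => classMoment 1 n * ρ ^ n)
    (hx : 0 ≤ x) (hxρ : x ≤ ρ) :
    HasDerivAt (fun x : ℝ => (momentDiscr x).re) (deriv momentDiscr x).re x := by
  have hmem : (x : ℂ) ∈ ball 0 √(ρ / 2) := by
    simpa [abs_of_nonneg hx] using hxρ.trans_lt (lt_sqrt_half_of_summable hρ h)
  exact ((differentiableOn_momentDiscr hρ.le h).differentiableAt
    (isOpen_ball.mem_nhds hmem)).hasDerivAt.real_of_complex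

theorem re_deriv_momentDiscr_neg (hρ : 0 < ρ) (h : Summable fun n => classMoment 1 n * ρ ^ n)
    (hx₀ : 0 < x₀) (hx₀ρ : x₀ ≤ ρ) (hbranch : branchFun x₀ = 1) :
    (deriv momentDiscr x₀).re < 0 := by
  have h₀ := summable_mul_pow_of_le (classMoment_nonneg 1) hx₀.le hx₀ρ h
  have hsq := one_sub_branchFun_sq hx₀.le h₀
  rw [hbranch, sub_self, zero_pow two_ne_zero] at hsq
  rw [branchFun] at hbranch
  have hthird := le_one_third_of_summable hx₀ h₀
  set F := realGenFun (classMoment 1) x₀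
  set g := realGenFun (classMoment 3) (x₀ ^ 2)
  -- A polynomial touching the discriminant from below on the left of `x₀`.
  let L (x : ℝ) : ℝ := (1 - x) ^ 2 - 8 * x ^ 2 * (1 - g + (x₀ - x) / x₀ * F)
  have hL : HasDerivAt L (-(2 * (1 - x₀) ^ 2 / x₀)) x₀ := by
    have hid := hasDerivAt_id x₀
    have hderiv := ((hid.const_sub 1).pow 2).sub (((hid.pow 2).const_mul 8).mul
      ((((hid.const_sub x₀).div_const x₀).mul_const F).const_add (1 - g)))
    refine hderiv.congr_deriv ?_
    simp only [Nat.cast_ofNat, id_eq, Nat.add_one_sub_one, pow_one, mul_neg, mul_one, sub_self,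
      zero_div, zero_mul, add_zero, Pi.pow_apply]
    field_simp
    linear_combination -2 * hsq + 2 * x₀ * hbranch
  have hle : ∀ᶠ x in 𝓝[<] x₀, L x ≤ (momentDiscr x).re := by
    filter_upwards [Ioo_mem_nhdsLT hx₀] with x hx
    have hslope := realGenFun_classMoment_three_sub_le hx.1.le hx.2.le hx₀ h₀
    rw [momentDiscr_ofReal, Complex.ofReal_re]
    simp only [L]
    gcongr
    linarith
  have hx₀eq : (momentDiscr x₀).re = L x₀ := by
    rw [momentDiscr_ofReal, Complex.ofReal_re]
    simp [L, g]
  refine (hasDerivAt_le_of_eventually_le_nhdsLT (hasDerivAt_re_momentDiscr hρ h hx₀.le hx₀ρ) hL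
    hx₀eq hle).trans_lt (neg_lt_zero.2 ?_)
  have : 0 < 1 - x₀ := by linarith
  positivity

theorem branchFun_ne_one (hx : 0 < x) (hxρ : x < ρ)
    (h : Summable fun n => classMoment 1 n * ρ ^ n) : branchFun x ≠ 1 := by
  intro hbranch
  have hsum (y : ℝ) (hy : y ∈ Set.Ioo 0 ρ) :=
    summable_mul_pow_of_le (classMoment_nonneg 1) hy.1.le hy.2.le h
  have hmin : IsLocalMin (fun x : ℝ => (momentDiscr x).re) x := by
    filter_upwards [Ioo_mem_nhds hx hxρ] with y hy
    rw [momentDiscr_eq_one_sub_branchFun_sq hx.le (hsum x ⟨hx, hxρ⟩),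
      momentDiscr_eq_one_sub_branchFun_sq hy.1.le (hsum y hy), hbranch, Complex.ofReal_re,
      Complex.ofReal_re, sub_self, zero_pow two_ne_zero]
    positivity
  have hρ := hx.trans hxρ
  exact (re_deriv_momentDiscr_neg hρ h hx hxρ.le hbranch).ne
    (hmin.hasDerivAt_eq_zero (hasDerivAt_re_momentDiscr hρ h hx.le hxρ.le))

theorem branchFun_le_one (hρ : 0 ≤ ρ) (h : Summable fun n => classMoment 1 n * ρ ^ n) :
    branchFun ρ ≤ 1 := by
  by_contra! hlt
  have hcont : ContinuousOn branchFun (Set.Icc 0 ρ) := by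
    have := continuousOn_realGenFun (classMoment_nonneg 1) h
    unfold branchFun
    fun_prop
  obtain ⟨x, hx, hbranch⟩ := intermediate_value_Ioo hρ hcont
    (show (1 : ℝ) ∈ Set.Ioo (branchFun 0) (branchFun ρ) from ⟨by simp [branchFun], hlt⟩)
  exact branchFun_ne_one hx.1 hx.2 h hbranch

theorem add_one_sub_branchFun_le_re (h : Summable fun n => classMoment 1 n * ρ ^ n)
    (hz : ‖z‖ ≤ ρ) (hzero : momentDiscr z = 0) : ρ + (1 - branchFun ρ) ≤ z.re := by
  have hρ : 0 ≤ ρ := (norm_nonneg z).trans hz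
  rw [momentDiscr_eq_sq (summable_mul_pow_of_le (classMoment_nonneg 1) (norm_nonneg z) hz h),
    pow_eq_zero_iff two_ne_zero] at hzero
  have hre : z.re = 1 - (4 * z * complexGenFun (classMoment 1) z).re := by
    rw [← Complex.one_re, ← Complex.sub_re]
    exact congrArg Complex.re (by linear_combination -hzero)
  have hnorm : ‖4 * z * complexGenFun (classMoment 1) z‖ ≤
      4 * ρ * realGenFun (classMoment 1) ρ := by
    rw [norm_mul, norm_mul, Complex.norm_ofNat]
    gcongr
    exact norm_complexGenFun_le (classMoment_nonneg 1) h hz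
  rw [branchFun, hre]
  linarith [Complex.re_le_norm (4 * z * complexGenFun (classMoment 1) z)]

theorem summable_mul_pow_of_hasSumAt {a : ℕ → ℝ} {κ : ℝ} {w : ℂ} (hκ : κ ≠ 0) (hx : x ≠ 0)
    (h : HasSumAt (1 - X - PowerSeries.C (κ : ℂ) * X * .mk fun n => (a n : ℂ)) x w) :
    Summable fun n => a n * x ^ n := by
  have hsummable := (summable_nat_add_iff 2).2 (HasSum.summable h)
  rw [← summable_nat_add_iff 1, ← Complex.summable_ofReal]
  refine (hsummable.mul_left (-(κ * x : ℂ)⁻¹)).congr fun n => ?_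
  have hκ' : (κ : ℂ) ≠ 0 := by exact_mod_cast hκ
  have hx' : (x : ℂ) ≠ 0 := by exact_mod_cast hx
  rw [coeff_succ_one_sub_X_sub_C_mul_X_mul _ _ n.succ_ne_zero, coeff_mk]
  push_cast
  field_simp
  ring

theorem branchFun_eq_one_of_isGreatest
    (hρ : IsGreatest {x : ℝ | 0 ≤ x ∧ Summable fun n => classMoment 1 n * x ^ n} ρ)
    (hpos : 0 < ρ) : branchFun ρ = 1 := by
  have h := hρ.1.2
  refine (branchFun_le_one hpos.le h).antisymm (le_of_not_gt fun hlt => ?_)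
  have hne (z : ℂ) (hz : ‖z‖ ≤ ρ) : momentDiscr z ≠ 0 := fun hzero => by
    linarith [add_one_sub_branchFun_le_re h hz hzero, (Complex.re_le_norm z).trans hz]
  obtain ⟨R, q, Q, hR, hq, hqsq, hQ⟩ := exists_sq_eq_of_ne_zero hpos
    (lt_sqrt_half_of_summable hpos h) (fun z => hasSumAt_momentDiscr_of_mem_ball hpos.le h)
    (differentiableOn_momentDiscr hpos.le h) (by simp) hne
  obtain rfl := powerSeries_eq_of_sq_eq hqsq hq (by simp)
  obtain ⟨r, hρr, hrR⟩ := exists_between hR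
  have hr : 0 < r := hpos.trans hρr
  have hsummable := summable_mul_pow_of_hasSumAt four_ne_zero hr.ne'
    (hQ r (by simpa [abs_of_pos hr] using hrR)).1
  exact hρr.not_ge (hρ.2 ⟨hr.le, hsummable⟩)

theorem momentDiscr_ne_zero_of_branchFun_eq_one (h : Summable fun n => classMoment 1 n * ρ ^ n)
    (hbranch : branchFun ρ = 1) (hz : ‖z‖ ≤ ρ) (hne : z ≠ ρ) : momentDiscr z ≠ 0 := by
  intro hzero
  have hre := add_one_sub_branchFun_le_re h hz hzero
  rw [hbranch, sub_self, add_zero] at hre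
  have hnorm : ‖z‖ = ρ := hz.antisymm (hre.trans (Complex.re_le_norm z))
  have hre_norm : z.re = ‖z‖ := (Complex.re_le_norm z).antisymm (hz.trans hre)
  exact hne (by rw [Complex.eq_coe_norm_of_nonneg (Complex.re_eq_norm.1 hre_norm), hnorm])

theorem exists_pos_tendsto_classMoment_one : ∃ ρ C : ℝ, 1 / 5 ≤ ρ ∧ 0 < C ∧
    Tendsto (fun n : ℕ => (n : ℝ) ^ (3 / 2 : ℝ) * (classMoment 1 n * ρ ^ n)) atTop (𝓝 C) := by
  obtain ⟨ρ, hρ⟩ := exists_isGreatest_summable_classMoment_one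
  have h := hρ.1.2
  have hfifth : 1 / 5 ≤ ρ := hρ.2 ⟨by norm_num, summable_classMoment_one_mul_one_fifth_pow⟩
  have hpos : 0 < ρ := by linarith
  have hbranch := branchFun_eq_one_of_isGreatest hρ hpos
  obtain ⟨C, hC, htendsto⟩ := exists_pos_tendsto_of_sq_hasSumAt (classMoment_nonneg 1) four_pos
    hpos (lt_sqrt_half_of_summable hpos h) (fun z => hasSumAt_momentDiscr_of_mem_ball hpos.le h)
    (differentiableOn_momentDiscr hpos.le h)
    (by simp [momentDiscr_eq_one_sub_branchFun_sq hpos.le h, hbranch])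
    (fun hzero => (re_deriv_momentDiscr_neg hpos h hpos le_rfl hbranch).ne (by simp [hzero]))
    (fun z => momentDiscr_ne_zero_of_branchFun_eq_one h hbranch)
  exact ⟨ρ, C, hfifth, hC, htendsto⟩

end Singularity

/-- The probability `g_n` that two uniformly random plane
unary-binary trees of size `n` are isomorphic satisfies
`g_n / (n^(3/2) δ^n) → C` for some constants `C > 0` and `δ ∈ (0,1)`. -/
theorem prob_isom_unary_binary_asymptotics :
    ∃ C δ : ℝ, 0 < C ∧ 0 < δ ∧ δ < 1 ∧
      Filter.Tendsto
        (fun n : ℕ => probIsomUB n / ((n : ℝ) ^ (3 / 2 : ℝ) * δ ^ n))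
        Filter.atTop (nhds C) := by
  obtain ⟨ρ, C₁, hρ, hC₁, h₁⟩ := exists_pos_tendsto_classMoment_one
  obtain ⟨C₀, hC₀, h₀⟩ := exists_pos_tendsto_classMoment_zero
  have hpos : 0 < ρ := by linarith
  refine ⟨C₁ / C₀ ^ 2, (1 / 3) ^ 2 / ρ, by positivity, by positivity, ?_, ?_⟩
  · rw [div_lt_one hpos]
    linarith
  · simp only [probIsomUB_eq]
    exact tendsto_div_sq_div_mul_pow h₁ h₀ hC₀.ne' (by norm_num)
end

section
/- For every n ≥ 1, ∑_T ∏_v outdeg(v)! = n! · Catalan(n−1), where the sum runs over all rooted labeled trees T on n vertices, the product runs over all vertices v of T, and Catalan(m) is the m-th Catalan number. -/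
open scoped Classical BigOperators

/-!
The key fact is that the number of rooted trees with prescribed out-degrees `d` is a multinomial
coefficient: if `∑ v, d v + 1 = |V|`, then there are `(|V| - 1)! / ∏ v, (d v)!` of them. Some `v`
has `d v = 0`, so `v` is a leaf; deleting it from a tree in which its parent is `u` leaves a tree on
the other vertices with out-degrees `d`, lowered by one at `u`. By induction this accounts for
`d u * (|V| - 2)!` of the weighted count, and `∑ u, d u = |V| - 1`.

Hence every out-degree sequence contributes `(|V| - 1)!` to the sum, and stars and bars counts
`centralBinom (|V| - 1) = |V| * catalan (|V| - 1)` sequences.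
-/

open Finset

variable {V : Type*}

@[to_additive]
lemma prod_compl_singleton_of_eq_one {M : Type*} [CommMonoid M] [Fintype V] {f : V → M} {v : V}
    (hv : f v = 1) : ∏ x : ({v}ᶜ : Set V), f x = ∏ x, f x := by
  rw [Fintype.prod_eq_mul_prod_compl v, hv, one_mul]
  exact (prod_subtype _ (by simp) f).symm

lemma prod_factorial_add_single [Fintype V] [DecidableEq V] (d : V → ℕ) (u : V) :
    ∏ x, (d x + (Pi.single u 1 : V → ℕ) x).factorial = (d u + 1) * ∏ x, (d x).factorial := by
  rw [Fintype.prod_eq_mul_prod_compl u, Fintype.prod_eq_mul_prod_compl u fun x => (d x).factorial,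
    ← mul_assoc, ← Nat.factorial_succ, Pi.single_eq_same]
  congr 1
  refine prod_congr rfl fun x hx => ?_
  rw [Pi.single_eq_of_ne (by simpa using hx), add_zero]

lemma card_piAntidiag_univ [Fintype V] [DecidableEq V] (n : ℕ) :
    #(piAntidiag (univ : Finset V) n) = (Fintype.card V + n - 1).choose n := by
  rw [← map_sym_eq_piAntidiag, card_map, sym_univ, card_univ, Sym.card_sym_eq_choose]

lemma exists_add_single_eq [DecidableEq V] {d : V → ℕ} {u : V} (hu : d u ≠ 0) :
    ∃ e : V → ℕ, e + Pi.single u 1 = d :=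
  ⟨d - Pi.single u 1, by
    ext x
    by_cases hx : x = u
    · simp [hx, Nat.sub_add_cancel (Nat.one_le_iff_ne_zero.2 hu)]
    · simp [hx]⟩

lemma ncard_neighborSet_eq_degree (G : SimpleGraph V) (v : V) [Fintype (G.neighborSet v)] :
    (G.neighborSet v).ncard = G.degree v := by
  rw [Set.ncard_eq_toFinset_card', Set.toFinset_card, SimpleGraph.card_neighborSet_eq_degree]

/-- The graph obtained from a graph on the complement of `v` by attaching `v` as a leaf to `u`. -/
def leafExtension {v : V} (H : SimpleGraph ({v}ᶜ : Set V)) (u : ({v}ᶜ : Set V)) : SimpleGraph V :=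
  H.spanningCoe ⊔ SimpleGraph.edge v u

section LeafExtension

variable {v : V} (H : SimpleGraph ({v}ᶜ : Set V)) (u : ({v}ᶜ : Set V))

lemma leafExtension_adj_leaf (x : V) : (leafExtension H u).Adj v x ↔ x = u := by
  have hu : (u : V) ≠ v := u.2
  simp only [leafExtension, SimpleGraph.sup_adj, SimpleGraph.map_adj, SimpleGraph.edge_adj]
  aesop

lemma leafExtension_adj_coe (x y : ({v}ᶜ : Set V)) :
    (leafExtension H u).Adj x y ↔ H.Adj x y := by
  have hx : (x : V) ≠ v := x.2
  have hy : (y : V) ≠ v := y.2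
  simp [leafExtension, SimpleGraph.edge_adj, hx, hy]

lemma induce_leafExtension : (leafExtension H u).induce {v}ᶜ = H := by
  ext x y
  exact leafExtension_adj_coe H u x y

lemma leafExtension_induce {G : SimpleGraph V} {u : ({v}ᶜ : Set V)}
    (hG : ∀ x, G.Adj v x ↔ x = u) : leafExtension (G.induce {v}ᶜ) u = G := by
  ext x y
  by_cases hx : x = v
  · rw [hx, leafExtension_adj_leaf, hG]
  by_cases hy : y = v
  · rw [hy, SimpleGraph.adj_comm, leafExtension_adj_leaf, G.adj_comm, hG]
  exact leafExtension_adj_coe _ u ⟨x, hx⟩ ⟨y, hy⟩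

lemma neighborSet_leafExtension_leaf : (leafExtension H u).neighborSet v = {(u : V)} :=
  Set.ext (leafExtension_adj_leaf H u)

lemma neighborSet_leafExtension_parent :
    (leafExtension H u).neighborSet u = insert v ((↑) '' H.neighborSet u) := by
  ext y
  by_cases hy : y = v
  · simp [hy, SimpleGraph.adj_comm _ _ v, leafExtension_adj_leaf]
  · simpa [hy] using leafExtension_adj_coe H u u ⟨y, hy⟩

lemma neighborSet_leafExtension_of_ne {x : ({v}ᶜ : Set V)} (hx : x ≠ u) :
    (leafExtension H u).neighborSet x = (↑) '' H.neighborSet x := by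
  ext y
  by_cases hy : y = v
  · simp [hy, SimpleGraph.adj_comm _ _ v, leafExtension_adj_leaf, Subtype.coe_inj, hx]
  · simpa [hy] using leafExtension_adj_coe H u x ⟨y, hy⟩

lemma ncard_neighborSet_leafExtension_coe [Finite V] (x : ({v}ᶜ : Set V)) :
    ((leafExtension H u).neighborSet x).ncard =
      (H.neighborSet x).ncard + if x = u then 1 else 0 := by
  rw [← Set.ncard_image_of_injective (H.neighborSet x) Subtype.val_injective]
  by_cases hx : x = u
  · rw [hx, neighborSet_leafExtension_parent, Set.ncard_insert_of_notMem (by simp),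
      if_pos rfl]
  · rw [neighborSet_leafExtension_of_ne H u hx, if_neg hx, add_zero]

variable {H}

lemma connected_leafExtension (hH : H.Connected) : (leafExtension H u).Connected := by
  have reachable_parent (x : V) : (leafExtension H u).Reachable x u := by
    by_cases hx : x = v
    · exact SimpleGraph.Adj.reachable (hx ▸ (leafExtension_adj_leaf H u u).2 rfl)
    · exact (hH.preconnected ⟨x, hx⟩ u).map
        ⟨Subtype.val, fun h => (leafExtension_adj_coe H u _ _).2 h⟩
  exact SimpleGraph.connected_iff_exists_forall_reachable _ |>.2
    ⟨u, fun x => (reachable_parent x).symm⟩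

lemma ncard_edgeSet_leafExtension [Finite V] :
    (leafExtension H u).edgeSet.ncard = H.edgeSet.ncard + 1 := by
  have hu : v ≠ u := fun h => u.2 h.symm
  have notMem : s(v, ↑u) ∉ H.spanningCoe.edgeSet := by simp
  rw [leafExtension, SimpleGraph.edgeSet_sup, SimpleGraph.edgeSet_edge_of_ne hu,
    Set.union_singleton, Set.ncard_insert_of_notMem notMem, SimpleGraph.edgeSet_map,
    Set.ncard_image_of_injective _ (Function.Embedding.injective _)]

lemma isTree_leafExtension [Finite V] (hH : H.IsTree) : (leafExtension H u).IsTree := by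
  have card_compl := Set.ncard_add_ncard_compl ({v} : Set V)
  rw [Set.ncard_singleton] at card_compl
  rw [SimpleGraph.isTree_iff_connected_and_card] at hH ⊢
  simp only [Nat.card_coe_set_eq] at hH ⊢
  refine ⟨connected_leafExtension u hH.1, ?_⟩
  rw [ncard_edgeSet_leafExtension, hH.2]
  lia

end LeafExtension

/-- A tree on `V` with a distinguished root: the analogue of `RTree` over an arbitrary vertex type,
so that a vertex can be deleted without relabelling the others. -/
@[ext]
structure RootedTreeOn (V : Type*) where
  graph : SimpleGraph V
  isTree : graph.IsTree
  root : V

namespace RootedTreeOn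

/-- The number of children of `x`. The truncated subtraction is harmless: a vertex other than the
root has a parent, hence positive degree. -/
noncomputable def outdegree (T : RootedTreeOn V) (x : V) : ℕ :=
  if x = T.root then (T.graph.neighborSet x).ncard else (T.graph.neighborSet x).ncard - 1

instance [Finite V] : Finite (RootedTreeOn V) :=
  Finite.of_injective (fun T => (T.graph, T.root)) fun _ _ h =>
    RootedTreeOn.ext (congrArg Prod.fst h) (congrArg Prod.snd h)

noncomputable instance [Finite V] : Fintype (RootedTreeOn V) := Fintype.ofFinite _

lemma outdegree_add_one [Finite V] (T : RootedTreeOn V) (x : V) :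
    T.outdegree x + 1 =
      (T.graph.neighborSet x).ncard + if x = T.root then 1 else 0 := by
  by_cases hx : x = T.root
  · simp [outdegree, hx]
  · have : Nontrivial V := ⟨x, T.root, hx⟩
    have : Fintype (T.graph.neighborSet x) := Fintype.ofFinite _
    have degree_pos := T.isTree.connected.preconnected.degree_pos_of_nontrivial x
    rw [← ncard_neighborSet_eq_degree] at degree_pos
    simp only [outdegree, if_neg hx]
    lia

lemma sum_outdegree_add_one [Fintype V] (T : RootedTreeOn V) :
    ∑ x, T.outdegree x + 1 = Fintype.card V := by
  have sum_degree := T.graph.sum_degrees_eq_twice_card_edges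
  have card_edges := T.isTree.card_edgeFinset
  have sum_add_one := Fintype.sum_congr _ _ T.outdegree_add_one
  simp only [ncard_neighborSet_eq_degree, sum_add_distrib, sum_const, card_univ, smul_eq_mul,
    mul_one, sum_degree, Fintype.sum_ite_eq'] at sum_add_one
  lia

lemma ne_root_and_degree_eq_one_of_outdegree_eq_zero [Finite V] [Nontrivial V]
    {T : RootedTreeOn V} {v : V} [Fintype (T.graph.neighborSet v)] (hv : T.outdegree v = 0) :
    v ≠ T.root ∧ T.graph.degree v = 1 := by
  have degree_pos := T.isTree.connected.preconnected.degree_pos_of_nontrivial v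
  have outdegree_add_one := T.outdegree_add_one v
  rw [hv, ncard_neighborSet_eq_degree] at outdegree_add_one
  split_ifs at outdegree_add_one with h
  · lia
  · exact ⟨h, outdegree_add_one.symm⟩

section AddLeaf

variable [Finite V] {v : V}

/-- The tree obtained from a tree on the complement of `v` by making `v` a new child of `u`. -/
def addLeaf (T : RootedTreeOn ({v}ᶜ : Set V)) (u : ({v}ᶜ : Set V)) : RootedTreeOn V where
  graph := leafExtension T.graph u
  isTree := isTree_leafExtension u T.isTree
  root := T.root

lemma outdegree_addLeaf_leaf (T : RootedTreeOn ({v}ᶜ : Set V)) (u : ({v}ᶜ : Set V)) :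
    (T.addLeaf u).outdegree v = 0 := by
  have v_ne_root : v ≠ T.root := fun h => T.root.2 h.symm
  simp [outdegree, v_ne_root, addLeaf, neighborSet_leafExtension_leaf]

lemma outdegree_addLeaf_comp_coe (T : RootedTreeOn ({v}ᶜ : Set V)) (u : ({v}ᶜ : Set V)) :
    (T.addLeaf u).outdegree ∘ (↑) = T.outdegree + Pi.single u 1 := by
  ext x
  have before := T.outdegree_add_one x
  have after := (T.addLeaf u).outdegree_add_one x
  simp only [addLeaf, ncard_neighborSet_leafExtension_coe, Subtype.coe_inj] at after
  simp only [Function.comp_apply, Pi.add_apply, Pi.single_apply, addLeaf]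
  lia

lemma outdegree_addLeaf_eq_iff {T : RootedTreeOn ({v}ᶜ : Set V)} {u : ({v}ᶜ : Set V)} {d : V → ℕ}
    (hv : d v = 0) : (T.addLeaf u).outdegree = d ↔ T.outdegree + Pi.single u 1 = d ∘ (↑) := by
  rw [← outdegree_addLeaf_comp_coe]
  refine ⟨fun h => h ▸ rfl, fun h => funext fun x => ?_⟩
  by_cases hx : x = v
  · rw [hx, outdegree_addLeaf_leaf, hv]
  · exact congrFun h ⟨x, hx⟩

lemma addLeaf_injective :
    Function.Injective fun p : RootedTreeOn ({v}ᶜ : Set V) × ({v}ᶜ : Set V) => p.1.addLeaf p.2 := by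
  rintro ⟨S, u⟩ ⟨T, w⟩ h
  have graph_eq : leafExtension S.graph u = leafExtension T.graph w := congrArg graph h
  have root_eq : (S.root : V) = T.root := congrArg root h
  have induce_eq := congrArg (SimpleGraph.induce {v}ᶜ) graph_eq
  rw [induce_leafExtension, induce_leafExtension] at induce_eq
  have u_eq_w : (u : V) = w :=
    (leafExtension_adj_leaf T.graph w u).1 (graph_eq ▸ (leafExtension_adj_leaf S.graph u u).2 rfl)
  exact Prod.ext (RootedTreeOn.ext induce_eq (Subtype.ext root_eq)) (Subtype.ext u_eq_w)

lemma exists_addLeaf_eq [Nontrivial V] {T : RootedTreeOn V} (hv : T.outdegree v = 0) :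
    ∃ (S : RootedTreeOn ({v}ᶜ : Set V)) (u : ({v}ᶜ : Set V)), S.addLeaf u = T := by
  have : Fintype (T.graph.neighborSet v) := Fintype.ofFinite _
  obtain ⟨v_ne_root, degree_eq_one⟩ := ne_root_and_degree_eq_one_of_outdegree_eq_zero hv
  obtain ⟨u, adj_u, eq_u⟩ := SimpleGraph.degree_eq_one_iff_existsUnique_adj.1 degree_eq_one
  have adj_iff (x : V) : T.graph.Adj v x ↔ x = u := ⟨eq_u x, fun h => h ▸ adj_u⟩
  have isTree_induce : (T.graph.induce {v}ᶜ).IsTree :=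
    ⟨T.isTree.connected.induce_compl_singleton_of_degree_eq_one degree_eq_one,
      T.isTree.isAcyclic.induce _⟩
  exact ⟨⟨T.graph.induce {v}ᶜ, isTree_induce, ⟨T.root, v_ne_root.symm⟩⟩, ⟨u, adj_u.ne'⟩,
    RootedTreeOn.ext (leafExtension_induce adj_iff) rfl⟩

end AddLeaf

lemma card_outdegree_eq_sum_card_addLeaf [Fintype V] [Nontrivial V] {v : V} {d : V → ℕ}
    (hv : d v = 0) :
    #{T : RootedTreeOn V | T.outdegree = d} =
      ∑ u, #{T : RootedTreeOn ({v}ᶜ : Set V) | T.outdegree + Pi.single u 1 = d ∘ (↑)} := by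
  have image_addLeaf : ({T | T.outdegree = d} : Finset (RootedTreeOn V)) =
      ({p | p.1.outdegree + Pi.single p.2 1 = d ∘ (↑)} :
        Finset (RootedTreeOn ({v}ᶜ : Set V) × ({v}ᶜ : Set V))).image fun p => p.1.addLeaf p.2 := by
    ext T
    simp only [mem_filter_univ, mem_image, Prod.exists, ← outdegree_addLeaf_eq_iff hv]
    constructor
    · intro hT
      obtain ⟨S, u, rfl⟩ := exists_addLeaf_eq ((congrFun hT v).trans hv)
      exact ⟨S, u, hT, rfl⟩
    · rintro ⟨S, u, hS, rfl⟩
      exact hS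
  rw [image_addLeaf, card_image_of_injective _ addLeaf_injective]
  simp only [card_filter, Fintype.sum_prod_type_right]

lemma card_outdegree_eq_zero_of_card_eq_one [Fintype V] (hV : Fintype.card V = 1) :
    #{T : RootedTreeOn V | T.outdegree = 0} = 1 := by
  have : Subsingleton V := Fintype.card_le_one_iff_subsingleton.1 hV.le
  have : Nonempty V := Fintype.card_pos_iff.1 (by lia)
  refine card_eq_one.2 ⟨⟨⊥, .of_subsingleton, Classical.arbitrary V⟩, ?_⟩
  ext T
  have outdegree_eq_zero : T.outdegree = 0 := by
    ext x
    simp [outdegree, Subsingleton.elim x T.root, Subsingleton.elim T.graph ⊥]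
  simp [outdegree_eq_zero, RootedTreeOn.ext_iff, eq_iff_true_of_subsingleton]

lemma card_outdegree_add_single_mul_prod_factorial [Fintype V] [DecidableEq V] {k : ℕ}
    (count : ∀ e : V → ℕ, ∑ x, e x = k →
      #{T : RootedTreeOn V | T.outdegree = e} * ∏ x, (e x).factorial = k.factorial)
    {d : V → ℕ} (hd : ∑ x, d x = k + 1) (u : V) :
    #{T : RootedTreeOn V | T.outdegree + Pi.single u 1 = d} * ∏ x, (d x).factorial =
      d u * k.factorial := by
  by_cases hu : d u = 0
  · have no_tree (T : RootedTreeOn V) : T.outdegree + Pi.single u 1 ≠ d := fun h => by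
      simpa [hu] using congrFun h u
    simp [no_tree, hu]
  · obtain ⟨e, rfl⟩ := exists_add_single_eq hu
    have sum_e : ∑ x, e x = k := by
      simpa [sum_add_distrib, Fintype.sum_pi_single'] using hd
    simp only [add_left_inj, Pi.add_apply, prod_factorial_add_single, Pi.single_eq_same]
    rw [mul_left_comm, count e sum_e]

theorem card_outdegree_eq_mul_prod_factorial [Fintype V] {k : ℕ} {d : V → ℕ}
    (hV : Fintype.card V = k + 1) (hd : ∑ x, d x = k) :
    #{T : RootedTreeOn V | T.outdegree = d} * ∏ x, (d x).factorial = k.factorial := by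
  induction k generalizing V with
  | zero =>
    obtain rfl : d = 0 := funext fun x => sum_eq_zero_iff.1 hd x (mem_univ x)
    simp [card_outdegree_eq_zero_of_card_eq_one hV]
  | succ k ih =>
    have : Nontrivial V := Fintype.one_lt_card_iff_nontrivial.1 (by lia)
    obtain ⟨v, -, d_v_lt⟩ : ∃ v ∈ univ, d v < 1 :=
      exists_lt_of_sum_lt (by rw [hd, sum_const, card_univ, hV, smul_eq_mul]; lia)
    have hv : d v = 0 := Nat.lt_one_iff.1 d_v_lt
    have card_compl : Fintype.card ({v}ᶜ : Set V) = k + 1 := by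
      rw [Fintype.card_compl_set, hV, Set.card_singleton, Nat.add_sub_cancel]
    have sum_compl : ∑ x : ({v}ᶜ : Set V), d x = k + 1 := by
      rw [sum_compl_singleton_of_eq_zero hv, hd]
    have prod_compl : ∏ x : ({v}ᶜ : Set V), (d x).factorial = ∏ x, (d x).factorial :=
      prod_compl_singleton_of_eq_one (f := fun x => (d x).factorial)
        (by rw [hv, Nat.factorial_zero])
    have fiber (u : ({v}ᶜ : Set V)) :
        #{T : RootedTreeOn ({v}ᶜ : Set V) | T.outdegree + Pi.single u 1 = d ∘ (↑)} *
          ∏ x, (d x).factorial = d u * k.factorial := by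
      rw [← prod_compl]
      exact card_outdegree_add_single_mul_prod_factorial (fun e => ih card_compl) sum_compl u
    rw [card_outdegree_eq_sum_card_addLeaf hv, sum_mul, sum_congr rfl fun u _ => fiber u, ← sum_mul,
      sum_compl, Nat.factorial_succ]

lemma sum_prod_factorial_of_outdegree_eq [Fintype V] {k : ℕ} {d : V → ℕ}
    (hV : Fintype.card V = k + 1) (hd : ∑ x, d x = k) :
    ∑ T : RootedTreeOn V with T.outdegree = d, ∏ v, (T.outdegree v).factorial = k.factorial := by
  rw [sum_congr rfl fun T hT => by rw [(mem_filter.1 hT).2], sum_const, smul_eq_mul,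
    card_outdegree_eq_mul_prod_factorial hV hd]

end RootedTreeOn

theorem sum_products_outdeg_factorials_eq_catalan_general (V : Type*) [Fintype V] [Nonempty V] :
    ∑ T : RootedTreeOn V, ∏ v, (T.outdegree v).factorial =
      (Fintype.card V).factorial * catalan (Fintype.card V - 1) := by
  obtain ⟨m, hm⟩ : ∃ m, Fintype.card V = m + 1 := Nat.exists_eq_add_one.2 Fintype.card_pos
  have outdegree_mem (T : RootedTreeOn V) : T.outdegree ∈ piAntidiag univ m :=
    mem_piAntidiag.2
      ⟨Nat.add_right_cancel (T.sum_outdegree_add_one.trans hm), fun x _ => mem_univ x⟩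
  calc
    _ = ∑ d ∈ piAntidiag univ m, ∑ T : RootedTreeOn V with T.outdegree = d,
          ∏ v, (T.outdegree v).factorial :=
      (sum_fiberwise_of_maps_to (fun T _ => outdegree_mem T) _).symm
    _ = #(piAntidiag (univ : Finset V) m) * m.factorial := sum_const_nat fun d hd =>
      RootedTreeOn.sum_prod_factorial_of_outdegree_eq hm (mem_piAntidiag.1 hd).1
    _ = m.centralBinom * m.factorial := by
      rw [card_piAntidiag_univ, hm, Nat.centralBinom, Nat.succ_add_sub_one, two_mul]
    _ = _ := by
      rw [← succ_mul_catalan_eq_centralBinom, hm, Nat.factorial_succ, Nat.add_sub_cancel]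
      ring

/-- Rooted labeled trees on `n` vertices as rooted trees with vertex set `Fin n`. -/
def RTree.equivRootedTreeOn (n : ℕ) : RTree n ≃ RootedTreeOn (Fin n) where
  toFun T := ⟨T.graph, T.isTree, T.root⟩
  invFun T := ⟨T.graph, T.isTree, T.root⟩

lemma RTree.outdegree_equivRootedTreeOn {n : ℕ} (T : RTree n) (v : Fin n) :
    (RTree.equivRootedTreeOn n T).outdegree v = T.outdeg v := by
  simp only [RootedTreeOn.outdegree, RTree.outdeg, RTree.equivRootedTreeOn, Equiv.coe_fn_mk]
  congr

/-- For `n ≥ 1`, the total number of plane representations of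
all rooted labeled trees on `n` vertices is `n! · Catalan(n-1)`:
`∑_T ∏_v outdeg(v)! = n! · C_{n-1}`. -/
theorem sum_products_outdeg_factorials_eq_catalan (n : ℕ) (hn : 1 ≤ n) :
    ∑ T : RTree n, ∏ v, (T.outdeg v).factorial =
      n.factorial * catalan (n - 1) := by
  have : Nonempty (Fin n) := ⟨0, hn⟩
  simpa only [← (RTree.equivRootedTreeOn n).sum_comp, RTree.outdegree_equivRootedTreeOn,
    Fintype.card_fin] using sum_products_outdeg_factorials_eq_catalan_general (Fin n)
end

section
/- For every n ≥ 1 and every rooted labeled tree T on n vertices, ∏_v outdeg(v)! ≤ 4^n · |Aut(T)|, where the product runs over all vertices v of T and Aut(T) is the group of root-fixing graph automorphisms of T. (Equivalently, the number of plane representations of any Pólya tree of size n is less than 4^n.) -/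
open scoped Classical BigOperators

/-!
A system of orderings of the children of each vertex turns a rooted tree into a plane tree, whose
vertices can be enumerated level by level from left to right. Along this enumeration the parent map
becomes a monotone self-map of `Fin n`, and the enumeration remembers the ordering of the children,
so there are at least `∏ outdeg(v)!` enumerations making the parent map monotone. Conversely, two
enumerations inducing the same self-map of `Fin n` differ by an automorphism of the rooted tree, and
there are at most `4 ^ n` monotone self-maps of `Fin n`.
-/

section MonotoneMaps

lemma card_orderHom_fin_le_multichoose (m : ℕ) (α : Type*) [LinearOrder α] [Finite α] :
    Nat.card (Fin m →o α) ≤ (Nat.card α).multichoose m := by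
  rw [← Sym.natCard_sym_eq_multichoose]
  refine Nat.card_le_card_of_injective
    (fun q : Fin m →o α ↦ (⟨List.ofFn q, by simp⟩ : Sym α m)) fun q q' hqq' ↦ ?_
  have hperm : (List.ofFn q).Perm (List.ofFn q') :=
    Multiset.coe_eq_coe.mp (congrArg Subtype.val hqq')
  have hlist : List.ofFn q = List.ofFn q' :=
    hperm.eq_of_sortedLE q.monotone.sortedLE_ofFn q'.monotone.sortedLE_ofFn
  exact DFunLike.coe_injective (List.ofFn_injective hlist)

lemma multichoose_self_le_four_pow (n : ℕ) : n.multichoose n ≤ 4 ^ n :=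
  calc n.multichoose n = (n + n - 1).choose n := Nat.multichoose_eq n n
    _ ≤ 2 ^ (n + n - 1) := Nat.choose_le_two_pow _ _
    _ ≤ 2 ^ (2 * n) := Nat.pow_le_pow_right two_pos (by omega)
    _ = 4 ^ n := by rw [pow_mul]; norm_num

end MonotoneMaps

section MonotoneEnumerations

variable {V : Type*} [Fintype V]

/-- The enumerations of `V` along which the self-map `p` is monotone. When `p` is the parent map of
a rooted tree, these include the breadth-first enumerations of its plane representations. -/
abbrev MonotoneEnumeration (p : V → V) : Type _ :=
  {e : Fin (Fintype.card V) ≃ V // Monotone (e.symm ∘ p ∘ e)}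

/-- The monotone self-map of `Fin (Fintype.card V)` obtained by transporting `p` along `e`. -/
def MonotoneEnumeration.orderHom {p : V → V} (e : MonotoneEnumeration p) :
    Fin (Fintype.card V) →o Fin (Fintype.card V) :=
  ⟨e.1.symm ∘ p ∘ e.1, e.2⟩

lemma MonotoneEnumeration.commute_of_orderHom_eq {p : V → V} {e e' : MonotoneEnumeration p}
    (h : e.orderHom = e'.orderHom) : Function.Commute (e.1.symm.trans e'.1) p := by
  intro v
  have happ : e.1.symm (p v) = e'.1.symm (p (e'.1 (e.1.symm v))) := by
    simpa [orderHom] using DFunLike.congr_fun h (e.1.symm v)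
  simp [happ]

lemma card_monotoneEnumeration_le (p : V → V) :
    Nat.card (MonotoneEnumeration p) ≤
      Nat.card (Fin (Fintype.card V) →o Fin (Fintype.card V)) *
        Nat.card {φ : Equiv.Perm V // Function.Commute φ p} := by
  let rep (e : MonotoneEnumeration p) : MonotoneEnumeration p :=
    Set.rangeSplitting MonotoneEnumeration.orderHom ⟨e.orderHom, e, rfl⟩
  have orderHom_rep (e) : (rep e).orderHom = e.orderHom :=
    Set.apply_rangeSplitting MonotoneEnumeration.orderHom _
  have : Finite (Fin (Fintype.card V) →o Fin (Fintype.card V)) := DFunLike.finite _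
  rw [← Nat.card_prod]
  refine Nat.card_le_card_of_injective (fun e ↦ (e.orderHom, ⟨(rep e).1.symm.trans e.1,
    MonotoneEnumeration.commute_of_orderHom_eq (orderHom_rep e)⟩)) fun e e' h ↦ ?_
  obtain ⟨horderHom, htrans⟩ := Prod.mk.inj h
  have hrep : rep e = rep e' := by simp only [rep, horderHom]
  rw [Subtype.mk.injEq, hrep] at htrans
  ext i
  simpa using DFunLike.congr_fun htrans ((rep e').1 i)

lemma exists_equiv_fin_strictMono {α : Type*} [LinearOrder α] {k : V → α}
    (hk : Function.Injective k) : ∃ e : Fin (Fintype.card V) ≃ V, StrictMono (k ∘ e) := by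
  let e₀ := (Fintype.equivFin V).symm
  refine ⟨(Tuple.sort (k ∘ e₀)).trans e₀, ?_⟩
  exact (Tuple.monotone_sort (k ∘ e₀)).strictMono_of_injective
    (hk.comp (e₀.injective.comp (Equiv.injective _)))

end MonotoneEnumerations

section AddressCode

variable {V : Type*} {p : V → V} {s : V → ℕ} {B N : ℕ}

/-- The number whose base-`B` digits are the ranks `s` of `v`, `p v`, …, `p^[N - 1] v` from the
least to the most significant one. When `p` is a parent map and the ranks are less than `B` and
vanish only at the root, the order of the codes is the breadth-first order: it compares vertices by
depth and then lexicographically by the ranks along the path from the root. -/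
def addressCode (p : V → V) (s : V → ℕ) (B N : ℕ) (v : V) : ℕ :=
  ∑ i ∈ Finset.range N, B ^ i * s (p^[i] v)

lemma addressCode_eq_mul_add {v : V} (hs : s (p^[N] v) = 0) :
    addressCode p s B N v = B * addressCode p s B N (p v) + s v :=
  calc addressCode p s B N v = ∑ i ∈ Finset.range (N + 1), B ^ i * s (p^[i] v) := by
        rw [Finset.sum_range_succ, hs, mul_zero, add_zero, addressCode]
    _ = B * addressCode p s B N (p v) + s v := by
        rw [Finset.sum_range_succ', addressCode, Finset.mul_sum]
        simp only [pow_succ', mul_assoc, Function.iterate_succ_apply, pow_zero, one_mul,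
          Function.iterate_zero_apply]

lemma addressCode_map {v : V} (hs : s (p^[N] v) = 0) (hB : s v < B) :
    addressCode p s B N (p v) = addressCode p s B N v / B := by
  rw [addressCode_eq_mul_add hs, Nat.mul_add_div (by omega), Nat.div_eq_of_lt hB, add_zero]

lemma addressCode_mod {v : V} (hs : s (p^[N] v) = 0) (hB : s v < B) :
    addressCode p s B N v % B = s v := by
  rw [addressCode_eq_mul_add hs, Nat.mul_add_mod, Nat.mod_eq_of_lt hB]

lemma addressCode_injective (hp : ∀ u v, p^[N] u = p^[N] v) (hs : ∀ v, s (p^[N] v) = 0)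
    (hB : ∀ v, s v < B) (hsib : ∀ u v, p u = p v → s u = s v → u = v) :
    Function.Injective (addressCode p s B N) := by
  have eq_of_iterate_eq (m : ℕ) : ∀ u v, addressCode p s B N u = addressCode p s B N v →
      p^[m] u = p^[m] v → u = v := by
    induction m with
    | zero => exact fun u v _ h ↦ h
    | succ m ih =>
      intro u v hcode hiter
      have hparent : p u = p v :=
        ih _ _ (by rw [addressCode_map (hs u) (hB u), addressCode_map (hs v) (hB v), hcode]) hiter
      have hrank : s u = s v := by
        rw [← addressCode_mod (hs u) (hB u), hcode, addressCode_mod (hs v) (hB v)]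
      exact hsib u v hparent hrank
  exact fun u v hcode ↦ eq_of_iterate_eq N u v hcode (hp u v)

lemma exists_monotoneEnumeration_lt_iff [Fintype V] (hp : ∀ u v, p^[N] u = p^[N] v)
    (hs : ∀ v, s (p^[N] v) = 0) (hsib : ∀ u v, p u = p v → s u = s v → u = v) :
    ∃ e : MonotoneEnumeration p, ∀ u v, p u = p v →
      (e.1.symm u < e.1.symm v ↔ s u < s v) := by
  obtain ⟨B, hB⟩ : ∃ B, ∀ v, s v < B :=
    ⟨Finset.univ.sup s + 1, fun v ↦ Nat.lt_succ_of_le (Finset.le_sup (Finset.mem_univ v))⟩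
  obtain ⟨e, he⟩ := exists_equiv_fin_strictMono (addressCode_injective hp hs hB hsib)
  refine ⟨⟨e, fun i j hij ↦ ?_⟩, fun u v huv ↦ ?_⟩
  · have hcode : addressCode p s B N (p (e i)) ≤ addressCode p s B N (p (e j)) := by
      rw [addressCode_map (hs _) (hB _), addressCode_map (hs _) (hB _)]
      exact Nat.div_le_div_right (he.monotone hij)
    simpa [← he.le_iff_le] using hcode
  · rw [← he.lt_iff_lt]
    simp only [Function.comp_apply, Equiv.apply_symm_apply]
    rw [addressCode_eq_mul_add (hs u), addressCode_eq_mul_add (hs v), huv, Nat.add_lt_add_iff_left]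

end AddressCode

/-- `p` is the parent map of a rooted tree on `V` with root `r`, the root being encoded as its own
parent. -/
structure IsParentMap {V : Type*} (p : V → V) (r : V) : Prop where
  map_root : p r = r
  exists_iterate_eq_root : ∀ v, ∃ m, p^[m] v = r

namespace IsParentMap

variable {V : Type*} {p : V → V} {r : V}

lemma iterate_eq_root_of_le (hp : IsParentMap p r) {v : V} {m N : ℕ} (hm : p^[m] v = r)
    (hmN : m ≤ N) : p^[N] v = r := by
  rw [← Nat.sub_add_cancel hmN, Function.iterate_add_apply, hm, Function.iterate_fixed hp.map_root]

lemma exists_forall_iterate_eq_root [Finite V] (hp : IsParentMap p r) :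
    ∃ N, ∀ v, p^[N] v = r := by
  choose m hm using hp.exists_iterate_eq_root
  obtain ⟨N, hN⟩ := Set.finite_range m |>.bddAbove
  exact ⟨N, fun v ↦ hp.iterate_eq_root_of_le (hm v) (hN ⟨v, rfl⟩)⟩

lemma eq_root_of_isPeriodicPt (hp : IsParentMap p r) {v : V} {k : ℕ} (hk : 0 < k)
    (hv : Function.IsPeriodicPt p k v) : v = r := by
  obtain ⟨m, hm⟩ := hp.exists_iterate_eq_root v
  exact (hv.mul_const m).eq.symm.trans
    (hp.iterate_eq_root_of_le hm (Nat.le_mul_of_pos_left m hk))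

lemma map_root_of_commute (hp : IsParentMap p r) {φ : V → V} (hφ : Function.Commute φ p) :
    φ r = r :=
  hp.eq_root_of_isPeriodicPt one_pos ((hφ r).symm.trans (congrArg φ hp.map_root))

end IsParentMap

section SiblingOrderings

variable {V : Type*} {p : V → V} {r : V}

/-- The children of `v` for the parent map `p` with root `r`. The root is its own parent but not its
own child. -/
def children (p : V → V) (r v : V) : Set V := {u | u ≠ r ∧ p u = v}

lemma IsParentMap.map_notMem_children (hp : IsParentMap p r) {v : V} (hv : v ≠ r) :
    p v ∉ children p r v :=
  fun h ↦ hv (hp.eq_root_of_isPeriodicPt two_pos h.2)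

lemma IsParentMap.map_mem_children_iff_of_commute (hp : IsParentMap p r) {φ : Equiv.Perm V}
    (hφ : Function.Commute φ p) {u v : V} : φ u ∈ children p r (φ v) ↔ u ∈ children p r v := by
  have hroot : φ u = r ↔ u = r := by
    rw [← φ.apply_eq_iff_eq (x := u), hp.map_root_of_commute hφ]
  have hmap : p (φ u) = φ v ↔ p u = v := by rw [← hφ u, φ.apply_eq_iff_eq]
  exact and_congr hroot.not hmap

/-- The partial parent map, undefined at the root, whose fibers are the sets of children together
with `{r}`. -/
def properParent [DecidableEq V] (p : V → V) (r v : V) : Option V :=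
  if v = r then none else some (p v)

lemma properParent_eq_none_iff [DecidableEq V] {v : V} : properParent p r v = none ↔ v = r := by
  simp [properParent]

lemma properParent_eq_some_iff [DecidableEq V] {u v : V} :
    properParent p r u = some v ↔ u ∈ children p r v := by
  simp [properParent, children]

lemma map_eq_map_of_properParent_eq [DecidableEq V] {u v : V}
    (h : properParent p r u = properParent p r v) : p u = p v := by
  unfold properParent at h
  split_ifs at h with hu hv
  · rw [hu, hv]
  · exact Option.some.inj h

lemma map_root_of_properParent_comp_eq [DecidableEq V] {π : V → V}
    (h : properParent p r ∘ π = properParent p r) : π r = r := by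
  rw [← properParent_eq_none_iff (p := p), ← Function.comp_apply (f := properParent p r), h,
    properParent_eq_none_iff]

lemma prod_factorial_ncard_children_le_ncard_perm [Fintype V] [DecidableEq V] (p : V → V) (r : V) :
    ∏ v, (children p r v).ncard.factorial ≤
      {π : Equiv.Perm V | properParent p r ∘ π = properParent p r}.ncard := by
  rw [DomMulAct.stabilizer_ncard, Fintype.prod_option]
  simp only [properParent_eq_some_iff, Set.ofPred_mem_eq]
  exact Nat.le_mul_of_pos_left _ (Nat.factorial_pos _)

lemma perm_eq_one_of_lt_on_fibers {α β : Type*} [LinearOrder α] [WellFoundedLT α] {f : V → β}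
    {g : V → α} (hg : Function.Injective g) {π : Equiv.Perm V} (hf : f ∘ π = f)
    (hlt : ∀ a b, f a = f b → g a < g b → g (π a) < g (π b)) : π = 1 := by
  ext a
  induction ha : g a using WellFoundedLT.induction generalizing a with
  | _ x ih =>
    subst ha
    by_contra hne
    -- A moved point with least `g`-value lies below both its image and its preimage.
    have hlt_image : g a < g (π a) :=
      (hg.ne (Ne.symm hne)).lt_of_le (not_lt.mp fun h ↦ hne (π.injective (ih _ h _ rfl)))
    have hlt_preimage : g a < g (π.symm a) := by
      refine (hg.ne fun h ↦ hne ?_).lt_of_le (not_lt.mp fun h ↦ hne ?_)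
      · exact (congrArg π h).trans (π.apply_symm_apply a)
      · have hfix : a = π.symm a := by simpa using ih _ h _ rfl
        exact (congrArg π hfix).trans (π.apply_symm_apply a)
    have hfiber : f a = f (π.symm a) := by simpa using congrFun hf (π.symm a)
    have hlt_apply : g (π a) < g a := by simpa using hlt a (π.symm a) hfiber hlt_preimage
    exact lt_asymm hlt_image hlt_apply

lemma perm_eq_of_lt_iff_on_fibers {α β : Type*} [LinearOrder α] [WellFoundedLT α] {f : V → β}
    {g : V → α} (hg : Function.Injective g) {π ρ : Equiv.Perm V} (hπ : f ∘ π = f) (hρ : f ∘ ρ = f)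
    (hlt : ∀ a b, f a = f b → (g (π a) < g (π b) ↔ g (ρ a) < g (ρ b))) : π = ρ := by
  have hπ_symm : f ∘ π.symm = f := by rw [Equiv.comp_symm_eq, hπ]
  have hquot : ρ * π⁻¹ = 1 := by
    refine perm_eq_one_of_lt_on_fibers (f := f) hg ?_ fun a b hab h ↦ ?_
    · rw [Equiv.Perm.coe_mul, ← Function.comp_assoc, hρ]
      exact hπ_symm
    · have hab_symm : f (π.symm a) = f (π.symm b) :=
        (congrFun hπ_symm a).trans (hab.trans (congrFun hπ_symm b).symm)
      exact (hlt _ _ hab_symm).mp (by simpa using h)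
  exact (mul_inv_eq_one.mp hquot).symm

lemma IsParentMap.prod_factorial_ncard_children_le_card_monotoneEnumeration [Fintype V]
    (hp : IsParentMap p r) :
    ∏ v, (children p r v).ncard.factorial ≤ Nat.card (MonotoneEnumeration p) := by
  obtain ⟨N, hN⟩ := hp.exists_forall_iterate_eq_root
  obtain ⟨ι, hι, hιr⟩ : ∃ ι : V → ℕ, Function.Injective ι ∧ ι r = 0 := by
    obtain ⟨ι, hι⟩ := Countable.exists_injective_nat V
    exact ⟨Equiv.swap (ι r) 0 ∘ ι, (Equiv.injective _).comp hι, Equiv.swap_apply_left _ _⟩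
  have hexists (π : {π : Equiv.Perm V | properParent p r ∘ π = properParent p r}) :
      ∃ e : MonotoneEnumeration p, ∀ u v, p u = p v →
        (e.1.symm u < e.1.symm v ↔ ι (π.1 u) < ι (π.1 v)) :=
    exists_monotoneEnumeration_lt_iff (s := ι ∘ π.1) (fun u v ↦ (hN u).trans (hN v).symm)
      (fun v ↦ by rw [hN, Function.comp_apply, map_root_of_properParent_comp_eq π.2, hιr])
      (fun u v _ h ↦ π.1.injective (hι h))
  choose e he using hexists
  refine (prod_factorial_ncard_children_le_ncard_perm p r).trans ?_
  rw [← Nat.card_coe_set_eq]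
  refine Nat.card_le_card_of_injective e fun π ρ hπρ ↦ Subtype.ext ?_
  refine perm_eq_of_lt_iff_on_fibers hι π.2 ρ.2 fun a b hab ↦ ?_
  have hparent := map_eq_map_of_properParent_eq hab
  rw [← he π a b hparent, ← he ρ a b hparent, hπρ]

theorem IsParentMap.prod_factorial_ncard_children_le [Fintype V] (hp : IsParentMap p r) :
    ∏ v, (children p r v).ncard.factorial ≤
      4 ^ Fintype.card V * Nat.card {φ : Equiv.Perm V // Function.Commute φ p} := by
  have hmaps : Nat.card (Fin (Fintype.card V) →o Fin (Fintype.card V)) ≤ 4 ^ Fintype.card V := by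
    refine (card_orderHom_fin_le_multichoose _ _).trans ?_
    rw [Nat.card_fin]
    exact multichoose_self_le_four_pow _
  calc ∏ v, (children p r v).ncard.factorial
      ≤ Nat.card (MonotoneEnumeration p) :=
        hp.prod_factorial_ncard_children_le_card_monotoneEnumeration
    _ ≤ _ := card_monotoneEnumeration_le p
    _ ≤ _ := Nat.mul_le_mul_right _ hmaps

end SiblingOrderings

section TreeParent

open SimpleGraph

variable {V : Type*} {G : SimpleGraph V}

/-- The path from `v` to `r` in the tree `G`. -/
noncomputable def treePath (hG : G.IsTree) (r v : V) : G.Walk v r :=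
  (hG.existsUnique_path v r).choose

lemma isPath_treePath (hG : G.IsTree) (r v : V) : (treePath hG r v).IsPath :=
  (hG.existsUnique_path v r).choose_spec.1

lemma eq_treePath (hG : G.IsTree) {r v : V} {w : G.Walk v r} (hw : w.IsPath) :
    w = treePath hG r v :=
  (hG.existsUnique_path v r).choose_spec.2 w hw

lemma treePath_self (hG : G.IsTree) (r : V) : treePath hG r r = .nil :=
  (eq_treePath hG .nil).symm

/-- The neighbor of `v` on the path to the root `r` of the tree `G`. At `v = r` its value is `r`. -/
noncomputable def treeParent (hG : G.IsTree) (r v : V) : V := (treePath hG r v).snd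

lemma adj_treeParent (hG : G.IsTree) {r v : V} (hv : v ≠ r) : G.Adj v (treeParent hG r v) :=
  (treePath hG r v).adj_snd (Walk.not_nil_of_ne hv)

lemma isParentMap_treeParent (hG : G.IsTree) (r : V) : IsParentMap (treeParent hG r) r where
  map_root := by rw [treeParent, treePath_self, Walk.snd, Walk.getVert_nil]
  exists_iterate_eq_root v := by
    induction hlen : (treePath hG r v).length generalizing v with
    | zero => exact ⟨0, Walk.eq_of_length_eq_zero hlen⟩
    | succ m ih =>
      have hnil : ¬(treePath hG r v).Nil := by simp [Walk.not_nil_iff_lt_length, hlen]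
      have htail : (treePath hG r v).tail = treePath hG r (treeParent hG r v) :=
        eq_treePath hG (isPath_treePath hG r v).tail
      have hlen_parent : (treePath hG r (treeParent hG r v)).length = m :=
        (congrArg Walk.length htail).symm.trans
          (Nat.succ_injective ((Walk.length_tail_add_one hnil).trans hlen))
      obtain ⟨k, hk⟩ := ih (treeParent hG r v) hlen_parent
      exact ⟨k + 1, hk⟩

lemma adj_iff_mem_children_treeParent (hG : G.IsTree) (r : V) {u v : V} :
    G.Adj u v ↔ u ∈ children (treeParent hG r) r v ∨ v ∈ children (treeParent hG r) r u := by
  constructor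
  · intro huv
    by_cases hv : v ∈ (treePath hG r u).support
    · refine .inl ⟨?_, (hG.isAcyclic.eq_snd_of_adj_start (isPath_treePath hG r u) huv hv).symm⟩
      rintro rfl
      rw [treePath_self, Walk.support_nil, List.mem_singleton] at hv
      exact huv.ne hv.symm
    · have hcons : (treePath hG r u).cons huv.symm = treePath hG r v :=
        eq_treePath hG ((isPath_treePath hG r u).cons hv)
      refine .inr ⟨?_, ?_⟩
      · rintro rfl
        exact hv (Walk.end_mem_support _)
      · rw [treeParent, ← hcons, Walk.snd_cons]
  · rintro (⟨hu, rfl⟩ | ⟨hv, rfl⟩)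
    · exact adj_treeParent hG hu
    · exact (adj_treeParent hG hv).symm

/-- The number of children of `v` in the tree `G` rooted at `r`, read off from the degree of `v`. -/
noncomputable def rootedOutdegree [DecidableEq V] (G : SimpleGraph V) (r v : V) : ℕ :=
  if v = r then (G.neighborSet v).ncard else (G.neighborSet v).ncard - 1

lemma neighborSet_root (hG : G.IsTree) (r : V) :
    G.neighborSet r = children (treeParent hG r) r r := by
  ext u
  rw [mem_neighborSet, adj_iff_mem_children_treeParent hG r]
  exact or_iff_right fun h ↦ h.1 rfl

lemma neighborSet_of_ne_root (hG : G.IsTree) {r v : V} (hv : v ≠ r) :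
    G.neighborSet v = insert (treeParent hG r v) (children (treeParent hG r) r v) := by
  ext u
  rw [mem_neighborSet, adj_iff_mem_children_treeParent hG r, Set.mem_insert_iff]
  exact or_congr_left ⟨fun h ↦ h.2.symm, fun h ↦ ⟨hv, h.symm⟩⟩

lemma rootedOutdegree_eq_ncard_children [Finite V] [DecidableEq V] (hG : G.IsTree) (r v : V) :
    rootedOutdegree G r v = (children (treeParent hG r) r v).ncard := by
  unfold rootedOutdegree
  split_ifs with hv
  · rw [hv, neighborSet_root hG]
  · rw [neighborSet_of_ne_root hG hv, Set.ncard_insert_of_notMem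
      ((isParentMap_treeParent hG r).map_notMem_children hv), Nat.add_sub_cancel]

lemma card_perm_commute_treeParent_le [Finite V] (hG : G.IsTree) (r : V) :
    Nat.card {φ : Equiv.Perm V // Function.Commute φ (treeParent hG r)} ≤
      Nat.card {φ : G ≃g G // φ r = r} := by
  have hp := isParentMap_treeParent hG r
  have : Finite (G ≃g G) := DFunLike.finite _
  have map_adj_iff (φ : Equiv.Perm V) (hφ : Function.Commute φ (treeParent hG r)) {u v : V} :
      G.Adj (φ u) (φ v) ↔ G.Adj u v := by
    simp only [adj_iff_mem_children_treeParent hG r, hp.map_mem_children_iff_of_commute hφ]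
  refine Nat.card_le_card_of_injective
    (fun φ ↦ ⟨⟨φ.1, map_adj_iff φ.1 φ.2⟩, hp.map_root_of_commute φ.2⟩) fun φ ψ h ↦ ?_
  exact Subtype.ext (congrArg (fun χ ↦ χ.1.toEquiv) h)

end TreeParent

theorem prod_outdeg_factorials_le_four_pow_mul_autCard_general {V : Type*} [Fintype V]
    [DecidableEq V] {G : SimpleGraph V} (hG : G.IsTree) (r : V) :
    ∏ v, (rootedOutdegree G r v).factorial ≤
      4 ^ Fintype.card V * Nat.card {φ : G ≃g G // φ r = r} := by
  simp only [rootedOutdegree_eq_ncard_children hG]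
  exact (isParentMap_treeParent hG r).prod_factorial_ncard_children_le.trans
    (Nat.mul_le_mul_left _ (card_perm_commute_treeParent_le hG r))

/-- For every rooted labeled tree `T` on `n ≥ 1` vertices,
`∏_v outdeg(v)! ≤ 4^n · |Aut(T)|`; equivalently, the number of plane
representations of a Pólya tree of size `n` is less than `4^n`. -/
theorem prod_outdeg_factorials_le_four_pow_mul_autCard
    (n : ℕ) (hn : 1 ≤ n) (T : RTree n) :
    ∏ v, (T.outdeg v).factorial ≤ 4 ^ n * T.autCard := by
  simpa only [Fintype.card_fin] using!
    prod_outdeg_factorials_le_four_pow_mul_autCard_general T.isTree T.root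
end

section
/- For j ≥ 1 and t ∈ ℝ, define c(j,t) = j · ∑_{λ ⊢ j} ((−1)^{ℓ(λ)−1}/ℓ(λ)) · (ℓ(λ)!/∏_m λ_m!) · ∏_m (m!)^{−λ_m·t}, a finite sum over all integer partitions λ of j, where λ_m is the number of parts of λ equal to m and ℓ(λ) = ∑_m λ_m is the total number of parts. Then |c(j,2)| ≤ j · 2^{j−1} for every j ≥ 1. -/
open scoped BigOperators

/-- The coefficient `c(j,t)` from the Pólya-tree functional equation:
`c(j,t) = j · ∑_{λ ⊢ j} ((−1)^{ℓ(λ)−1}/ℓ(λ)) · (ℓ(λ)!/∏_m λ_m!) · ∏_m (m!)^{−λ_m t}`,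
where the sum runs over the integer partitions of `j`, `λ_m` is the number of
parts equal to `m` and `ℓ(λ)` is the number of parts. -/
noncomputable def polyaC (j : ℕ) (t : ℝ) : ℝ :=
  j * ∑ P : Nat.Partition j,
    ((-1 : ℝ) ^ (Multiset.card P.parts - 1) / (Multiset.card P.parts : ℝ)) *
      (((Multiset.card P.parts).factorial : ℝ) /
        ∏ m ∈ Finset.range (j + 1), ((P.parts.count m).factorial : ℝ)) *
      ∏ m ∈ Finset.range (j + 1),
        ((m.factorial : ℝ)) ^ (-(P.parts.count m : ℝ) * t)

/-!
The multinomial coefficient `ℓ(λ)! / ∏_m λ_m!` counts the orderings of the parts of `λ` (classify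
them by their first entry and induct), that is, the compositions of `j` with underlying partition
`λ`. Summed over all `λ ⊢ j` these coefficients give the number `2 ^ (j - 1)` of compositions of
`j`. For `t ≥ 0` the remaining factors of each summand of `c(j, t) / j` have absolute value at most
`1`, so the triangle inequality concludes.
-/

open Finset
open scoped Nat

section CountPerms

variable {α : Type*} [DecidableEq α]

theorem prod_factorial_count_mul_countPerms {s : Multiset α} {S : Finset α}
    (hS : s.toFinset ⊆ S) : (∏ a ∈ S, (s.count a)!) * s.countPerms = s.card ! := by
  have hsupport : (Multiset.toFinsupp s).support ⊆ S := by rwa [Multiset.toFinsupp_support]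
  have hspec := Nat.multinomial_spec S (Multiset.toFinsupp s)
  rw [← Finsupp.multinomial_eq_of_support_subset hsupport] at hspec
  simp only [Multiset.toFinsupp_apply] at hspec
  rwa [Multiset.sum_count_eq_card fun a ha ↦ hS (Multiset.mem_toFinset.2 ha)] at hspec

theorem prod_factorial_count_cons (a : α) (s : Multiset α) {S : Finset α} (ha : a ∈ S) :
    ∏ b ∈ S, ((a ::ₘ s).count b)! = (s.count a + 1) * ∏ b ∈ S, (s.count b)! := by
  have hrest : ∏ b ∈ S.erase a, ((a ::ₘ s).count b)! = ∏ b ∈ S.erase a, (s.count b)! :=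
    prod_congr rfl fun b hb ↦ by rw [Multiset.count_cons_of_ne (ne_of_mem_erase hb)]
  rw [← mul_prod_erase S _ ha, ← mul_prod_erase S (fun b ↦ (s.count b)!) ha, hrest,
    Multiset.count_cons_self, Nat.factorial_succ, mul_assoc]

theorem succ_count_mul_countPerms_cons (a : α) (s : Multiset α) :
    (s.count a + 1) * (a ::ₘ s).countPerms = (s.card + 1) * s.countPerms := by
  set S := (a ::ₘ s).toFinset
  have ha : a ∈ S := by simp [S]
  have hs : s.toFinset ⊆ S := Multiset.toFinset_subset.2 (Multiset.subset_cons s a)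
  have hpos : 0 < ∏ b ∈ S, (s.count b)! := prod_pos fun b _ ↦ Nat.factorial_pos _
  apply Nat.eq_of_mul_eq_mul_left hpos
  calc (∏ b ∈ S, (s.count b)!) * ((s.count a + 1) * (a ::ₘ s).countPerms)
      = (∏ b ∈ S, ((a ::ₘ s).count b)!) * (a ::ₘ s).countPerms := by
        rw [prod_factorial_count_cons a s ha]; ring
    _ = (s.card + 1)! := by
        rw [prod_factorial_count_mul_countPerms Subset.rfl, Multiset.card_cons]
    _ = (∏ b ∈ S, (s.count b)!) * ((s.card + 1) * s.countPerms) := by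
        rw [Nat.factorial_succ, ← prod_factorial_count_mul_countPerms hs]; ring

theorem count_mul_countPerms {a : α} {s : Multiset α} (ha : a ∈ s) :
    s.count a * s.countPerms = s.card * (s.erase a).countPerms := by
  obtain ⟨s, rfl⟩ := Multiset.exists_cons_of_mem ha
  simpa using succ_count_mul_countPerms_cons a s

theorem countPerms_eq_sum_erase {s : Multiset α} (hs : s ≠ 0) :
    s.countPerms = ∑ a ∈ s.toFinset, (s.erase a).countPerms := by
  apply Nat.eq_of_mul_eq_mul_left (Multiset.card_pos.2 hs)
  calc s.card * s.countPerms
      = ∑ a ∈ s.toFinset, s.count a * s.countPerms := by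
        rw [← sum_mul, Multiset.toFinset_sum_count_eq]
    _ = s.card * ∑ a ∈ s.toFinset, (s.erase a).countPerms := by
        rw [mul_sum]
        exact sum_congr rfl fun a ha ↦ count_mul_countPerms (Multiset.mem_toFinset.1 ha)

theorem lists_toFinset_eq_biUnion_erase {s : Multiset α} (hs : s ≠ 0) :
    s.lists.toFinset =
      s.toFinset.biUnion fun a ↦ (s.erase a).lists.toFinset.image (List.cons a) := by
  ext l
  simp only [Multiset.mem_toFinset, Multiset.mem_lists_iff, Multiset.quot_mk_to_coe, mem_biUnion,
    mem_image]
  constructor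
  · rintro rfl
    cases l with
    | nil => exact absurd rfl hs
    | cons a l => exact ⟨a, by simp, l, by simp, rfl⟩
  · rintro ⟨a, ha, l, hl, rfl⟩
    rw [← Multiset.cons_coe, ← hl, Multiset.cons_erase ha]

theorem card_lists_toFinset_eq_sum_erase {s : Multiset α} (hs : s ≠ 0) :
    #s.lists.toFinset = ∑ a ∈ s.toFinset, #(s.erase a).lists.toFinset := by
  rw [lists_toFinset_eq_biUnion_erase hs, card_biUnion]
  · exact sum_congr rfl fun a _ ↦ card_image_of_injective _ List.cons_injective
  · intro a _ b _ hab
    simp only [disjoint_left, mem_image]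
    rintro _ ⟨l, _, rfl⟩ ⟨l', _, hl'⟩
    exact hab (List.head_eq_of_cons_eq hl').symm

theorem card_lists_toFinset (s : Multiset α) : #s.lists.toFinset = s.countPerms := by
  induction s using Multiset.strongInductionOn with
  | ih s ih =>
    rcases eq_or_ne s 0 with rfl | hs
    · have hlists : (0 : Multiset α).lists = {[]} := by
        rw [← Multiset.coe_nil, Multiset.lists_coe, List.permutations_nil, Multiset.coe_singleton]
      rw [hlists, Multiset.toFinset_singleton, card_singleton, Multiset.countPerms_zero]
    · rw [card_lists_toFinset_eq_sum_erase hs, countPerms_eq_sum_erase hs]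
      exact sum_congr rfl fun a ha ↦ ih _ (Multiset.erase_lt.2 (Multiset.mem_toFinset.1 ha))

end CountPerms

section Partition

variable {n : ℕ}

theorem card_filter_ofComposition_eq (P : n.Partition) :
    #{c : Composition n | Nat.Partition.ofComposition n c = P} = P.parts.countPerms := by
  rw [← card_lists_toFinset]
  refine card_nbij Composition.blocks ?_ (fun c _ d _ ↦ Composition.ext) ?_
  · rintro c hc
    obtain rfl : Nat.Partition.ofComposition n c = P := by simpa using hc
    simp
  · intro l hl
    have hparts : P.parts = l := by simpa using hl
    let c : Composition n :=
      { blocks := l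
        blocks_pos := fun hi ↦ P.parts_pos (by simpa [hparts] using hi)
        blocks_sum := by simpa [hparts] using P.parts_sum }
    have hc : Nat.Partition.ofComposition n c = P := Nat.Partition.ext hparts.symm
    exact ⟨c, by simpa using hc, rfl⟩

theorem sum_partition_countPerms (n : ℕ) :
    ∑ P : n.Partition, P.parts.countPerms = 2 ^ (n - 1) := by
  simp_rw [← card_filter_ofComposition_eq]
  rw [← card_eq_sum_card_fiberwise fun _ _ ↦ mem_coe.2 (mem_univ _), card_univ, composition_card]

theorem factorial_card_div_prod_factorial_count (P : n.Partition) :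
    (P.parts.card ! : ℝ) / ∏ m ∈ range (n + 1), ((P.parts.count m)! : ℝ) =
      P.parts.countPerms := by
  have hparts : P.parts.toFinset ⊆ range (n + 1) := fun m hm ↦
    mem_range_succ_iff.2 (Nat.Partition.le_of_mem_parts (Multiset.mem_toFinset.1 hm))
  have hne : ∏ m ∈ range (n + 1), ((P.parts.count m)! : ℝ) ≠ 0 :=
    prod_ne_zero_iff.2 fun m _ ↦ Nat.cast_ne_zero.2 (Nat.factorial_ne_zero _)
  rw [div_eq_iff hne, mul_comm]
  exact_mod_cast (prod_factorial_count_mul_countPerms hparts).symm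

end Partition

theorem abs_neg_one_pow_div_natCast_le_one (k l : ℕ) : |(-1 : ℝ) ^ k / l| ≤ 1 := by
  rw [abs_div, abs_neg_one_pow, Nat.abs_cast, one_div]
  exact Nat.cast_inv_le_one l

theorem abs_prod_factorial_rpow_neg_mul_le_one (S : Finset ℕ) (f : ℕ → ℕ) {t : ℝ} (ht : 0 ≤ t) :
    |∏ m ∈ S, (m ! : ℝ) ^ (-(f m : ℝ) * t)| ≤ 1 := by
  have hnonneg (m : ℕ) : 0 ≤ (m ! : ℝ) ^ (-(f m : ℝ) * t) := by positivity
  rw [abs_of_nonneg (prod_nonneg fun m _ ↦ hnonneg m)]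
  refine prod_le_one (fun m _ ↦ hnonneg m) fun m _ ↦ ?_
  have hexponent : -(f m : ℝ) * t ≤ 0 := by
    rw [neg_mul, neg_nonpos]
    positivity
  exact Real.rpow_le_one_of_one_le_of_nonpos (Nat.one_le_cast.2 m.factorial_pos) hexponent

theorem abs_polyaC_two_le_general (j : ℕ) {t : ℝ} (ht : 0 ≤ t) :
    |polyaC j t| ≤ (j : ℝ) * 2 ^ (j - 1) := by
  have hsum : ∑ P : j.Partition, (P.parts.countPerms : ℝ) = 2 ^ (j - 1) := by
    exact_mod_cast sum_partition_countPerms j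
  rw [polyaC, abs_mul, Nat.abs_cast, ← hsum]
  gcongr
  refine (abs_sum_le_sum_abs _ _).trans (sum_le_sum fun P _ ↦ ?_)
  rw [factorial_card_div_prod_factorial_count, abs_mul, abs_mul, Nat.abs_cast]
  have hsign := abs_neg_one_pow_div_natCast_le_one (P.parts.card - 1) P.parts.card
  have hprod := abs_prod_factorial_rpow_neg_mul_le_one (range (j + 1)) P.parts.count ht
  calc _ ≤ 1 * (P.parts.countPerms : ℝ) * 1 := by gcongr
    _ = P.parts.countPerms := by rw [one_mul, mul_one]

/-- `|c(j,2)| ≤ j · 2^{j-1}` for every `j ≥ 1`. -/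
theorem abs_polyaC_two_le (j : ℕ) (hj : 1 ≤ j) :
    |polyaC j 2| ≤ (j : ℝ) * 2 ^ (j - 1) :=
  abs_polyaC_two_le_general j zero_le_two
end

section
/- Let D ⊆ ℕ be a finite set with 0 ∈ D and containing some d ≥ 2. Then there exists a constant c > 1 such that for infinitely many n, the number of isomorphism classes of rooted labeled trees on n vertices all of whose out-degrees lie in D is at least c^n. -/
open scoped Classical BigOperators

/-- Rooted labeled trees on `n` vertices with all out-degrees in `D`. -/
def DTree (D : Finset ℕ) (n : ℕ) : Type :=
  {T : RTree n // ∀ v, T.outdeg v ∈ D}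

instance (D : Finset ℕ) (n : ℕ) : Finite (DTree D n) := by
  unfold DTree; infer_instance

/-- The isomorphism classes of rooted labeled trees on `n` vertices with all
out-degrees in `D` (Pólya trees of size `n` with degrees in `D`). -/
def PolyaD (D : Finset ℕ) (n : ℕ) : Type :=
  Quot (fun T₁ T₂ : DTree D n => T₁.1.Isom T₂.1)

/-!
Attach `d` leaves to each vertex of a path `x₀, …, x_{m-1}`, the path continuing through one of
them, and for each index `i` in a set `S ⊆ {0, …, m-1}` attach `d` leaves to a second child of
`xᵢ`. All out-degrees are `0` or `d`, and the tree has `d (m + |S|) + 1` vertices. The number of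
vertices at depth `i + 2` is `d` times the number of internal vertices at depth `i + 1`, which
reveals whether `i ∈ S`; hence there are at least `(m choose l)` isomorphism classes of size
`d (m + l) + 1`, and the central binomial coefficient `(2m choose m) ≥ 2 ^ m` gives exponential
growth.
-/

section Distance

variable {V W : Type*} {G : SimpleGraph V} {H : SimpleGraph W}

lemma edist_map_hom_le (f : G →g H) (u v : V) : H.edist (f u) (f v) ≤ G.edist u v :=
  le_iInf fun w => by simpa using SimpleGraph.edist_le (w.map f)

lemma dist_map_iso (φ : G ≃g H) (u v : V) : H.dist (φ u) (φ v) = G.dist u v := by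
  have edist_le : H.edist (φ u) (φ v) ≤ G.edist u v := edist_map_hom_le φ.toHom u v
  have edist_ge : G.edist u v ≤ H.edist (φ u) (φ v) := by
    simpa using edist_map_hom_le φ.symm.toHom (φ u) (φ v)
  exact congrArg ENat.toNat (edist_le.antisymm edist_ge)

end Distance

namespace RTree

/-- The number of vertices at distance `k` from the root, an isomorphism invariant that tells the
trees of the construction apart. -/
noncomputable def levelCard {n : ℕ} (T : RTree n) (k : ℕ) : ℕ :=
  {v | T.graph.dist T.root v = k}.ncard

lemma Isom.levelCard_eq {n : ℕ} {T₁ T₂ : RTree n} (h : T₁.Isom T₂) :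
    T₁.levelCard = T₂.levelCard := by
  obtain ⟨φ, hφ⟩ := h
  funext k
  have level_eq_image : {v | T₂.graph.dist T₂.root v = k} =
      φ '' {v | T₁.graph.dist T₁.root v = k} := by
    ext v
    obtain ⟨u, rfl⟩ := φ.surjective v
    simp [← hφ, dist_map_iso]
  rw [levelCard, levelCard, level_eq_image, Set.ncard_image_of_injective _ φ.injective]

end RTree

/-- The level sizes of an isomorphism class of trees. -/
noncomputable def PolyaD.levelCard {D : Finset ℕ} {n : ℕ} : PolyaD D n → ℕ → ℕ :=
  Quot.lift (fun T => T.1.levelCard) fun _ _ h => h.levelCard_eq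

/-- `parent` is the parent map of a tree on `V` with the given root, in which `depth v` is the
number of steps from `v` to the root. By convention the root is its own parent. -/
structure IsParentMap_s14 {V : Type*} (parent : V → V) (root : V) (depth : V → ℕ) : Prop where
  parent_root : parent root = root
  depth_root : depth root = 0
  depth_eq : ∀ v ≠ root, depth v = depth (parent v) + 1

/-- The graph joining every vertex to its parent. Fixed points of `parent`, such as the root,
contribute no loops. -/
def parentGraph {V : Type*} (parent : V → V) : SimpleGraph V :=
  SimpleGraph.fromRel fun u v => parent u = v

namespace IsParentMap_s14

variable {V W : Type*} {parent : V → V} {root u v : V} {depth : V → ℕ}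

lemma parent_ne (h : IsParentMap_s14 parent root depth) (hv : v ≠ root) : parent v ≠ v := by
  intro hfix
  have := h.depth_eq v hv
  rw [hfix] at this
  omega

lemma adj_iff (h : IsParentMap_s14 parent root depth) :
    (parentGraph parent).Adj u v ↔ (u ≠ root ∧ parent u = v) ∨ (v ≠ root ∧ parent v = u) := by
  have := h.parent_root
  have := @h.parent_ne
  simp only [parentGraph, SimpleGraph.fromRel_adj]
  grind

lemma adj_parent (h : IsParentMap_s14 parent root depth) (hv : v ≠ root) :
    (parentGraph parent).Adj (parent v) v :=
  h.adj_iff.2 (.inr ⟨hv, rfl⟩)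

lemma exists_walk_length_eq_depth (h : IsParentMap_s14 parent root depth) (v : V) :
    ∃ w : (parentGraph parent).Walk root v, w.length = depth v := by
  induction hk : depth v generalizing v with
  | zero =>
    obtain rfl : v = root := by
      by_contra hv
      have := h.depth_eq v hv
      omega
    exact ⟨.nil, rfl⟩
  | succ k ih =>
    have hv : v ≠ root := by
      rintro rfl
      exact absurd (h.depth_root.symm.trans hk) (by omega)
    have depth_parent : depth (parent v) = k := by
      have := h.depth_eq v hv
      omega
    obtain ⟨w, hw⟩ := ih (parent v) depth_parent
    exact ⟨w.concat (h.adj_parent hv), by rw [SimpleGraph.Walk.length_concat, hw]⟩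

lemma connected (h : IsParentMap_s14 parent root depth) : (parentGraph parent).Connected :=
  (SimpleGraph.connected_iff_exists_forall_reachable _).2
    ⟨root, fun v => (h.exists_walk_length_eq_depth v).choose.reachable⟩

lemma depth_le_add_length (h : IsParentMap_s14 parent root depth)
    (w : (parentGraph parent).Walk u v) : depth v ≤ depth u + w.length := by
  induction w with
  | nil => simp
  | @cons x y z hadj w ih =>
    have depth_step : depth y ≤ depth x + 1 := by
      rcases h.adj_iff.1 hadj with ⟨hx, rfl⟩ | ⟨hy, rfl⟩
      · have := h.depth_eq x hx
        omega
      · exact (h.depth_eq y hy).le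
    rw [SimpleGraph.Walk.length_cons]
    omega

lemma dist_eq_depth (h : IsParentMap_s14 parent root depth) (v : V) :
    (parentGraph parent).dist root v = depth v := by
  apply le_antisymm
  · obtain ⟨w, hw⟩ := h.exists_walk_length_eq_depth v
    exact hw ▸ SimpleGraph.dist_le w
  · obtain ⟨w, hw⟩ := h.connected.exists_walk_length_eq_dist root v
    simpa [h.depth_root, hw] using h.depth_le_add_length w

lemma edgeSet_eq_image (h : IsParentMap_s14 parent root depth) :
    (parentGraph parent).edgeSet = (fun v => s(v, parent v)) '' {root}ᶜ := by
  ext e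
  induction e using Sym2.ind with
  | _ x y =>
    simp only [SimpleGraph.mem_edgeSet, h.adj_iff, Set.mem_image, Set.mem_compl_singleton_iff,
      Sym2.eq_iff]
    grind

lemma isTree [Finite V] (h : IsParentMap_s14 parent root depth) : (parentGraph parent).IsTree := by
  rw [SimpleGraph.isTree_iff_connected_and_card]
  refine ⟨h.connected, h.connected.card_vert_le_card_edgeSet_add_one.antisymm' ?_⟩
  calc Nat.card (parentGraph parent).edgeSet + 1
      ≤ ({root}ᶜ : Set V).ncard + 1 := by
        rw [Nat.card_coe_set_eq, h.edgeSet_eq_image]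
        gcongr
        exact Set.ncard_image_le
    _ = Nat.card V := by
        rw [← Set.ncard_add_ncard_compl {root}, Set.ncard_singleton, add_comm]

lemma neighborSet_root (h : IsParentMap_s14 parent root depth) :
    (parentGraph parent).neighborSet root = {u | u ≠ root ∧ parent u = root} := by
  ext u
  simp [h.adj_iff]

lemma neighborSet_of_ne_root (h : IsParentMap_s14 parent root depth) (hv : v ≠ root) :
    (parentGraph parent).neighborSet v = insert (parent v) {u | u ≠ root ∧ parent u = v} := by
  ext u
  simp [h.adj_iff, hv, eq_comm]

lemma parent_notMem_children (h : IsParentMap_s14 parent root depth) (hv : v ≠ root) :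
    parent v ∉ {u | u ≠ root ∧ parent u = v} := by
  rintro ⟨hp, hpp⟩
  have hv_depth := h.depth_eq v hv
  have hp_depth := h.depth_eq (parent v) hp
  rw [hpp] at hp_depth
  omega

lemma conj (h : IsParentMap_s14 parent root depth) (e : V ≃ W) :
    IsParentMap_s14 (e ∘ parent ∘ e.symm) (e root) (depth ∘ e.symm) where
  parent_root := by simp [h.parent_root]
  depth_root := by simp [h.depth_root]
  depth_eq w hw := by simpa using h.depth_eq (e.symm w) (by rwa [ne_eq, e.symm_apply_eq])

end IsParentMap_s14

namespace RTree

variable {n : ℕ} {V : Type*} {parent : V → V} {root : V} {depth : V → ℕ}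

/-- The rooted tree with a given parent map, its vertices labelled by `e`. -/
def ofParent (h : IsParentMap_s14 parent root depth) (e : V ≃ Fin n) : RTree n where
  graph := parentGraph (e ∘ parent ∘ e.symm)
  isTree := (h.conj e).isTree
  root := e root

lemma outdeg_ofParent (h : IsParentMap_s14 parent root depth) (e : V ≃ Fin n) (v : V) :
    (ofParent h e).outdeg (e v) = {u | u ≠ root ∧ parent u = v}.ncard := by
  have children_eq_image : {w | w ≠ e root ∧ (e ∘ parent ∘ e.symm) w = e v} =
      e '' {u | u ≠ root ∧ parent u = v} := by
    ext w
    obtain ⟨u, rfl⟩ := e.surjective w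
    simp
  rw [← Set.ncard_image_of_injective _ e.injective, ← children_eq_image, outdeg]
  split_ifs with hv <;> simp only [ofParent] at hv ⊢
  · rw [hv, (h.conj e).neighborSet_root]
  · rw [(h.conj e).neighborSet_of_ne_root hv,
      Set.ncard_insert_of_notMem ((h.conj e).parent_notMem_children hv), Nat.add_sub_cancel]

lemma levelCard_ofParent (h : IsParentMap_s14 parent root depth) (e : V ≃ Fin n) (k : ℕ) :
    (ofParent h e).levelCard k = {v | depth v = k}.ncard := by
  have level_eq_image : {w | (ofParent h e).graph.dist (ofParent h e).root w = k} =
      e '' {v | depth v = k} := by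
    ext w
    obtain ⟨v, rfl⟩ := e.surjective w
    simp [ofParent, (h.conj e).dist_eq_depth]
  rw [levelCard, level_eq_image, Set.ncard_image_of_injective _ e.injective]

end RTree

section Slots

variable {I κ : Type*} {slot : I → Option (I × κ)} {height : I → ℕ}

/-- The parent map of the tree with internal vertices indexed by `I`, each of which has one child
for every element of `κ`. The vertices are the root `none` and the children `some (i, c)`, and the
internal vertex with index `i` is the vertex `slot i`. -/
def slotParent (slot : I → Option (I × κ)) : Option (I × κ) → Option (I × κ)
  | none => none
  | some (i, _) => slot i

/-- The depth of a vertex, given the depths `height i` of the internal vertices. -/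
def slotDepth (height : I → ℕ) : Option (I × κ) → ℕ
  | none => 0
  | some (i, _) => height i + 1

lemma isParentMap_slotParent (h : ∀ i, slotDepth height (slot i) = height i) :
    IsParentMap_s14 (slotParent slot) none (slotDepth height) where
  parent_root := rfl
  depth_root := rfl
  depth_eq
    | none, hv => absurd rfl hv
    | some (i, _), _ => congrArg (· + 1) (h i).symm

lemma ncard_children_slotParent (hslot : slot.Injective) (v : Option (I × κ)) :
    {u | u ≠ none ∧ slotParent slot u = v}.ncard = 0 ∨
      {u | u ≠ none ∧ slotParent slot u = v}.ncard = Nat.card κ := by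
  by_cases hv : ∃ i, slot i = v
  · obtain ⟨i, rfl⟩ := hv
    right
    have children_eq_range : {u | u ≠ none ∧ slotParent slot u = slot i} =
        Set.range fun c => some (i, c) := by
      ext u
      rcases u with _ | ⟨j, c⟩ <;> simp [slotParent, hslot.eq_iff, eq_comm]
    rw [children_eq_range, Set.ncard_range_of_injective fun _ _ hc => by simpa using hc]
  · left
    have children_eq_empty : {u | u ≠ none ∧ slotParent slot u = v} = ∅ := by
      ext u
      rcases u with _ | ⟨j, c⟩
      · simp
      · simpa [slotParent] using fun hj => hv ⟨j, hj⟩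
    rw [children_eq_empty, Set.ncard_empty]

lemma ncard_slotDepth_eq_succ (height : I → ℕ) (k : ℕ) :
    {v : Option (I × κ) | slotDepth height v = k + 1}.ncard =
      {i | height i = k}.ncard * Nat.card κ := by
  have level_eq_image : {v : Option (I × κ) | slotDepth height v = k + 1} =
      some '' ({i | height i = k} ×ˢ Set.univ) := by
    ext v
    rcases v with _ | ⟨i, c⟩ <;> simp [slotDepth]
  rw [level_eq_image, Set.ncard_image_of_injective _ (Option.some_injective _), Set.ncard_prod,
    Set.ncard_univ]

end Slots

section Caterpillar

variable {κ : Type*} {m : ℕ} {a b : κ}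

/-- The caterpillar of internal vertices of the construction: a path of `m` vertices, each
continued through its child `a`, together with the child `b` of the path vertices in `S`. -/
def caterpillarSlot (a b : κ) (S : Finset (Fin m)) : Fin m ⊕ S → Option ((Fin m ⊕ S) × κ)
  | .inl ⟨0, _⟩ => none
  | .inl ⟨i + 1, hi⟩ => some (.inl ⟨i, by omega⟩, a)
  | .inr s => some (.inl s, b)

/-- The depths of the internal vertices described by `caterpillarSlot`. -/
def caterpillarHeight (S : Finset (Fin m)) : Fin m ⊕ S → ℕ
  | .inl i => i
  | .inr s => s + 1

lemma slotDepth_caterpillarSlot (a b : κ) (S : Finset (Fin m)) (x : Fin m ⊕ S) :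
    slotDepth (caterpillarHeight S) (caterpillarSlot a b S x) = caterpillarHeight S x := by
  rcases x with ⟨_ | i, hi⟩ | s <;> rfl

lemma caterpillarSlot_injective (hab : a ≠ b) (S : Finset (Fin m)) :
    (caterpillarSlot a b S).Injective := by
  rintro (⟨_ | i, hi⟩ | s) (⟨_ | j, hj⟩ | t) <;>
    simp [caterpillarSlot, hab, hab.symm]

lemma ncard_caterpillarHeight_eq_succ (S : Finset (Fin m)) (i : Fin m) :
    {x | caterpillarHeight S x = i + 1}.ncard =
      {j : Fin m | (j : ℕ) = i + 1}.ncard + if i ∈ S then 1 else 0 := by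
  have height_eq_union : {x | caterpillarHeight S x = i + 1} =
      Sum.inl '' {j : Fin m | (j : ℕ) = i + 1} ∪ Sum.inr '' {s : S | (s : Fin m) = i} := by
    ext x
    rcases x with j | s
    · simp [caterpillarHeight]
    · simp [caterpillarHeight, Fin.ext_iff]
  have ncard_inr : {s : S | (s : Fin m) = i}.ncard = if i ∈ S then 1 else 0 := by
    split_ifs with hi
    · exact Set.ncard_eq_one.2 ⟨⟨i, hi⟩, by ext; simp [Subtype.ext_iff]⟩
    · rw [Set.ncard_eq_zero]
      ext s
      simpa using fun hs : (s : Fin m) = i => hi (hs ▸ s.2)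
  rw [height_eq_union, Set.ncard_union_eq Set.disjoint_image_inl_image_inr,
    Set.ncard_image_of_injective _ Sum.inl_injective,
    Set.ncard_image_of_injective _ Sum.inr_injective, ncard_inr]

/-- The tree with internal vertices placed by `caterpillarSlot`. -/
def caterpillarTree {n : ℕ} (a b : κ) (S : Finset (Fin m))
    (e : Option ((Fin m ⊕ S) × κ) ≃ Fin n) : RTree n :=
  RTree.ofParent (isParentMap_slotParent (slotDepth_caterpillarSlot a b S)) e

lemma outdeg_caterpillarTree {n : ℕ} (hab : a ≠ b) (S : Finset (Fin m))
    (e : Option ((Fin m ⊕ S) × κ) ≃ Fin n) (v : Fin n) :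
    (caterpillarTree a b S e).outdeg v = 0 ∨
      (caterpillarTree a b S e).outdeg v = Nat.card κ := by
  obtain ⟨v, rfl⟩ := e.surjective v
  rw [caterpillarTree, RTree.outdeg_ofParent]
  exact ncard_children_slotParent (caterpillarSlot_injective hab S) v

lemma levelCard_caterpillarTree {n : ℕ} (a b : κ) (S : Finset (Fin m))
    (e : Option ((Fin m ⊕ S) × κ) ≃ Fin n) (i : Fin m) :
    (caterpillarTree a b S e).levelCard (i + 2) =
      ({j : Fin m | (j : ℕ) = i + 1}.ncard + if i ∈ S then 1 else 0) * Nat.card κ := by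
  rw [caterpillarTree, RTree.levelCard_ofParent, ncard_slotDepth_eq_succ,
    ncard_caterpillarHeight_eq_succ]

lemma eq_of_levelCard_caterpillarTree_eq {n : ℕ} [Nonempty κ] [Finite κ] {S S' : Finset (Fin m)}
    {e : Option ((Fin m ⊕ S) × κ) ≃ Fin n} {e' : Option ((Fin m ⊕ S') × κ) ≃ Fin n}
    (h : (caterpillarTree a b S e).levelCard = (caterpillarTree a b S' e').levelCard) :
    S = S' := by
  ext i
  have level_eq := congrFun h (i + 2)
  rw [levelCard_caterpillarTree, levelCard_caterpillarTree,
    Nat.mul_left_inj Nat.card_pos.ne', Nat.add_left_cancel_iff] at level_eq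
  grind

end Caterpillar

theorem choose_le_card_polyaD {D : Finset ℕ} {d : ℕ} (hD0 : 0 ∈ D) (hdD : d ∈ D) (hd : 2 ≤ d)
    (m l : ℕ) : m.choose l ≤ Nat.card (PolyaD D (d * (m + l) + 1)) := by
  have : Nontrivial (Fin d) := Fin.nontrivial_iff_two_le.2 hd
  obtain ⟨a, b, hab⟩ := exists_pair_ne (Fin d)
  have card_vertices (S : {S : Finset (Fin m) // S.card = l}) :
      Fintype.card (Option ((Fin m ⊕ S.1) × Fin d)) = d * (m + l) + 1 := by
    simp [S.2, mul_comm]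
  let label (S : {S : Finset (Fin m) // S.card = l}) := Fintype.equivFinOfCardEq (card_vertices S)
  let treeClass (S : {S : Finset (Fin m) // S.card = l}) : PolyaD D (d * (m + l) + 1) :=
    Quot.mk _ ⟨caterpillarTree a b S.1 (label S), fun v => by
      rcases outdeg_caterpillarTree hab S.1 (label S) v with h | h <;> simpa [h]⟩
  have treeClass_injective : treeClass.Injective := fun S S' h =>
    Subtype.ext (eq_of_levelCard_caterpillarTree_eq (congrArg PolyaD.levelCard h))
  have : Finite (PolyaD D (d * (m + l) + 1)) := inferInstanceAs (Finite (Quot _))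
  calc m.choose l = Nat.card {S : Finset (Fin m) // S.card = l} := by simp
    _ ≤ _ := Nat.card_le_card_of_injective treeClass treeClass_injective

lemma two_pow_le_centralBinom (m : ℕ) : 2 ^ m ≤ m.centralBinom := by
  induction m with
  | zero => simp
  | succ m ih =>
    refine Nat.le_of_mul_le_mul_left ?_ m.succ_pos
    calc (m + 1) * 2 ^ (m + 1) = 2 * (m + 1) * 2 ^ m := by ring
      _ ≤ 2 * (2 * m + 1) * m.centralBinom := by gcongr; omega
      _ = (m + 1) * (m + 1).centralBinom := (Nat.succ_mul_centralBinom_succ m).symm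

lemma exists_one_lt_pow_le_of_two_pow_le {f : ℕ → ℕ} {a : ℕ} (ha : 0 < a)
    (hf : ∀ m, 2 ^ m ≤ f (a * m + 1)) :
    ∃ c : ℝ, 1 < c ∧ ∀ N : ℕ, ∃ n, N ≤ n ∧ c ^ n ≤ (f n : ℝ) := by
  obtain ⟨c, hc, hc_pow⟩ : ∃ c : ℝ, 1 < c ∧ c ^ (a + 1) = 2 :=
    ⟨2 ^ (((a + 1 : ℕ) : ℝ)⁻¹), Real.one_lt_rpow one_lt_two (by positivity),
      Real.rpow_inv_natCast_pow zero_le_two a.succ_ne_zero⟩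
  refine ⟨c, hc, fun N => ⟨a * (N + 1) + 1, by nlinarith, ?_⟩⟩
  calc c ^ (a * (N + 1) + 1) ≤ c ^ ((a + 1) * (N + 1)) :=
        pow_le_pow_right₀ hc.le (by linarith)
    _ = 2 ^ (N + 1) := by rw [pow_mul, hc_pow]
    _ ≤ f (a * (N + 1) + 1) := mod_cast hf (N + 1)

/-- If the finite degree set `D` contains `0` and some
`d ≥ 2`, then there is a constant `c > 1` such that for infinitely many `n`
the number of isomorphism classes of rooted labeled trees on `n` vertices with
out-degrees in `D` is at least `c^n`. -/
theorem polya_trees_restricted_degrees_exponential_growth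
    (D : Finset ℕ) (hD0 : 0 ∈ D) (hD2 : ∃ d ∈ D, 2 ≤ d) :
    ∃ c : ℝ, 1 < c ∧ ∀ N : ℕ, ∃ n, N ≤ n ∧ c ^ n ≤ (Nat.card (PolyaD D n) : ℝ) := by
  obtain ⟨d, hdD, hd⟩ := hD2
  refine exists_one_lt_pow_le_of_two_pow_le (a := 3 * d) (by omega) fun m => ?_
  calc 2 ^ m ≤ (2 * m).choose m := two_pow_le_centralBinom m
    _ ≤ Nat.card (PolyaD D (d * (2 * m + m) + 1)) := choose_le_card_polyaD hD0 hdD hd (2 * m) m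
    _ = Nat.card (PolyaD D (3 * d * m + 1)) := by ring_nf
end
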